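/- (Exact multiplicity for sinusoidal weights.) Let a < b, let k ∈ ℕ with k ≥ 2, let p > 1, and set h(t) := sin(kπ(t−a)/(b−a)) for t ∈ [a,b]. Then there exists μ** > 0 such that for every μ > μ** the Dirichlet problem u'' + (h⁺(t) − μ h⁻(t)) |u|^{p−1} u = 0, u(a) = 0 = u(b), has exactly 2^m − 1 positive solutions, where m = ⌊(k+1)/2⌋ is the integer part of (k+1)/2; moreover these solutions are non-degenerate. -/

import Mathlib

open Set Filter Topology

/-- The positive part `h⁺ = |h|/2 + h/2` of a weight function. -/
noncomputable def posW (h : ℝ → ℝ) : ℝ → ℝ := fun t => |h t| / 2 + h t / 2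

/-- The negative part `h⁻ = |h|/2 - h/2` of a weight function. -/
noncomputable def negW (h : ℝ → ℝ) : ℝ → ℝ := fun t => |h t| / 2 - h t / 2

/-- The sinusoidal weight `h(t) = sin(kπ(t-a)/(b-a))`. -/
noncomputable def sinW (a b : ℝ) (k : ℕ) : ℝ → ℝ :=
  fun t => Real.sin ((k : ℝ) * Real.pi * (t - a) / (b - a))

/-- The weight `h⁺ - μ h⁻` of problem `(D_μ)` for `h = sin(kπ(t-a)/(b-a))`. -/
noncomputable def sinWμ (a b : ℝ) (k : ℕ) (μ : ℝ) : ℝ → ℝ :=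
  fun t => posW (sinW a b k) t - μ * negW (sinW a b k) t

/-- A classical (C²) solution of `u'' + ω(t) f(u) = 0` on `[a,b]`:
`u'` and `u''` are the first and second derivatives of `u` on `[a,b]` and the
equation holds pointwise on `[a,b]`. -/
def IsC2Sol (a b : ℝ) (ω : ℝ → ℝ) (f : ℝ → ℝ) (u u' u'' : ℝ → ℝ) : Prop :=
  (∀ t ∈ Set.Icc a b, HasDerivAt u (u' t) t) ∧
  (∀ t ∈ Set.Icc a b, HasDerivAt u' (u'' t) t) ∧
  (∀ t ∈ Set.Icc a b, u'' t + ω t * f (u t) = 0)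

/-- A classical (C²) solution of the linear equation `w'' + ω(t) w = 0` on `[a,b]`. -/
def IsC2LinSol (a b : ℝ) (ω : ℝ → ℝ) (w w' w'' : ℝ → ℝ) : Prop :=
  (∀ t ∈ Set.Icc a b, HasDerivAt w (w' t) t) ∧
  (∀ t ∈ Set.Icc a b, HasDerivAt w' (w'' t) t) ∧
  (∀ t ∈ Set.Icc a b, w'' t + ω t * w t = 0)


/-- second-order ODE solution on `[0,T]` -/
def Sol2 (T : ℝ) (F : ℝ → ℝ → ℝ) (u u1 : ℝ → ℝ) : Prop :=
  ∀ t ∈ Set.Icc 0 T, HasDerivAt u (u1 t) t ∧ HasDerivAt u1 (F t (u t)) t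

theorem lbd {g g' : ℝ → ℝ} {x y c : ℝ} (hxy : x ≤ y)
    (hg : ∀ t ∈ Icc x y, HasDerivAt g (g' t) t) (hc : ∀ t ∈ Icc x y, c ≤ g' t) :
    g x + c * (y - x) ≤ g y := by
  rcases eq_or_lt_of_le hxy with rfl | h
  · simp
  · obtain ⟨ξ, hξ, he⟩ := exists_hasDerivAt_eq_slope g g' h
      (fun t ht => (hg t ht).continuousAt.continuousWithinAt)
      (fun t ht => hg t (Ioo_subset_Icc_self ht))
    have := hc ξ (Ioo_subset_Icc_self hξ)
    rw [he, le_div_iff₀ (by linarith)] at this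
    linarith

theorem ubd {g g' : ℝ → ℝ} {x y c : ℝ} (hxy : x ≤ y)
    (hg : ∀ t ∈ Icc x y, HasDerivAt g (g' t) t) (hc : ∀ t ∈ Icc x y, g' t ≤ c) :
    g y ≤ g x + c * (y - x) := by
  have := lbd (g := fun t => - g t) (g' := fun t => - g' t) (c := -c) hxy
    (fun t ht => (hg t ht).neg) (fun t ht => by simpa using hc t ht)
  linarith

theorem gw {T C e D : ℝ} {F : ℝ → ℝ → ℝ} {w w1 z z1 z2 : ℝ → ℝ} (hC : 1 ≤ C)
    (hF : ∀ t ∈ Icc 0 T, ∀ x y, |F t x - F t y| ≤ C * |x - y|) (hw : Sol2 T F w w1)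
    (hz : ∀ t ∈ Icc 0 T, HasDerivAt z (z1 t) t ∧ HasDerivAt z1 (z2 t) t)
    (he : ∀ t ∈ Icc 0 T, |z2 t - F t (z t)| ≤ e)
    (hD0 : |w 0 - z 0| ≤ D) (hD1 : |w1 0 - z1 0| ≤ D) (he0 : 0 ≤ e) :
    ∀ t ∈ Icc 0 T, |w t - z t| ≤ (D + e) * Real.exp (C * T) ∧
      |w1 t - z1 t| ≤ (D + e) * Real.exp (C * T) := by
  have hD : 0 ≤ D := (abs_nonneg _).trans hD0
  let K : NNReal := ⟨C, by linarith⟩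
  have key := dist_le_of_approx_trajectories_ODE_of_mem (E := ℝ × ℝ) (K := K)
    (v := fun t q => (q.2, F t q.1)) (s := fun _ => univ)
    (f := fun t => (w t, w1 t)) (f' := fun t => (w1 t, F t (w t)))
    (g := fun t => (z t, z1 t)) (g' := fun t => (z1 t, z2 t)) (a := 0) (b := T)
    (εf := 0) (εg := e) (δ := D)
    (by
      intro t ht
      apply LipschitzWith.lipschitzOnWith
      apply LipschitzWith.of_dist_le_mul
      intro q r
      have h1 : |q.1 - r.1| ≤ dist q r := by
        rw [Prod.dist_eq]; exact le_max_left _ _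
      have h2 : |q.2 - r.2| ≤ dist q r := by
        rw [Prod.dist_eq]; exact le_max_right _ _
      rw [Prod.dist_eq (x := (q.2, F t q.1))]
      have h3 := hF t (Ico_subset_Icc_self ht) q.1 r.1
      have h4 : C * |q.1 - r.1| ≤ C * dist q r := by gcongr
      have h5 : 1 * dist q r ≤ C * dist q r := by gcongr
      apply max_le
      · change |q.2 - r.2| ≤ C * dist q r
        linarith
      · change |F t q.1 - F t r.1| ≤ C * dist q r
        linarith)
    (fun t ht => ((hw t ht).1.prodMk (hw t ht).2).continuousAt.continuousWithinAt)
    (fun t ht => ((hw t (Ico_subset_Icc_self ht)).1.prodMk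
      (hw t (Ico_subset_Icc_self ht)).2).hasDerivWithinAt)
    (fun t ht => by simp) (fun t ht => mem_univ _)
    (fun t ht => ((hz t ht).1.prodMk (hz t ht).2).continuousAt.continuousWithinAt)
    (fun t ht => ((hz t (Ico_subset_Icc_self ht)).1.prodMk
      (hz t (Ico_subset_Icc_self ht)).2).hasDerivWithinAt)
    (fun t ht => by
      rw [Prod.dist_eq]
      apply max_le
      · simpa using he0
      · exact he t (Ico_subset_Icc_self ht))
    (fun t ht => mem_univ _)
    (by rw [Prod.dist_eq]; exact max_le hD0 hD1)
  intro t ht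
  have h := key t ht
  have hb : gronwallBound D K (0 + e) (t - 0) ≤ (D + e) * Real.exp (C * T) := by
    have hK : (K : ℝ) = C := rfl
    rw [gronwallBound_of_K_ne_0 (by rw [hK]; linarith)]
    simp only [hK, zero_add, sub_zero]
    have h1 : Real.exp (C * t) ≤ Real.exp (C * T) := by
      apply Real.exp_le_exp.2; have := ht.2; nlinarith
    have h2 : e / C ≤ e := div_le_self he0 hC
    have h3 : 1 ≤ Real.exp (C * t) := Real.one_le_exp (by have := ht.1; nlinarith)
    have h4 : e / C * (Real.exp (C * t) - 1) ≤ e * Real.exp (C * T) := by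
      apply mul_le_mul h2 (by linarith) (by linarith) he0
    nlinarith
  rw [Prod.dist_eq] at h
  exact ⟨(le_max_left _ _).trans (h.trans hb), (le_max_right _ _).trans (h.trans hb)⟩

/-- uniqueness -/
theorem sol_unique {T C : ℝ} {F : ℝ → ℝ → ℝ} {w w1 z z1 : ℝ → ℝ} (hC : 1 ≤ C)
    (hF : ∀ t ∈ Icc 0 T, ∀ x y, |F t x - F t y| ≤ C * |x - y|) (hw : Sol2 T F w w1)
    (hz : Sol2 T F z z1) (h0 : w 0 = z 0) (h1 : w1 0 = z1 0) :
    ∀ t ∈ Icc 0 T, w t = z t ∧ w1 t = z1 t := by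
  intro t ht
  have := gw (e := 0) (D := 0) hC hF hw hz (by simp) (by simp [h0]) (by simp [h1]) le_rfl t ht
  simp only [add_zero, zero_mul, abs_nonpos_iff, sub_eq_zero] at this
  exact this

theorem sol_dep {T C : ℝ} {F : ℝ → ℝ → ℝ} {w w1 z z1 : ℝ → ℝ} {D : ℝ} (hC : 1 ≤ C)
    (hF : ∀ t ∈ Icc 0 T, ∀ x y, |F t x - F t y| ≤ C * |x - y|) (hw : Sol2 T F w w1)
    (hz : Sol2 T F z z1) (h0 : |w 0 - z 0| ≤ D) (h1 : |w1 0 - z1 0| ≤ D) :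
    ∀ t ∈ Icc 0 T, |w t - z t| ≤ D * Real.exp (C * T) ∧ |w1 t - z1 t| ≤ D * Real.exp (C * T) := by
  intro t ht
  have := gw (e := 0) (D := D) hC hF hw hz (by simp) h0 h1 le_rfl t ht
  simpa using this

theorem exists_sol {T C B : ℝ} {F : ℝ → ℝ → ℝ} (hT : 0 ≤ T) (hC : 0 ≤ C)
    (hF : ∀ t x y, |F t x - F t y| ≤ C * |x - y|) (hcont : ∀ x, Continuous (fun t => F t x))
    (hB : ∀ t x, |F t x| ≤ B) (x y : ℝ) :
    ∃ u u1, Sol2 T F u u1 ∧ u 0 = x ∧ u1 0 = y := by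
  have hB0 : 0 ≤ B := (abs_nonneg _).trans (hB 0 0)
  obtain ⟨l, hl⟩ : ∃ l : ℝ, l = 1 / (2 * (T + 1)) := ⟨_, rfl⟩
  have hlpos : 0 < l := by rw [hl]; positivity
  have hlT : l * (T + 1) = 1 / 2 := by rw [hl]; field_simp
  obtain ⟨a, ha⟩ : ∃ a : ℝ, a = |y / l| + B / l * (T + 1) := ⟨_, rfl⟩
  have ha0 : 0 ≤ a := by rw [ha]; positivity
  have ht0 : (0 : ℝ) ∈ Icc (-1 : ℝ) (T + 1) := by constructor <;> linarith
  have hPL : IsPicardLindelof (E := ℝ × ℝ) (fun t q => (l * q.2, F t q.1 / l))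
      (tmin := -1) (tmax := T + 1) ⟨0, ht0⟩ (x, y / l) ⟨a, ha0⟩ 0
      ⟨a / (T + 1), by positivity⟩ ⟨l + C / l, by positivity⟩ := by
    constructor
    · intro t ht
      apply LipschitzWith.lipschitzOnWith
      apply LipschitzWith.of_dist_le_mul
      intro q r
      have h1 : |q.1 - r.1| ≤ dist q r := by
        rw [Prod.dist_eq]; exact le_max_left _ _
      have h2 : |q.2 - r.2| ≤ dist q r := by
        rw [Prod.dist_eq]; exact le_max_right _ _
      have hd : 0 ≤ dist q r := dist_nonneg
      rw [Prod.dist_eq]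
      apply max_le
      · change |l * q.2 - l * r.2| ≤ (l + C / l) * dist q r
        rw [← mul_sub, abs_mul, abs_of_pos hlpos]
        have : 0 ≤ C / l * dist q r := by positivity
        nlinarith
      · change |F t q.1 / l - F t r.1 / l| ≤ (l + C / l) * dist q r
        rw [← sub_div, abs_div, abs_of_pos hlpos]
        have h3 := hF t q.1 r.1
        have h4 : C * |q.1 - r.1| ≤ C * dist q r := by gcongr
        have : |F t q.1 - F t r.1| / l ≤ C * dist q r / l := by gcongr; linarith
        have h5 : C * dist q r / l = C / l * dist q r := by ring
        nlinarith
    · intro q _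
      apply Continuous.continuousOn
      exact continuous_const.prodMk ((hcont q.1).div_const l)
    · intro t ht q hq
      rw [Metric.mem_closedBall, Prod.dist_eq] at hq
      have h2 : |q.2 - y / l| ≤ a := (le_max_right _ _).trans hq
      rw [Prod.norm_def]
      change max |l * q.2| |F t q.1 / l| ≤ a / (T + 1)
      apply max_le
      · rw [le_div_iff₀ (by linarith), abs_mul, abs_of_pos hlpos]
        have h3 : |q.2| ≤ |y / l| + a := by
          have := abs_add_le (q.2 - y / l) (y / l)
          rw [sub_add_cancel] at this; linarith
        have h4 : |y / l| ≤ a := by rw [ha]; have : 0 ≤ B / l * (T + 1) := by positivity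
                                    linarith
        calc l * |q.2| * (T + 1) = (l * (T + 1)) * |q.2| := by ring
          _ = 1 / 2 * |q.2| := by rw [hlT]
          _ ≤ a := by linarith
      · rw [le_div_iff₀ (by linarith), abs_div, abs_of_pos hlpos]
        have : |F t q.1| / l * (T + 1) ≤ B / l * (T + 1) := by
          gcongr; exact hB _ _
        have h0 := abs_nonneg (y / l)
        rw [ha]; linarith
    · change a / (T + 1) * max (T + 1 - 0) (0 - -1) ≤ a - 0
      rw [max_eq_left (by linarith)]
      have : T + 1 ≠ 0 := by linarith
      field_simp
      linarith
  obtain ⟨α, hα0, hα⟩ := hPL.exists_eq_forall_mem_Icc_hasDerivWithinAt₀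
  have hd : ∀ t ∈ Icc 0 T, HasDerivAt α (l * (α t).2, F t (α t).1 / l) t := by
    intro t ht
    apply (hα t ⟨by linarith [ht.1], by linarith [ht.2]⟩).hasDerivAt
    exact Icc_mem_nhds (by linarith [ht.1]) (by linarith [ht.2])
  change α 0 = _ at hα0
  refine ⟨fun t => (α t).1, fun t => l * (α t).2, ?_, ?_, ?_⟩
  · intro t ht
    have h := hd t ht
    refine ⟨(hasFDerivAt_fst (𝕜 := ℝ) (E := ℝ) (F := ℝ)).comp_hasDerivAt t h, ?_⟩
    have h2 : HasDerivAt (fun t => (α t).2) (F t (α t).1 / l) t :=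
      (hasFDerivAt_snd (𝕜 := ℝ) (E := ℝ) (F := ℝ)).comp_hasDerivAt t h
    replace h2 := h2.const_mul l
    have e : l * (F t (α t).1 / l) = F t (α t).1 := by field_simp
    simp only [e] at h2
    exact h2
  · simp [hα0]
  · simp only [hα0]; field_simp

/-- Sturm--Wronskian comparison -/
theorem sturmW {α β : ℝ} {w w1 w2 z z1 z2 : ℝ → ℝ}
    (hw : ∀ t ∈ Icc α β, HasDerivAt w (w1 t) t ∧ HasDerivAt w1 (w2 t) t)
    (hz : ∀ t ∈ Icc α β, HasDerivAt z (z1 t) t ∧ HasDerivAt z1 (z2 t) t)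
    (hz0 : ∀ t ∈ Icc α β, 0 ≤ z t) (hw0 : 0 ≤ w α) (hW : 0 < w1 α * z α - w α * z1 α)
    (hm : ∀ t ∈ Icc α β, 0 ≤ w t → 0 ≤ w2 t * z t - w t * z2 t) :
    ∀ t ∈ Ioc α β, 0 < w t ∧ w1 α * z α - w α * z1 α ≤ w1 t * z t - w t * z1 t := by
  have hdW : ∀ t ∈ Icc α β, HasDerivAt (fun t => w1 t * z t - w t * z1 t)
      (w2 t * z t - w t * z2 t) t := by
    intro t ht
    have := ((hw t ht).2.mul (hz t ht).1).sub ((hw t ht).1.mul (hz t ht).2)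
    exact HasDerivAt.congr_deriv this (by ring)
  have mono : ∀ t ∈ Icc α β, (∀ s ∈ Icc α t, 0 ≤ w s) →
      w1 α * z α - w α * z1 α ≤ w1 t * z t - w t * z1 t := by
    intro t ht hs
    have := lbd (g := fun t => w1 t * z t - w t * z1 t) (c := 0) ht.1
      (fun s hs' => hdW s ⟨hs'.1, hs'.2.trans ht.2⟩)
      (fun s hs' => hm s ⟨hs'.1, hs'.2.trans ht.2⟩ (hs s hs'))
    simpa using this
  have hcw : ContinuousOn w (Icc α β) := fun t ht => (hw t ht).1.continuousAt.continuousWithinAt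
  -- if w t = 0 and w >= 0 before, then w1 t > 0
  have key : ∀ t ∈ Icc α β, (∀ s ∈ Icc α t, 0 ≤ w s) → w t = 0 → 0 < w1 t := by
    intro t ht hs h0
    have h1 := mono t ht hs
    rw [h0] at h1
    by_contra hcon
    have := mul_nonneg (neg_nonneg.2 (not_lt.1 hcon)) (hz0 t ht)
    nlinarith
  -- nonnegativity
  have nn : ∀ t ∈ Icc α β, 0 ≤ w t := by
    have hsub : Icc α β ⊆ {t | ∀ s ∈ Icc α t, 0 ≤ w s} ∩ Icc α β := by
      have hcl : IsClosed ({t | ∀ s ∈ Icc α t, 0 ≤ w s} ∩ Icc α β) := by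
        rw [inter_comm]
        have : Icc α β ∩ {t | ∀ s ∈ Icc α t, 0 ≤ w s} =
            Icc α β ∩ {t | ∀ s ∈ Icc α β, 0 ≤ w s ∨ t ≤ s} := by
          ext t
          constructor
          · rintro ⟨h1, h2⟩
            refine ⟨h1, fun s hs => ?_⟩
            by_cases hst : s ≤ t
            · exact Or.inl (h2 s ⟨hs.1, hst⟩)
            · exact Or.inr (not_le.1 hst).le
          · rintro ⟨h1, h2⟩
            refine ⟨h1, fun s hs => ?_⟩
            rcases eq_or_lt_of_le hs.2 with rfl | hlt
            · -- limit
              by_contra hneg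
              push Not at hneg
              have hαs : α < s := by
                rcases eq_or_lt_of_le hs.1 with rfl | h
                · linarith
                · exact h
              have hc := hcw s h1
              have hev : ∀ᶠ r in 𝓝[Icc α β] s, w r < 0 := hc.eventually (gt_mem_nhds hneg)
              rw [eventually_nhdsWithin_iff, Metric.eventually_nhds_iff] at hev
              obtain ⟨ε, hε, hev⟩ := hev
              have hr : max α (s - ε / 2) < s := max_lt hαs (by linarith)
              have hr1 : max α (s - ε / 2) ∈ Icc α β := ⟨le_max_left _ _, hr.le.trans h1.2⟩
              have := hev (y := max α (s - ε / 2)) (by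
                rw [Real.dist_eq, abs_lt]
                have := le_max_right α (s - ε / 2)
                constructor <;> linarith) hr1
              rcases h2 _ hr1 with h3 | h3 <;> linarith
            · rcases h2 s ⟨hs.1, hs.2.trans h1.2⟩ with h | h
              · exact h
              · linarith
        rw [this]
        have : {t | ∀ s ∈ Icc α β, 0 ≤ w s ∨ t ≤ s} = ⋂ s ∈ Icc α β, {t | 0 ≤ w s ∨ t ≤ s} := by
          ext t; simp
        rw [this]
        refine isClosed_Icc.inter (isClosed_biInter fun s _ => ?_)
        by_cases h : 0 ≤ w s
        · simp [h]
        · simp only [h, false_or]; exact isClosed_Iic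
      have : Icc α β ⊆ {t | ∀ s ∈ Icc α t, 0 ≤ w s} := by
        apply hcl.Icc_subset_of_forall_exists_gt
        · intro s hs
          have : s = α := le_antisymm hs.2 hs.1
          rw [this]; exact hw0
        · rintro t ⟨ht, htI⟩ y hy
          have htI' : t ∈ Icc α β := Ico_subset_Icc_self htI
          -- w > 0 right after t
          have hev : ∀ᶠ r in 𝓝[>] t, 0 < w r := by
            rcases eq_or_lt_of_le (ht t ⟨htI.1, le_rfl⟩) with h0 | h0
            · have h1 := key t htI' ht h0.symm
              have hd := (hw t htI').1
              rw [hasDerivAt_iff_tendsto_slope] at hd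
              have h2 : ∀ᶠ r in 𝓝[≠] t, 0 < slope w t r := hd.eventually (lt_mem_nhds h1)
              have h3 : ∀ᶠ r in 𝓝[>] t, 0 < slope w t r :=
                h2.filter_mono (nhdsWithin_mono _ (fun r hr => ne_of_gt hr))
              filter_upwards [h3, self_mem_nhdsWithin] with r hr hr'
              rw [slope_def_field, ← h0, sub_zero] at hr
              have : 0 < r - t := sub_pos.2 hr'
              exact (div_pos_iff_of_pos_right this).1 hr
            · exact ((hw t htI').1.continuousAt.eventually (lt_mem_nhds h0)).filter_mono
                nhdsWithin_le_nhds
          rw [eventually_nhdsWithin_iff, Metric.eventually_nhds_iff] at hev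
          obtain ⟨ε, hε, hev⟩ := hev
          have hy' : t < y := hy
          refine ⟨min y (t + ε / 2), ?_, lt_min hy' (by linarith), min_le_left _ _⟩
          intro s hs
          by_cases hst : s ≤ t
          · exact ht s ⟨hs.1, hst⟩
          · push Not at hst
            have := hs.2.trans (min_le_right _ _)
            exact (hev (y := s) (by rw [Real.dist_eq, abs_lt]; constructor <;> linarith) hst).le
      exact subset_inter this Subset.rfl
    intro t ht
    exact (hsub ht).1 t ⟨ht.1, le_rfl⟩
  intro t ht
  have ht' : t ∈ Icc α β := Ioc_subset_Icc_self ht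
  have hs : ∀ s ∈ Icc α t, 0 ≤ w s := fun s hs => nn s ⟨hs.1, hs.2.trans ht.2⟩
  refine ⟨?_, mono t ht' hs⟩
  rcases eq_or_lt_of_le (nn t ht') with h0 | h0
  · exfalso
    have h1 := key t ht' hs h0.symm
    -- w t = 0, w >= 0 on left, w1 t > 0 : contradiction
    have hd := (hw t ht').1
    rw [hasDerivAt_iff_tendsto_slope] at hd
    have h2 : ∀ᶠ r in 𝓝[≠] t, 0 < slope w t r := hd.eventually (lt_mem_nhds h1)
    have h3 : ∀ᶠ r in 𝓝[<] t, 0 < slope w t r :=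
      h2.filter_mono (nhdsWithin_mono _ (fun r hr => ne_of_lt hr))
    have h4 : ∀ᶠ r in 𝓝[<] t, r ∈ Ioo α t := Ioo_mem_nhdsLT ht.1
    obtain ⟨r, hr1, hr2⟩ := (h3.and h4).exists
    rw [slope_def_field, ← h0, sub_zero] at hr1
    have h5 := hs r ⟨hr2.1.le, hr2.2.le⟩
    have h6 : w r / (r - t) ≤ 0 := div_nonpos_of_nonneg_of_nonpos h5 (by linarith [hr2.2])
    linarith
  · exact h0

/-- derivative sign at a zero from the left -/
theorem deriv_nonpos_of_left {w : ℝ → ℝ} {d α t : ℝ} (hαt : α < t) (hd : HasDerivAt w d t)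
    (h : ∀ s ∈ Icc α t, w t ≤ w s) : d ≤ 0 := by
  by_contra h1
  push Not at h1
  rw [hasDerivAt_iff_tendsto_slope] at hd
  have h2 : ∀ᶠ r in 𝓝[≠] t, 0 < slope w t r := hd.eventually (lt_mem_nhds h1)
  have h3 : ∀ᶠ r in 𝓝[<] t, 0 < slope w t r :=
    h2.filter_mono (nhdsWithin_mono _ (fun r hr => ne_of_lt hr))
  have h4 : ∀ᶠ r in 𝓝[<] t, r ∈ Ioo α t := Ioo_mem_nhdsLT hαt
  obtain ⟨r, hr1, hr2⟩ := (h3.and h4).exists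
  rw [slope_def_field] at hr1
  have h5 := h r ⟨hr2.1.le, hr2.2.le⟩
  have h6 : (w r - w t) / (r - t) ≤ 0 :=
    div_nonpos_of_nonneg_of_nonpos (by linarith) (by linarith [hr2.2])
  linarith

/-- last crossing: `φ = c` at `s`, `φ ≥ c` afterwards -/
theorem last_cross {φ : ℝ → ℝ} {a b c : ℝ} (hab : a ≤ b) (hφ : ContinuousOn φ (Icc a b))
    (ha : φ a ≤ c) (hb : c ≤ φ b) :
    ∃ s ∈ Icc a b, φ s = c ∧ ∀ t ∈ Icc s b, c ≤ φ t := by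
  have hcomp : IsCompact (Icc a b ∩ φ ⁻¹' Iic c) :=
    isCompact_Icc.of_isClosed_subset (hφ.preimage_isClosed_of_isClosed isClosed_Icc isClosed_Iic)
      inter_subset_left
  obtain ⟨s, hs, hmax⟩ := hcomp.exists_isMaxOn ⟨a, ⟨le_rfl, hab⟩, ha⟩ continuousOn_id
  have hmax' : ∀ t ∈ Icc a b, φ t ≤ c → t ≤ s := fun t ht h => hmax ⟨ht, h⟩
  have hsc : φ s ≤ c := hs.2
  have hafter : ∀ t ∈ Ioc s b, c < φ t := by
    intro t ht
    by_contra h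
    have := hmax' t ⟨hs.1.1.trans ht.1.le, ht.2⟩ (not_lt.1 h)
    linarith [ht.1]
  have heq : φ s = c := by
    apply le_antisymm hsc
    obtain ⟨r, hr, hr'⟩ := intermediate_value_Icc hs.1.2 (hφ.mono (Icc_subset_Icc_left hs.1.1))
      (show c ∈ Icc (φ s) (φ b) from ⟨hsc, hb⟩)
    have h2 := hmax' r ⟨hs.1.1.trans hr.1, hr.2⟩ hr'.le
    have : r = s := le_antisymm h2 hr.1
    rw [← this, hr']
  refine ⟨s, hs.1, heq, fun t ht => ?_⟩
  rcases eq_or_lt_of_le ht.1 with rfl | h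
  · exact heq.ge
  · exact (hafter t ⟨h, ht.2⟩).le

/-- first crossing: `φ = c` at `s`, `φ ≤ c` before -/
theorem first_cross {φ : ℝ → ℝ} {a b c : ℝ} (hab : a ≤ b) (hφ : ContinuousOn φ (Icc a b))
    (ha : φ a ≤ c) (hb : c ≤ φ b) :
    ∃ s ∈ Icc a b, φ s = c ∧ ∀ t ∈ Icc a s, φ t ≤ c := by
  obtain ⟨s, hs, h1, h2⟩ := last_cross (φ := fun t => - φ (-t)) (a := -b) (b := -a) (c := -c)
    (by linarith) (by
      apply ContinuousOn.neg
      apply hφ.comp continuous_neg.continuousOn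
      intro t ht
      exact ⟨by linarith [ht.2], by linarith [ht.1]⟩) (by simpa using hb) (by simpa using ha)
  refine ⟨-s, ⟨by linarith [hs.2], by linarith [hs.1]⟩, by simpa using h1, fun t ht => ?_⟩
  have := h2 (-t) ⟨by linarith [ht.2], by linarith [ht.1]⟩
  simpa using this


noncomputable def m0 (p : ℝ) : ℝ := 4 * (6 : ℝ) ^ (1 / (p - 1))
noncomputable def m1 (p : ℝ) : ℝ := m0 p + 4 * m0 p ^ p
noncomputable def kk (p : ℝ) : ℝ := m1 p + 1
noncomputable def mm (p : ℝ) : ℝ := 4 * kk p + 1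
noncomputable def ff (p u : ℝ) : ℝ := (max 0 (min u (mm p))) ^ p
noncomputable def lf (p : ℝ) : ℝ := p * mm p ^ (p - 1)
noncomputable def fd (p u : ℝ) : ℝ := p * (max 0 u) ^ (p - 1)

theorem m0_pos (p : ℝ) : 0 < m0 p := by unfold m0; positivity
theorem m0_le_m1 (p : ℝ) : m0 p ≤ m1 p := by
  unfold m1; have := m0_pos p; have : 0 < m0 p ^ p := by positivity
  linarith
theorem kk_one (p : ℝ) : 1 < kk p := by
  unfold kk; have := m0_pos p; have := m0_le_m1 p; linarith
theorem m0_lt_kk (p : ℝ) : m0 p < kk p := by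
  unfold kk; have := m0_le_m1 p; linarith
theorem m1_lt_kk (p : ℝ) : m1 p < kk p := by
  unfold kk; linarith
theorem kk_lt_mm (p : ℝ) : kk p < mm p := by
  unfold mm; have := kk_one p; linarith
theorem mm_one (p : ℝ) : 1 < mm p := (kk_one p).trans (kk_lt_mm p)

theorem ff_nonneg (p u : ℝ) : 0 ≤ ff p u := by unfold ff; positivity
theorem ff_zero {p u : ℝ} (hp : 1 < p) (hu : u ≤ 0) : ff p u = 0 := by
  unfold ff
  have := mm_one p
  rw [max_eq_left (by rw [min_le_iff]; left; exact hu), Real.zero_rpow (by linarith)]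
theorem ff_eq {p u : ℝ} (h0 : 0 ≤ u) (h1 : u ≤ mm p) : ff p u = u ^ p := by
  unfold ff
  rw [min_eq_left h1, max_eq_right h0]
theorem ff_mono {p u v : ℝ} (hp : 1 < p) (h : u ≤ v) : ff p u ≤ ff p v := by
  unfold ff
  apply Real.rpow_le_rpow (le_max_left _ _) _ (by linarith)
  gcongr
theorem ff_bdd {p : ℝ} (hp : 1 < p) (u : ℝ) : ff p u ≤ mm p ^ p := by
  unfold ff
  apply Real.rpow_le_rpow (le_max_left _ _) _ (by linarith)
  exact max_le (by linarith [mm_one p]) (min_le_right _ _)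
theorem ff_pos {p u : ℝ} (h : 0 < u) : 0 < ff p u := by
  unfold ff
  have := mm_one p
  apply Real.rpow_pos_of_pos
  exact lt_max_of_lt_right (lt_min h (by linarith))

theorem pw_deriv {p : ℝ} (hp : 1 < p) (x : ℝ) :
    HasDerivAt (fun x => (max 0 x) ^ p) (fd p x) x := by
  unfold fd
  rcases lt_trichotomy x 0 with h | h | h
  · have : (fun x : ℝ => (max 0 x) ^ p) =ᶠ[𝓝 x] fun _ => 0 := by
      filter_upwards [gt_mem_nhds h] with y hy
      rw [max_eq_left hy.le, Real.zero_rpow (by linarith)]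
    rw [max_eq_left h.le, Real.zero_rpow (by linarith), mul_zero]
    exact (hasDerivAt_const x (0 : ℝ)).congr_of_eventuallyEq this
  · subst h
    rw [max_self, Real.zero_rpow (by linarith), mul_zero]
    have h1 : HasDerivAt (fun x : ℝ => |x| ^ p) (p * |0| ^ (p - 1) * 0) 0 := by
      simpa using hasDerivAt_abs_rpow (0 : ℝ) hp
    rw [hasDerivAt_iff_isLittleO] at h1 ⊢
    simp only [abs_zero, mul_zero, smul_zero, sub_zero, max_self,
      Real.zero_rpow (show p ≠ 0 by linarith)] at h1 ⊢
    refine (Asymptotics.IsBigO.of_bound 1 (Eventually.of_forall fun y => ?_)).trans_isLittleO h1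
    rw [Real.norm_of_nonneg (by positivity), Real.norm_of_nonneg (by positivity), one_mul]
    apply Real.rpow_le_rpow (le_max_left _ _) _ (by linarith)
    exact max_le (abs_nonneg _) (le_abs_self _)
  · have : (fun x : ℝ => (max 0 x) ^ p) =ᶠ[𝓝 x] fun x => x ^ p := by
      filter_upwards [lt_mem_nhds h] with y hy
      rw [max_eq_right hy.le]
    rw [max_eq_right h.le]
    exact (Real.hasDerivAt_rpow_const (Or.inl h.ne')).congr_of_eventuallyEq this

theorem fd_cont {p : ℝ} (hp : 1 < p) : Continuous (fd p) := by
  unfold fd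
  apply continuous_const.mul
  exact (continuous_const.max continuous_id).rpow_const (fun x => Or.inr (by linarith))

theorem fd_nonneg {p : ℝ} (hp : 1 < p) (x : ℝ) : 0 ≤ fd p x := by
  unfold fd; have : 0 < p := by linarith
  positivity

theorem fd_mono {p x y : ℝ} (hp : 1 < p) (h : x ≤ y) : fd p x ≤ fd p y := by
  unfold fd
  apply mul_le_mul_of_nonneg_left _ (by linarith)
  apply Real.rpow_le_rpow (le_max_left _ _) _ (by linarith)
  gcongr

theorem ff_eq' {p u : ℝ} (h1 : u ≤ mm p) : ff p u = (max 0 u) ^ p := by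
  unfold ff
  rw [min_eq_left h1]

theorem pw_mvt {p : ℝ} (hp : 1 < p) (x y : ℝ) : ∃ ξ ∈ uIcc x y,
    (max 0 x) ^ p - (max 0 y) ^ p = fd p ξ * (x - y) := by
  wlog h : x ≤ y generalizing x y
  · obtain ⟨ξ, h1, h2⟩ := this y x (by linarith)
    refine ⟨ξ, by rwa [uIcc_comm], by linarith⟩
  rcases eq_or_lt_of_le h with rfl | h'
  · exact ⟨x, by simp, by simp⟩
  · obtain ⟨ξ, hξ, he⟩ := exists_hasDerivAt_eq_slope (fun x => (max 0 x) ^ p) (fd p) h'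
      (fun t ht => (pw_deriv hp t).continuousAt.continuousWithinAt)
      (fun t ht => pw_deriv hp t)
    refine ⟨ξ, by rw [uIcc_of_le h]; exact Ioo_subset_Icc_self hξ, ?_⟩
    rw [he]
    have : y - x ≠ 0 := by linarith
    field_simp
    ring

theorem ff_mvt {p x y : ℝ} (hp : 1 < p) (hx : x ≤ mm p) (hy : y ≤ mm p) : ∃ ξ ∈ uIcc x y,
    ff p x - ff p y = fd p ξ * (x - y) := by
  rw [ff_eq' hx, ff_eq' hy]; exact pw_mvt hp x y

theorem lf_one {p : ℝ} (hp : 1 < p) : 1 ≤ lf p := by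
  unfold lf
  have : 1 ≤ mm p ^ (p - 1) := Real.one_le_rpow (mm_one p).le (by linarith)
  nlinarith

theorem ff_lip {p : ℝ} (hp : 1 < p) (x y : ℝ) : |ff p x - ff p y| ≤ lf p * |x - y| := by
  have e : ∀ x, ff p x = ff p (min x (mm p)) := fun x => by unfold ff; simp
  rw [e x, e y]
  obtain ⟨ξ, h1, h2⟩ := ff_mvt hp (min_le_right x (mm p)) (min_le_right y (mm p))
  rw [h2, abs_mul, abs_of_nonneg (fd_nonneg hp ξ)]
  have h3 : ξ ≤ mm p := by
    have := h1.2
    exact this.trans (max_le (min_le_right _ _) (min_le_right _ _))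
  have h4 : fd p ξ ≤ lf p := by
    have := fd_mono hp h3
    refine this.trans_eq ?_
    unfold fd lf; rw [max_eq_right (by linarith [mm_one p])]
  have h5 : |min x (mm p) - min y (mm p)| ≤ |x - y| := by
    have := abs_min_sub_min_le_max x (mm p) y (mm p)
    simpa using this
  have := fd_nonneg hp ξ
  have := lf_one hp
  gcongr

theorem dd_ge {p u v : ℝ} (hp : 1 < p) (hu : 0 ≤ u) (hv : 0 ≤ v) (hu' : u ≤ mm p) (hv' : v ≤ mm p)
    (huv : u ≠ v) : u ^ (p - 1) ≤ (ff p u - ff p v) / (u - v) := by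
  rw [ff_eq hu hu', ff_eq hv hv']
  have e : ∀ x : ℝ, 0 ≤ x → x ^ p = x ^ (p - 1) * x := fun x hx => by
    rw [← Real.rpow_add_one' hx (by linarith)]; ring_nf
  rw [e u hu, e v hv]
  rcases lt_or_gt_of_ne huv with h | h
  · rw [le_div_iff_of_neg (by linarith)]
    have : u ^ (p - 1) ≤ v ^ (p - 1) := Real.rpow_le_rpow hu h.le (by linarith)
    nlinarith
  · rw [le_div_iff₀ (by linarith)]
    have : v ^ (p - 1) ≤ u ^ (p - 1) := Real.rpow_le_rpow hv h.le (by linarith)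
    nlinarith

theorem fd_unif {p : ℝ} (hp : 1 < p) (δ : ℝ) (hδ : 0 < δ) : ∃ ρ > 0, ρ ≤ 1 ∧
    ∀ x ∈ Icc 0 (mm p), ∀ y, |x - y| ≤ ρ → |fd p y - fd p x| ≤ δ := by
  have huc : UniformContinuousOn (fd p) (Icc (-1) (mm p + 1)) :=
    isCompact_Icc.uniformContinuousOn_of_continuous (fd_cont hp).continuousOn
  rw [Metric.uniformContinuousOn_iff_le] at huc
  obtain ⟨ρ, hρ, h⟩ := huc δ hδ
  refine ⟨min ρ 1, by positivity, min_le_right _ _, fun x hx y hxy => ?_⟩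
  have h1 := hxy.trans (min_le_left _ _)
  have h2 := hxy.trans (min_le_right _ _)
  rw [abs_le] at h2
  have := h y ⟨by linarith [hx.1], by linarith [hx.2]⟩ x ⟨by linarith [hx.1], by linarith [hx.2]⟩
    (by rw [dist_comm]; exact h1)
  exact this

/-- the positive-interval vector field -/
noncomputable def Fp (p : ℝ) : ℝ → ℝ → ℝ := fun t x => -(Real.sin t * ff p x)
/-- the negative-interval vector field -/
noncomputable def Fn (p μ : ℝ) : ℝ → ℝ → ℝ := fun t x => μ * (Real.sin t * ff p x)

theorem Fp_lip {p : ℝ} (hp : 1 < p) (t x y : ℝ) : |Fp p t x - Fp p t y| ≤ lf p * |x - y| := by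
  unfold Fp
  have : -(Real.sin t * ff p x) - -(Real.sin t * ff p y) = -(Real.sin t * (ff p x - ff p y)) := by
    ring
  rw [this, abs_neg, abs_mul]
  have h1 := Real.abs_sin_le_one t
  have h2 := ff_lip hp x y
  have := abs_nonneg (ff p x - ff p y)
  nlinarith

theorem sin_nn {t : ℝ} (ht : t ∈ Icc 0 Real.pi) : 0 ≤ Real.sin t :=
  Real.sin_nonneg_of_nonneg_of_le_pi ht.1 ht.2

/-- bounds for a nonneg concave function -/
theorem conc_bd {T : ℝ} {u u1 u2 : ℝ → ℝ}
    (hu : ∀ t ∈ Icc 0 T, HasDerivAt u (u1 t) t ∧ HasDerivAt u1 (u2 t) t)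
    (h2 : ∀ t ∈ Icc 0 T, u2 t ≤ 0) :
    ∀ s t, 0 ≤ s → s ≤ t → t ≤ T → u1 t ≤ u1 s ∧ u t ≤ u s + u1 s * (t - s) ∧
      u s + u1 t * (t - s) ≤ u t := by
  have anti : ∀ s t, 0 ≤ s → s ≤ t → t ≤ T → u1 t ≤ u1 s := by
    intro s t hs hst ht
    have := ubd (g := u1) (c := 0) hst (fun r hr => (hu r ⟨hs.trans hr.1, hr.2.trans ht⟩).2)
      (fun r hr => h2 r ⟨hs.trans hr.1, hr.2.trans ht⟩)
    linarith
  intro s t hs hst ht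
  refine ⟨anti s t hs hst ht, ?_, ?_⟩
  · exact ubd hst (fun r hr => (hu r ⟨hs.trans hr.1, hr.2.trans ht⟩).1)
      (fun r hr => anti s r hs hr.1 (hr.2.trans ht))
  · exact lbd hst (fun r hr => (hu r ⟨hs.trans hr.1, hr.2.trans ht⟩).1)
      (fun r hr => anti r t (hs.trans hr.1) hr.2 ht)

theorem conv_bd {T : ℝ} {u u1 u2 : ℝ → ℝ}
    (hu : ∀ t ∈ Icc 0 T, HasDerivAt u (u1 t) t ∧ HasDerivAt u1 (u2 t) t)
    (h2 : ∀ t ∈ Icc 0 T, 0 ≤ u2 t) :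
    ∀ s t, 0 ≤ s → s ≤ t → t ≤ T → u1 s ≤ u1 t ∧ u s + u1 s * (t - s) ≤ u t ∧
      u t ≤ u s + u1 t * (t - s) := by
  intro s t hs hst ht
  have := conc_bd (u := fun t => - u t) (u1 := fun t => - u1 t) (u2 := fun t => - u2 t)
    (fun t ht => ⟨(hu t ht).1.neg, (hu t ht).2.neg⟩) (fun t ht => by simpa using h2 t ht)
    s t hs hst ht
  refine ⟨by linarith, by linarith, by linarith⟩

/-- max at endpoints for convex functions -/
theorem conv_max {T c : ℝ} {u u1 u2 : ℝ → ℝ}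
    (hu : ∀ t ∈ Icc 0 T, HasDerivAt u (u1 t) t ∧ HasDerivAt u1 (u2 t) t)
    (h2 : ∀ t ∈ Icc 0 T, 0 ≤ u2 t) (h0 : u 0 ≤ c) (hT : u T ≤ c) :
    ∀ t ∈ Icc 0 T, u t ≤ c := by
  intro t ht
  have a1 := (conv_bd hu h2 0 t le_rfl ht.1 ht.2).2.2
  have a2 := (conv_bd hu h2 t T ht.1 ht.2 le_rfl).2.1
  rcases le_total 0 (u1 t) with h | h
  · nlinarith [mul_nonneg h (sub_nonneg.2 ht.2)]
  · nlinarith [mul_nonneg (neg_nonneg.2 h) ht.1]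

theorem L1 {p : ℝ} (hp : 1 < p) {u u1 u2 : ℝ → ℝ}
    (hu : ∀ t ∈ Icc 0 Real.pi, HasDerivAt u (u1 t) t ∧ HasDerivAt u1 (u2 t) t)
    (hu2 : ∀ t ∈ Icc 0 Real.pi, u2 t = -(Real.sin t * u t ^ p))
    (h0 : ∀ t ∈ Icc 0 Real.pi, 0 ≤ u t) :
    ∀ t ∈ Icc 0 Real.pi, u t ≤ m0 p ∧ |u1 t| ≤ m1 p := by
  have hpi := Real.pi_pos
  have hpi4 := Real.pi_le_four
  have hpi3 := Real.pi_gt_three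
  have hneg : ∀ t ∈ Icc 0 Real.pi, u2 t ≤ 0 := by
    intro t ht
    rw [hu2 t ht]
    have := mul_nonneg (sin_nn ht) (Real.rpow_nonneg (h0 t ht) p)
    linarith
  have cb := conc_bd hu hneg
  have bound : ∀ t ∈ Icc 0 Real.pi, u t ≤ m0 p := by
    intro t ht
    by_contra hcon
    push Not at hcon
    have hm := m0_pos p
    have hlow : ∀ s ∈ Icc (Real.pi / 4) (3 * Real.pi / 4), m0 p / 4 ≤ u s := by
      intro s hs
      have hs' : s ∈ Icc 0 Real.pi := ⟨by linarith [hs.1], by linarith [hs.2]⟩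
      have hus := h0 s hs'
      rcases le_total s t with h | h
      · have a1 := (cb s t hs'.1 h ht.2).2.1
        have a2 := (cb 0 s le_rfl hs'.1 hs'.2).2.2
        have a0 := h0 0 ⟨le_rfl, hpi.le⟩
        have a3 : s * u t ≤ t * u s := by
          nlinarith [mul_le_mul_of_nonneg_left a1 hs'.1, mul_le_mul_of_nonneg_left a2 (sub_nonneg.2 h), mul_nonneg (sub_nonneg.2 h) a0]
        have a4 : t * u s ≤ Real.pi * u s := by nlinarith [ht.2]
        have a5 : Real.pi / 4 * m0 p ≤ s * u t := by
          apply mul_le_mul hs.1 hcon.le hm.le hs'.1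
        by_contra hh
        push Not at hh
        nlinarith
      · have a1 := (cb t s ht.1 h hs'.2).2.2
        have a2 := (cb s Real.pi hs'.1 hs'.2 le_rfl).2.1
        have a0 := h0 Real.pi ⟨hpi.le, le_rfl⟩
        have a3 : (Real.pi - s) * u t ≤ (Real.pi - t) * u s := by
          nlinarith [mul_le_mul_of_nonneg_left a1 (sub_nonneg.2 hs'.2), mul_le_mul_of_nonneg_left a2 (sub_nonneg.2 h), mul_nonneg (sub_nonneg.2 h) a0]
        have a4 : (Real.pi - t) * u s ≤ Real.pi * u s := by nlinarith [ht.1]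
        have a5 : Real.pi / 4 * m0 p ≤ (Real.pi - s) * u t := by
          apply mul_le_mul _ hcon.le hm.le (by linarith [hs'.2])
          linarith [hs.2]
        by_contra hh
        push Not at hh
        nlinarith
    have hsin : ∀ s ∈ Icc (Real.pi / 4) (3 * Real.pi / 4), 7 / 10 ≤ Real.sin s := by
      intro s hs
      have e : Real.sin s = Real.cos |Real.pi / 2 - s| := by
        rw [Real.cos_abs, Real.cos_pi_div_two_sub]
      have h1 : |Real.pi / 2 - s| ≤ Real.pi / 4 := by
        rw [abs_le]; constructor <;> linarith [hs.1, hs.2]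
      have h2 := Real.cos_le_cos_of_nonneg_of_le_pi (abs_nonneg (Real.pi / 2 - s))
        (by linarith : Real.pi / 4 ≤ Real.pi) h1
      rw [Real.cos_pi_div_four, ← e] at h2
      have h3 : (7 / 5 : ℝ) ≤ Real.sqrt 2 := Real.le_sqrt_of_sq_le (by norm_num)
      linarith
    have hder : ∀ s ∈ Icc (Real.pi / 4) (3 * Real.pi / 4),
        HasDerivAt (fun s => u1 s * Real.sin (2 * (s - Real.pi / 4))
          - u s * (2 * Real.cos (2 * (s - Real.pi / 4))))
          (Real.sin (2 * (s - Real.pi / 4)) * (u2 s + 4 * u s)) s := by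
      intro s hs
      have hs' : s ∈ Icc 0 Real.pi := ⟨by linarith [hs.1], by linarith [hs.2]⟩
      have hl : HasDerivAt (fun s : ℝ => 2 * (s - Real.pi / 4)) 2 s := by
        simpa using ((hasDerivAt_id s).sub_const (Real.pi / 4)).const_mul 2
      have := ((hu s hs').2.mul hl.sin).sub ((hu s hs').1.mul (hl.cos.const_mul 2))
      exact HasDerivAt.congr_deriv this (by ring)
    have hfin := ubd (c := 0) (by linarith : Real.pi / 4 ≤ 3 * Real.pi / 4) hder (by
      intro s hs
      have hs' : s ∈ Icc 0 Real.pi := ⟨by linarith [hs.1], by linarith [hs.2]⟩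
      have b1 : 0 ≤ Real.sin (2 * (s - Real.pi / 4)) :=
        Real.sin_nonneg_of_nonneg_of_le_pi (by linarith [hs.1]) (by linarith [hs.2])
      have b2 : (6 : ℝ) ≤ u s ^ (p - 1) := by
        have h1 : (6 : ℝ) ^ (1 / (p - 1)) ≤ u s := by
          have := hlow s hs; unfold m0 at this; linarith
        have h2 := Real.rpow_le_rpow (by positivity) h1 (by linarith : 0 ≤ p - 1)
        rwa [← Real.rpow_mul (by norm_num), one_div_mul_cancel (by linarith), Real.rpow_one] at h2
      have b3 : u s ^ p = u s ^ (p - 1) * u s := by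
        rw [← Real.rpow_add_one' (h0 s hs') (by linarith)]; ring_nf
      rw [hu2 s hs', b3]
      have b4 := hsin s hs
      have b5 : 4 ≤ Real.sin s * u s ^ (p - 1) := by nlinarith
      have b6 := mul_le_mul_of_nonneg_right b5 (h0 s hs')
      apply mul_nonpos_of_nonneg_of_nonpos b1
      linarith)
    have e1 : 2 * (3 * Real.pi / 4 - Real.pi / 4) = Real.pi := by ring
    have e2 : 2 * (Real.pi / 4 - Real.pi / 4) = 0 := by ring
    simp only [e1, e2, Real.sin_pi, Real.cos_pi, Real.sin_zero, Real.cos_zero] at hfin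
    have c1 := hlow (Real.pi / 4) ⟨le_rfl, by linarith⟩
    have c2 := hlow (3 * Real.pi / 4) ⟨by linarith, le_rfl⟩
    linarith
  intro t ht
  refine ⟨bound t ht, ?_⟩
  have hm := m0_pos p
  obtain ⟨ξ, hξ, he⟩ := exists_hasDerivAt_eq_slope u u1 hpi
      (fun t ht => (hu t ht).1.continuousAt.continuousWithinAt)
      (fun t ht => (hu t (Ioo_subset_Icc_self ht)).1)
  rw [sub_zero, eq_div_iff hpi.ne'] at he
  have b0 := bound 0 ⟨le_rfl, hpi.le⟩
  have bp := bound Real.pi ⟨hpi.le, le_rfl⟩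
  have n0 := h0 0 ⟨le_rfl, hpi.le⟩
  have np := h0 Real.pi ⟨hpi.le, le_rfl⟩
  have hlb : ∀ t ∈ Icc 0 Real.pi, -(m0 p ^ p) ≤ u2 t := by
    intro t ht
    rw [hu2 t ht]
    have a1 : u t ^ p ≤ m0 p ^ p := Real.rpow_le_rpow (h0 t ht) (bound t ht) (by linarith)
    have a2 := Real.sin_le_one t
    have a3 := Real.rpow_nonneg (h0 t ht) p
    nlinarith
  have k1 := lbd hξ.1.le (fun r hr => (hu r ⟨hr.1, hr.2.trans hξ.2.le⟩).2)
    (fun r hr => hlb r ⟨hr.1, hr.2.trans hξ.2.le⟩)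
  have k2 := lbd hξ.2.le (fun r hr => (hu r ⟨hξ.1.le.trans hr.1, hr.2⟩).2)
    (fun r hr => hlb r ⟨hξ.1.le.trans hr.1, hr.2⟩)
  have q1 := (cb 0 t le_rfl ht.1 ht.2).1
  have q2 := (cb t Real.pi ht.1 ht.2 le_rfl).1
  have hmp : 0 < m0 p ^ p := by positivity
  have s1 : u1 ξ ≤ m0 p := by by_contra h; push Not at h; nlinarith
  have s2 : -m0 p ≤ u1 ξ := by by_contra h; push Not at h; nlinarith
  have s3 : m0 p ^ p * (ξ - 0) ≤ m0 p ^ p * 4 := by gcongr; linarith [hξ.2]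
  have s4 : m0 p ^ p * (Real.pi - ξ) ≤ m0 p ^ p * 4 := by gcongr; linarith [hξ.1]
  unfold m1
  rw [abs_le]
  constructor <;> linarith

theorem negLarge {p : ℝ} (hp : 1 < p) {ε : ℝ} (hε : 0 < ε) : ∃ μ0 > 0, ∀ μ ≥ μ0, ∀ u u1,
    Sol2 Real.pi (Fn p μ) u u1 → -kk p ≤ u1 0 → ε ≤ u 0 → kk p < u1 Real.pi ∧ m0 p < u Real.pi := by
  have hk := kk_one p
  have hpi4 := Real.pi_le_four
  have hpi3 := Real.pi_gt_three
  obtain ⟨δ, hδ⟩ : ∃ δ, δ = min (ε / (2 * kk p)) 1 := ⟨_, rfl⟩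
  have hδ0 : 0 < δ := by rw [hδ]; apply lt_min _ one_pos; positivity
  have hδ1 : δ ≤ 1 := by rw [hδ]; exact min_le_right _ _
  have hδ2 : kk p * δ ≤ ε / 2 := by
    have : δ ≤ ε / (2 * kk p) := by rw [hδ]; exact min_le_left _ _
    rw [le_div_iff₀ (by linarith)] at this; linarith
  have hs : 0 < Real.sin (δ / 2) := Real.sin_pos_of_pos_of_lt_pi (by linarith) (by linarith)
  have hc : 0 < ff p (ε / 2) := ff_pos (by linarith)
  obtain ⟨c, hcdef⟩ : ∃ c, c = Real.sin (δ / 2) * ff p (ε / 2) := ⟨_, rfl⟩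
  have hc0 : 0 < c := by rw [hcdef]; positivity
  refine ⟨(2 * kk p + 1) * 2 / (c * δ), by positivity, ?_⟩
  intro μ hμ u u1 hu h1 h0
  have hμ0 : 0 < μ := lt_of_lt_of_le (by positivity) hμ
  have h2 : ∀ t ∈ Icc 0 Real.pi, 0 ≤ Fn p μ t (u t) := by
    intro t ht
    unfold Fn
    have := sin_nn ht
    have := ff_nonneg p (u t)
    positivity
  have cb := conv_bd hu h2
  have hlow : ∀ t ∈ Icc 0 δ, ε / 2 ≤ u t := by
    intro t ht
    have := (cb 0 t le_rfl ht.1 (by linarith [ht.2])).2.1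
    nlinarith [ht.1, ht.2]
  have hd := lbd (c := μ * c) (by linarith : δ / 2 ≤ δ)
    (fun r hr => (hu r ⟨by linarith [hr.1], by linarith [hr.2]⟩).2) (by
      intro t ht
      unfold Fn
      apply mul_le_mul_of_nonneg_left _ hμ0.le
      rw [hcdef]
      apply mul_le_mul _ (ff_mono hp (hlow t ⟨by linarith [ht.1], ht.2⟩)) hc.le
      · exact sin_nn ⟨by linarith [ht.1], by linarith [ht.2]⟩
      · exact Real.sin_le_sin_of_le_of_le_pi_div_two (by linarith) (by linarith [ht.2]) ht.1)
  have hd1 := (cb 0 (δ / 2) le_rfl (by linarith) (by linarith)).1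
  have hd2 : 2 * kk p + 1 ≤ μ * c * (δ - δ / 2) := by
    rw [ge_iff_le, div_le_iff₀ (by positivity)] at hμ
    linarith
  have hd3 : kk p + 1 ≤ u1 δ := by linarith
  have e1 := (cb δ Real.pi hδ0.le (by linarith) le_rfl)
  refine ⟨by linarith [e1.1], ?_⟩
  have := hlow δ ⟨hδ0.le, le_rfl⟩
  have hm := m0_lt_kk p
  nlinarith [e1.2.1]

theorem refl_deriv {u : ℝ → ℝ} {d c t : ℝ} (h : HasDerivAt u d (c - t)) :
    HasDerivAt (fun t => u (c - t)) (-d) t := by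
  have := h.comp_const_sub c t
  simpa using this

theorem neg_refl {p μ : ℝ} {u u1 : ℝ → ℝ} (hu : Sol2 Real.pi (Fn p μ) u u1) :
    Sol2 Real.pi (Fn p μ) (fun t => u (Real.pi - t)) (fun t => -u1 (Real.pi - t)) := by
  intro t ht
  have h := hu (Real.pi - t) ⟨by linarith [ht.2], by linarith [ht.1]⟩
  refine ⟨refl_deriv h.1, ?_⟩
  have h2 := (refl_deriv h.2).neg
  rw [neg_neg] at h2
  unfold Fn at h2 ⊢
  rw [Real.sin_pi_sub] at h2
  exact h2

theorem pos_refl {p : ℝ} {u u1 : ℝ → ℝ} (hu : Sol2 Real.pi (Fp p) u u1) :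
    Sol2 Real.pi (Fp p) (fun t => u (Real.pi - t)) (fun t => -u1 (Real.pi - t)) := by
  intro t ht
  have h := hu (Real.pi - t) ⟨by linarith [ht.2], by linarith [ht.1]⟩
  refine ⟨refl_deriv h.1, ?_⟩
  have h2 := (refl_deriv h.2).neg
  rw [neg_neg] at h2
  unfold Fp at h2 ⊢
  rw [Real.sin_pi_sub] at h2
  exact h2

theorem negLarge' {p : ℝ} (hp : 1 < p) {ε : ℝ} (hε : 0 < ε) : ∃ μ0 > 0, ∀ μ ≥ μ0, ∀ u u1,
    Sol2 Real.pi (Fn p μ) u u1 → (-kk p ≤ u1 0 → ε ≤ u 0 → kk p < u1 Real.pi ∧ m0 p < u Real.pi) ∧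
      (u1 Real.pi ≤ kk p → ε ≤ u Real.pi → m0 p < u 0) := by
  obtain ⟨μ0, h0, h⟩ := negLarge hp hε
  refine ⟨μ0, h0, fun μ hμ u u1 hu => ⟨h μ hμ u u1 hu, fun a b => ?_⟩⟩
  have := (h μ hμ _ _ (neg_refl hu) (by simpa using a) (by simpa using b)).2
  simpa using this


structure Arc (p : ℝ) (U U1 : ℝ → ℝ) : Prop where
  sol : Sol2 Real.pi (Fp p) U U1
  z0 : U 0 = 0
  zp : U Real.pi = 0
  pos : ∀ t ∈ Ioo 0 Real.pi, 0 < U t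

theorem Fp_np {p t x : ℝ} (ht : t ∈ Icc 0 Real.pi) : Fp p t x ≤ 0 := by
  unfold Fp
  have := mul_nonneg (sin_nn ht) (ff_nonneg p x)
  linarith

theorem pos_conc {p : ℝ} {U U1 : ℝ → ℝ} (h : Sol2 Real.pi (Fp p) U U1) :
    ∀ s t, 0 ≤ s → s ≤ t → t ≤ Real.pi → U1 t ≤ U1 s ∧ U t ≤ U s + U1 s * (t - s) ∧
      U s + U1 t * (t - s) ≤ U t :=
  conc_bd (u2 := fun t => Fp p t (U t)) h (fun t ht => Fp_np ht)

theorem Arc.nn {p : ℝ} {U U1 : ℝ → ℝ} (h : Arc p U U1) {t : ℝ} (ht : t ∈ Icc 0 Real.pi) :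
    0 ≤ U t := by
  rcases eq_or_lt_of_le ht.1 with h0 | h0
  · rw [← h0, h.z0]
  rcases eq_or_lt_of_le ht.2 with h1 | h1
  · rw [h1, h.zp]
  exact (h.pos t ⟨h0, h1⟩).le

theorem arc_refl {p : ℝ} {U U1 : ℝ → ℝ} (h : Arc p U U1) :
    Arc p (fun t => U (Real.pi - t)) (fun t => -U1 (Real.pi - t)) := by
  refine ⟨pos_refl h.sol, by simpa using h.zp, by simpa using h.z0, fun t ht => ?_⟩
  exact h.pos _ ⟨by linarith [ht.2], by linarith [ht.1]⟩

theorem symA {p : ℝ} (hp : 1 < p) {U U1 : ℝ → ℝ} (h : Arc p U U1) {t0 : ℝ}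
    (ht0 : t0 ∈ Ioo 0 Real.pi) (hz : U1 t0 = 0) : Real.pi / 2 ≤ t0 := by
  by_contra hlt
  push Not at hlt
  have hpi := Real.pi_pos
  have cc := pos_conc h.sol
  have hcont : ContinuousOn U (Icc 0 Real.pi) :=
    fun t ht => (h.sol t ht).1.continuousAt.continuousWithinAt
  have hmono : ∀ s t, 0 ≤ s → s ≤ t → t ≤ t0 → U s ≤ U t := by
    intro s t hs hst ht
    have a1 := cc s t hs hst (by linarith [ht0.2])
    have a2 := (cc t t0 (by linarith) ht ht0.2.le).1
    nlinarith [mul_nonneg (hz ▸ a2) (sub_nonneg.2 hst)]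
  -- compact minimisation
  let K : Set (ℝ × ℝ) := (Icc 0 t0 ×ˢ Icc t0 (2 * t0)) ∩ {z | z.1 + z.2 ≤ 2 * t0 ∧ U z.2 ≤ U z.1}
  have hKc : IsCompact K := by
    have hc1 : IsCompact (Icc (0:ℝ) t0 ×ˢ Icc t0 (2 * t0)) := isCompact_Icc.prod isCompact_Icc
    have hf1 : ContinuousOn (fun z : ℝ × ℝ => U z.1) (Icc (0:ℝ) t0 ×ˢ Icc t0 (2 * t0)) :=
      hcont.comp continuous_fst.continuousOn
        (fun z hz => ⟨hz.1.1, by linarith [hz.1.2]⟩)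
    have hf2 : ContinuousOn (fun z : ℝ × ℝ => U z.2) (Icc (0:ℝ) t0 ×ˢ Icc t0 (2 * t0)) :=
      hcont.comp continuous_snd.continuousOn
        (fun z hz => ⟨by linarith [hz.2.1, ht0.1], by linarith [hz.2.2]⟩)
    have e : K = ((Icc (0:ℝ) t0 ×ˢ Icc t0 (2 * t0)) ∩ (fun z : ℝ × ℝ => U z.1 - U z.2) ⁻¹' Ici 0)
        ∩ {z | z.1 + z.2 ≤ 2 * t0} := by
      ext z
      simp only [K, mem_inter_iff, mem_setOf_eq, mem_preimage, mem_Ici, sub_nonneg]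
      tauto
    rw [e]
    apply IsCompact.inter_right
    · exact hc1.of_isClosed_subset ((hf1.sub hf2).preimage_isClosed_of_isClosed hc1.isClosed
        isClosed_Ici) inter_subset_left
    · exact isClosed_le (continuous_fst.add continuous_snd) continuous_const
  obtain ⟨⟨t1, r1⟩, hm, hmin⟩ := hKc.exists_isMinOn (f := fun z : ℝ × ℝ => z.1 + z.2)
    ⟨(t0, t0), ⟨⟨⟨ht0.1.le, le_rfl⟩, ⟨le_rfl, by linarith [ht0.1]⟩⟩, by
      refine ⟨?_, le_rfl⟩
      change t0 + t0 ≤ 2 * t0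
      linarith⟩⟩ (continuous_fst.add continuous_snd).continuousOn
  obtain ⟨⟨⟨ht1a, ht1b⟩, ⟨hr1a, hr1b⟩⟩, hsum, hle⟩ := hm
  simp only at ht1a ht1b hr1a hr1b hsum hle
  have hmin' : ∀ t r, 0 ≤ t → t ≤ t0 → t0 ≤ r → t + r ≤ 2 * t0 → U r ≤ U t → t1 + r1 ≤ t + r := by
    intro t r a1 a2 a3 a4 a5
    exact hmin (a := (t, r)) ⟨⟨⟨a1, a2⟩, ⟨a3, by simp only; linarith⟩⟩, a4, a5⟩
  obtain ⟨l, hl⟩ : ∃ l, l = (t1 + r1) / 2 := ⟨_, rfl⟩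
  have hl0 : 0 < l := by linarith [ht0.1]
  have hlt0 : l ≤ t0 := by linarith
  have hw0 : ∀ t ∈ Icc 0 l, U t ≤ U (2 * l - t) := by
    intro t ht
    rcases le_or_gt (2 * l - t) t0 with hc | hc
    · exact hmono t _ ht.1 (by linarith [ht.2]) hc
    · by_contra hneg
      push Not at hneg
      obtain ⟨r, hr⟩ : ∃ r, r = 2 * l - t := ⟨_, rfl⟩
      rw [← hr] at hneg hc
      have hcr : ContinuousAt U r := (h.sol r ⟨by linarith [ht0.1], by linarith [ht.1]⟩).1.continuousAt
      have e1 : ∀ᶠ s in 𝓝 r, U s < U t := hcr.eventually (gt_mem_nhds hneg)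
      have e2 : ∀ᶠ s in 𝓝[<] r, U s < U t ∧ t0 < s :=
        (e1.and (lt_mem_nhds hc)).filter_mono nhdsWithin_le_nhds
      obtain ⟨s, ⟨hs1, hs2⟩, hs3⟩ := (e2.and self_mem_nhdsWithin).exists
      have hs3 : s < r := hs3
      have := hmin' t s ht.1 (by linarith [ht.2]) hs2.le (by linarith) hs1.le
      linarith
  have hwd : ∀ t ∈ Icc 0 l, HasDerivAt (fun t => U (2 * l - t) - U t) (-U1 (2 * l - t) - U1 t) t ∧
      HasDerivAt (fun t => -U1 (2 * l - t) - U1 t)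
        (Fp p (2 * l - t) (U (2 * l - t)) - Fp p t (U t)) t := by
    intro t ht
    have h1 := h.sol t ⟨ht.1, by linarith [ht.2]⟩
    have h2 := h.sol (2 * l - t) ⟨by linarith [ht.2], by linarith [ht.1]⟩
    refine ⟨(refl_deriv h2.1).sub h1.1, ?_⟩
    have h3 := (refl_deriv h2.2).neg
    rw [neg_neg] at h3
    exact h3.sub h1.2
  have cw := conc_bd hwd (by
    intro t ht
    have h1 := hw0 t ht
    have h2 := ff_mono hp h1
    have h3 : Real.sin t ≤ Real.sin (2 * l - t) := by
      have : 0 ≤ Real.sin (2 * l - t) - Real.sin t := by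
        rw [Real.sin_sub_sin]
        have e1 : (2 * l - t - t) / 2 = l - t := by ring
        have e2 : (2 * l - t + t) / 2 = l := by ring
        rw [e1, e2]
        have := sin_nn (t := l - t) ⟨by linarith [ht.2], by linarith [ht.1]⟩
        have := Real.cos_nonneg_of_neg_pi_div_two_le_of_le (x := l) (by linarith) (by linarith)
        positivity
      linarith
    have h4 := mul_le_mul h3 h2 (ff_nonneg p _)
      (sin_nn (t := 2 * l - t) ⟨by linarith [ht.2], by linarith [ht.1]⟩)
    unfold Fp
    linarith)
  have hwp : 0 < U (2 * l) := h.pos _ ⟨by linarith, by linarith⟩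
  have hl1 : t1 ≤ l := by linarith
  rcases eq_or_lt_of_le hl1 with heq | hlt1
  · have hlt : l = t0 := by linarith
    have := (cw 0 l le_rfl hl0.le le_rfl).2.2
    have e : 2 * l - l = t0 := by linarith
    simp only [sub_zero, e, h.z0] at this
    rw [hlt] at this hwp
    rw [hz] at this
    linarith
  · have a1 := (cw t1 l ht1a hlt1.le le_rfl).2.1
    have a2 := (cw 0 t1 le_rfl ht1a hlt1.le).2.2
    have e : 2 * l - l = l := by ring
    have e2 : 2 * l - t1 = r1 := by linarith
    simp only [sub_zero, e, e2, h.z0] at a1 a2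
    have a3 : 0 ≤ -U1 r1 - U1 t1 := by
      by_contra hh
      push Not at hh
      nlinarith [mul_pos_of_neg_of_neg hh (by linarith : t1 - l < 0)]
    nlinarith [mul_nonneg a3 ht1a]

theorem arc_sym {p : ℝ} (hp : 1 < p) {U U1 : ℝ → ℝ} (h : Arc p U U1) : U1 (Real.pi / 2) = 0 := by
  have hpi := Real.pi_pos
  obtain ⟨t0, ht0, hz⟩ : ∃ t0 ∈ Ioo 0 Real.pi, U1 t0 = 0 :=
    exists_hasDerivAt_eq_zero hpi (fun t ht => (h.sol t ht).1.continuousAt.continuousWithinAt)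
      (by rw [h.z0, h.zp]) (fun t ht => (h.sol t (Ioo_subset_Icc_self ht)).1)
  have h1 := symA hp h ht0 hz
  have h2 := symA hp (arc_refl h) (t0 := Real.pi - t0) ⟨by linarith [ht0.2], by linarith [ht0.1]⟩
    (by simpa using hz)
  have : t0 = Real.pi / 2 := by linarith
  rw [← this, hz]

theorem Arc.d0 {p : ℝ} {U U1 : ℝ → ℝ} (h : Arc p U U1) : 0 < U1 0 := by
  have hpi := Real.pi_pos
  have a1 := (pos_conc h.sol 0 (Real.pi / 2) le_rfl (by linarith) (by linarith)).2.1
  have a2 := h.pos (Real.pi / 2) ⟨by linarith, by linarith⟩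
  rw [h.z0] at a1
  by_contra hh
  push Not at hh
  nlinarith

theorem Arc.dpi {p : ℝ} {U U1 : ℝ → ℝ} (h : Arc p U U1) : U1 Real.pi < 0 := by
  have := (arc_refl h).d0
  simp at this
  exact this


/-- linear solution -/
def Lin (q w w1 : ℝ → ℝ) : Prop :=
  ∀ t ∈ Icc 0 Real.pi, HasDerivAt w (w1 t) t ∧ HasDerivAt w1 (-(q t * w t)) t

theorem Arc.lt_mm {p : ℝ} {U U1 : ℝ → ℝ} (h : Arc p U U1) (hk : U1 0 ≤ kk p) {t : ℝ}
    (ht : t ∈ Icc 0 Real.pi) : U t < mm p := by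
  have := (pos_conc h.sol 0 t le_rfl ht.1 ht.2).2.1
  rw [h.z0] at this
  have h4 : t ≤ 4 := ht.2.trans Real.pi_le_four
  have h0 := h.d0
  unfold mm
  nlinarith [ht.1]

theorem ff_deriv {p : ℝ} (hp : 1 < p) {x : ℝ} (hx : x < mm p) : HasDerivAt (ff p) (fd p x) x := by
  apply (pw_deriv hp x).congr_of_eventuallyEq
  filter_upwards [gt_mem_nhds hx] with y hy
  exact ff_eq' (le_of_lt hy)

theorem fd_mul {p x : ℝ} (hp : 1 < p) (h0 : 0 ≤ x) (h1 : x ≤ mm p) : fd p x * x = p * ff p x := by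
  unfold fd
  rw [ff_eq h0 h1, max_eq_right h0, mul_assoc, ← Real.rpow_add_one' h0 (by linarith)]
  ring_nf

theorem mvt_pos {g g' : ℝ → ℝ} {x y : ℝ} (hxy : x < y)
    (hg : ∀ t ∈ Icc x y, HasDerivAt g (g' t) t) (hc : ∀ t ∈ Ioo x y, 0 < g' t) : g x < g y := by
  obtain ⟨ξ, hξ, he⟩ := exists_hasDerivAt_eq_slope g g' hxy
      (fun t ht => (hg t ht).continuousAt.continuousWithinAt)
      (fun t ht => hg t (Ioo_subset_Icc_self ht))
  have := hc ξ hξ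
  rw [he, div_pos_iff_of_pos_right (by linarith)] at this
  linarith

theorem L4b {p : ℝ} (hp : 1 < p) {U U1 : ℝ → ℝ} (h : Arc p U U1) (hk : U1 0 ≤ kk p)
    {w w1 : ℝ → ℝ} (hw : Lin (fun t => Real.sin t * fd p (U t)) w w1) (hw0 : w 0 = 0)
    (hw1 : w1 0 = 1) : w Real.pi < 0 := by
  have hpi := Real.pi_pos
  have cc := pos_conc h.sol
  have hs := arc_sym hp h
  have hz : ∀ t ∈ Icc 0 Real.pi, HasDerivAt U1 (Fp p t (U t)) t ∧
      HasDerivAt (fun t => Fp p t (U t))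
        (-(Real.cos t * ff p (U t) + Real.sin t * (fd p (U t) * U1 t))) t := by
    intro t ht
    refine ⟨(h.sol t ht).2, ?_⟩
    have h1 := (ff_deriv hp (h.lt_mm hk ht)).comp t (h.sol t ht).1
    exact ((Real.hasDerivAt_sin t).mul h1).neg
  have hpos1 : ∀ t ∈ Ioc 0 (Real.pi / 2), 0 < w t := by
    intro t ht
    refine (sturmW (α := 0) (β := Real.pi / 2) (z := U1) (fun t ht => hw t ⟨ht.1, by linarith [ht.2]⟩)
      (fun t ht => hz t ⟨ht.1, by linarith [ht.2]⟩) ?_ hw0.ge ?_ ?_ t ht).1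
    · intro t ht
      have := (cc t (Real.pi / 2) ht.1 ht.2 (by linarith)).1
      linarith
    · rw [hw0, hw1]; have := h.d0; linarith
    · intro t ht h0
      have c1 := Real.cos_nonneg_of_neg_pi_div_two_le_of_le (x := t) (by linarith [ht.1]) ht.2
      have := mul_nonneg h0 (mul_nonneg c1 (ff_nonneg p (U t)))
      simp only
      linarith
  have hWd : ∀ t ∈ Icc 0 Real.pi, HasDerivAt (fun t => U1 t * w t - U t * w1 t)
      ((p - 1) * (Real.sin t * ff p (U t) * w t)) t := by
    intro t ht
    have a1 := (h.sol t ht)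
    have a2 := hw t ht
    have a3 := (a1.2.mul a2.1).sub (a1.1.mul a2.2)
    refine a3.congr_deriv ?_
    have := fd_mul hp (h.nn ht) (h.lt_mm hk ht).le
    unfold Fp
    linear_combination (Real.sin t * w t) * this
  have hW1 : 0 < U1 (Real.pi / 2) * w (Real.pi / 2) - U (Real.pi / 2) * w1 (Real.pi / 2) := by
    have := mvt_pos (x := 0) (y := Real.pi / 2) (by linarith)
      (fun t ht => hWd t ⟨ht.1, by linarith [ht.2]⟩) (by
        intro t ht
        have b1 := hpos1 t ⟨ht.1, ht.2.le⟩
        have b2 := ff_pos (p := p) (h.pos t ⟨ht.1, by linarith [ht.2]⟩)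
        have b3 := Real.sin_pos_of_pos_of_lt_pi ht.1 (by linarith [ht.2])
        have b4 : 0 < p - 1 := by linarith
        positivity)
    simpa [h.z0, hw0] using this
  have hW2 : ∀ T ∈ Icc (Real.pi / 2) Real.pi, (∀ t ∈ Icc (Real.pi / 2) T, 0 ≤ w t) →
      0 < U1 T * w T - U T * w1 T := by
    intro T hT hn
    have := lbd (c := 0) hT.1 (fun t ht => hWd t ⟨by linarith [ht.1], by linarith [ht.2, hT.2]⟩) (by
      intro t ht
      have ht' : t ∈ Icc 0 Real.pi := ⟨by linarith [ht.1], by linarith [ht.2, hT.2]⟩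
      have b1 := hn t ht
      have b2 := ff_nonneg p (U t)
      have b3 := sin_nn ht'
      have b4 : 0 < p - 1 := by linarith
      positivity)
    linarith
  obtain ⟨t2, ht2, hneg⟩ : ∃ t ∈ Icc (Real.pi / 2) Real.pi, w t < 0 := by
    by_contra hh
    push Not at hh
    have := hW2 Real.pi ⟨by linarith, le_rfl⟩ hh
    rw [h.zp] at this
    have := h.dpi
    have := hh Real.pi ⟨by linarith, le_rfl⟩
    nlinarith
  have hwc : ContinuousOn w (Icc 0 Real.pi) :=
    fun t ht => (hw t ht).1.continuousAt.continuousWithinAt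
  have hph := hpos1 (Real.pi / 2) ⟨by linarith, le_rfl⟩
  obtain ⟨t1, ht1, hz1, hfc⟩ := first_cross (φ := fun t => - w t) (a := Real.pi / 2) (b := t2) (c := 0)
    ht2.1 ((hwc.mono (Icc_subset_Icc (by linarith) ht2.2)).neg) (by linarith)
    (by linarith)
  simp only [neg_eq_zero, Left.neg_nonpos_iff] at hz1 hfc
  have ht1a : Real.pi / 2 < t1 := lt_of_le_of_ne ht1.1 (by rintro rfl; linarith)
  have ht1b : t1 < t2 := lt_of_le_of_ne ht1.2 (by rintro rfl; linarith)
  have ht1c : t1 < Real.pi := lt_of_lt_of_le ht1b ht2.2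
  have hd1 : w1 t1 < 0 := by
    have := hW2 t1 ⟨ht1.1, ht1c.le⟩ hfc
    rw [hz1] at this
    have := h.pos t1 ⟨by linarith, ht1c⟩
    by_contra hh
    push Not at hh
    nlinarith
  have hU1 : U1 t1 < 0 := by
    have := mvt_pos (g := fun t => - U1 t) (g' := fun t => - Fp p t (U t)) ht1a
      (fun t ht => (hz t ⟨by linarith [ht.1], by linarith [ht.2]⟩).1.neg) (by
        intro t ht
        have b2 := ff_pos (p := p) (h.pos t ⟨by linarith [ht.1], by linarith [ht.2]⟩)
        have b3 := Real.sin_pos_of_pos_of_lt_pi (x := t) (by linarith [ht.1]) (by linarith [ht.2])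
        have := mul_pos b3 b2
        unfold Fp
        linarith)
    rw [hs] at this
    linarith
  have := (sturmW (α := t1) (β := Real.pi) (w := fun t => - w t) (w1 := fun t => - w1 t)
    (w2 := fun t => -(-(Real.sin t * fd p (U t) * w t)))
    (z := fun t => - U1 t) (z1 := fun t => - Fp p t (U t))
    (z2 := fun t => -(-(Real.cos t * ff p (U t) + Real.sin t * (fd p (U t) * U1 t))))
    (fun t ht => have a := hw t ⟨by linarith [ht.1], by linarith [ht.2]⟩; ⟨a.1.neg, a.2.neg⟩)
    (fun t ht => have a := hz t ⟨by linarith [ht.1], by linarith [ht.2]⟩; ⟨a.1.neg, a.2.neg⟩)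
    (by
      intro t ht
      have := (cc t1 t (by linarith) ht.1 ht.2).1
      linarith) (by simp [hz1]) (by simp only [hz1]; nlinarith) (by
      intro t ht h0
      have c1 := Real.cos_nonpos_of_pi_div_two_le_of_le (x := t) (by linarith [ht.1])
        (by linarith [ht.2])
      have h0' : 0 ≤ - w t := h0
      have := mul_nonneg h0' (mul_nonneg (neg_nonneg.2 c1) (ff_nonneg p (U t)))
      linarith) Real.pi ⟨ht1c, le_rfl⟩).1
  linarith

theorem lin_exists {q : ℝ → ℝ} {C : ℝ} (hq : ContinuousOn q (Icc 0 Real.pi)) (hC : 1 ≤ C)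
    (hqC : ∀ t ∈ Icc 0 Real.pi, |q t| ≤ C) :
    ∃ w w1, Lin q w w1 ∧ w 0 = 0 ∧ w1 0 = 1 ∧ ∀ t ∈ Icc 0 Real.pi, |w t| ≤ Real.exp (C * Real.pi) := by
  have hpi := Real.pi_pos
  obtain ⟨pr, hpr⟩ : ∃ pr : ℝ → ℝ, pr = fun t => max 0 (min t Real.pi) := ⟨_, rfl⟩
  have hprm : ∀ t, pr t ∈ Icc 0 Real.pi := fun t => by
    rw [hpr]; exact ⟨le_max_left _ _, max_le hpi.le (min_le_right _ _)⟩
  have hprc : Continuous pr := by rw [hpr]; fun_prop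
  have hpre : ∀ t ∈ Icc 0 Real.pi, pr t = t := fun t ht => by
    rw [hpr]; simp only; rw [min_eq_left ht.2, max_eq_right ht.1]
  obtain ⟨R, hR⟩ : ∃ R, R = Real.exp (C * Real.pi) := ⟨_, rfl⟩
  have hR0 : 0 < R := by rw [hR]; positivity
  obtain ⟨cl, hcl⟩ : ∃ cl : ℝ → ℝ, cl = fun x => max (-R) (min x R) := ⟨_, rfl⟩
  have hclb : ∀ x, |cl x| ≤ R := fun x => by
    rw [hcl, abs_le]; exact ⟨le_max_left _ _, max_le (by linarith) (min_le_right _ _)⟩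
  have hcll : ∀ x y, |cl x - cl y| ≤ |x - y| := fun x y => by
    rw [hcl]
    calc _ ≤ |min x R - min y R| := by
          have := abs_max_sub_max_le_abs (min x R) (min y R) (-R)
          simpa [max_comm] using this
      _ ≤ |x - y| := by have := abs_min_sub_min_le_max x R y R; simpa using this
  have hcle : ∀ x, |x| ≤ R → cl x = x := fun x hx => by
    rw [abs_le] at hx
    rw [hcl]; simp only; rw [min_eq_left hx.2, max_eq_right hx.1]
  have hlip : ∀ t x y, |(-(q (pr t) * cl x)) - (-(q (pr t) * cl y))| ≤ C * |x - y| := by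
    intro t x y
    have : (-(q (pr t) * cl x)) - (-(q (pr t) * cl y)) = -(q (pr t) * (cl x - cl y)) := by ring
    rw [this, abs_neg, abs_mul]
    exact mul_le_mul (hqC _ (hprm t)) (hcll x y) (abs_nonneg _) (by linarith)
  obtain ⟨w, w1, hs, h0, h1⟩ := exists_sol (T := Real.pi) (C := C) (B := C * R)
    (F := fun t x => -(q (pr t) * cl x)) hpi.le (by linarith) hlip
    (fun x => ((hq.comp_continuous hprc hprm).mul continuous_const).neg)
    (fun t x => by
      rw [abs_neg, abs_mul]
      exact mul_le_mul (hqC _ (hprm t)) (hclb x) (abs_nonneg _) (by linarith)) 0 1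
  have hb : ∀ t ∈ Icc 0 Real.pi, |w t| ≤ R := by
    intro t ht
    have := (gw (e := 0) (D := 1) (z := fun _ => 0) (z1 := fun _ => 0) (z2 := fun _ => 0) hC
      (fun t _ => hlip t) hs
      (fun t _ => ⟨hasDerivAt_const _ _, hasDerivAt_const _ _⟩) (by
        intro t _
        simp [hcle 0 (by simpa using hR0.le)]) (by simp [h0]) (by simp [h1]) le_rfl t ht).1
    simpa [hR] using this
  refine ⟨w, w1, fun t ht => ⟨(hs t ht).1, ?_⟩, h0, h1, by rw [← hR]; exact hb⟩
  have := (hs t ht).2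
  simp only [hpre t ht, hcle _ (hb t ht)] at this
  exact this

theorem Lin.smul {q w w1 : ℝ → ℝ} (h : Lin q w w1) (c : ℝ) :
    Lin q (fun t => c * w t) (fun t => c * w1 t) := by
  intro t ht
  refine ⟨(h t ht).1.const_mul c, ((h t ht).2.const_mul c).congr_deriv ?_⟩
  ring

theorem L5 {p : ℝ} (hp : 1 < p) {U U1 : ℝ → ℝ} (h : Arc p U U1) (hk : U1 0 ≤ kk p) :
    ∃ δ > 0, ∃ B > 0, ∀ q w w1, Lin q w w1 →
      (∀ t ∈ Icc 0 Real.pi, |q t - Real.sin t * fd p (U t)| ≤ δ) → 0 ≤ w 0 → w 0 ≤ δ * w1 0 →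
      0 < w1 0 → w Real.pi < 0 ∧ |w1 Real.pi| ≤ B * |w Real.pi| := by
  have hpi := Real.pi_pos
  have hUc : ContinuousOn U (Icc 0 Real.pi) :=
    fun t ht => (h.sol t ht).1.continuousAt.continuousWithinAt
  have hqc : ContinuousOn (fun t => Real.sin t * fd p (U t)) (Icc 0 Real.pi) :=
    Real.continuous_sin.continuousOn.mul ((fd_cont hp).comp_continuousOn hUc)
  obtain ⟨C0, hC0⟩ := isCompact_Icc.exists_bound_of_continuousOn hqc
  obtain ⟨C, hC1, hCC⟩ : ∃ C : ℝ, 1 ≤ C ∧ C0 ≤ C := ⟨max 1 C0, le_max_left _ _, le_max_right _ _⟩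
  have hqb : ∀ t ∈ Icc 0 Real.pi, |Real.sin t * fd p (U t)| ≤ C := fun t ht => (hC0 t ht).trans hCC
  obtain ⟨v, v1, hv, hv0, hv1, hvb⟩ := lin_exists hqc hC1 hqb
  have hneg := L4b hp h hk hv hv0 hv1
  obtain ⟨R, hR⟩ : ∃ R, R = Real.exp (C * Real.pi) := ⟨_, rfl⟩
  obtain ⟨E, hE⟩ : ∃ E, E = Real.exp ((C + 1) * Real.pi) := ⟨_, rfl⟩
  have hR0 : 0 < R := by rw [hR]; positivity
  have hE0 : 0 < E := by rw [hE]; positivity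
  obtain ⟨n, hn⟩ : ∃ n, n = - v Real.pi := ⟨_, rfl⟩
  have hn0 : 0 < n := by linarith
  obtain ⟨δ, hδ⟩ : ∃ δ, δ = min 1 (n / 2 / ((1 + R) * E)) := ⟨_, rfl⟩
  have hδ0 : 0 < δ := by rw [hδ]; apply lt_min one_pos; positivity
  have hδ1 : δ ≤ 1 := by rw [hδ]; exact min_le_left _ _
  have hδ2 : (δ + δ * R) * E ≤ n / 2 := by
    have : δ ≤ n / 2 / ((1 + R) * E) := by rw [hδ]; exact min_le_right _ _
    rw [le_div_iff₀ (by positivity)] at this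
    linarith
  refine ⟨δ, hδ0, (|v1 Real.pi| + n / 2) / (n / 2), by positivity, ?_⟩
  intro q w w1 hw hq hw0 hw0' hw1
  have hs := hw.smul ((w1 0)⁻¹)
  have key := gw (T := Real.pi) (C := C + 1) (F := fun t x => -(q t * x)) (z := v) (z1 := v1)
    (z2 := fun t => -(Real.sin t * fd p (U t) * v t)) (e := δ * R) (D := δ) (by linarith) (by
      intro t ht x y
      have : -(q t * x) - -(q t * y) = -(q t * (x - y)) := by ring
      rw [this, abs_neg, abs_mul]
      apply mul_le_mul_of_nonneg_right _ (abs_nonneg _)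
      have b1 := hq t ht
      have b2 := hqb t ht
      rw [abs_le] at *
      constructor <;> linarith) hs hv (by
      intro t ht
      have : -(Real.sin t * fd p (U t) * v t) - -(q t * v t) =
        (q t - Real.sin t * fd p (U t)) * v t := by ring
      rw [this, abs_mul]
      rw [hR]
      exact mul_le_mul (hq t ht) (hvb t ht) (abs_nonneg _) hδ0.le) (by
      rw [hv0, sub_zero, abs_of_nonneg (by positivity), inv_mul_le_iff₀ hw1]
      linarith) (by
      rw [hv1, inv_mul_cancel₀ hw1.ne']
      simpa using hδ0.le) (by positivity) Real.pi ⟨hpi.le, le_rfl⟩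
  rw [← hE] at key
  have k1 := abs_le.1 (key.1.trans hδ2)
  have k2 := key.2.trans hδ2
  have e1 : w Real.pi = w1 0 * ((w1 0)⁻¹ * w Real.pi) := by field_simp
  have e2 : w1 Real.pi = w1 0 * ((w1 0)⁻¹ * w1 Real.pi) := by field_simp
  obtain ⟨x, hx⟩ : ∃ x, x = (w1 0)⁻¹ * w Real.pi := ⟨_, rfl⟩
  obtain ⟨y, hy⟩ : ∃ y, y = (w1 0)⁻¹ * w1 Real.pi := ⟨_, rfl⟩
  rw [← hx] at e1 k1
  rw [← hy] at e2 k2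
  have hxn : x ≤ -(n / 2) := by linarith [k1.2]
  have hyn : |y| ≤ |v1 Real.pi| + n / 2 := by
    have := abs_sub_abs_le_abs_sub y (v1 Real.pi)
    linarith
  refine ⟨by rw [e1]; nlinarith, ?_⟩
  rw [e1, e2, abs_mul, abs_mul, abs_of_pos hw1, abs_of_neg (by linarith : x < 0)]
  have : |y| ≤ (|v1 Real.pi| + n / 2) / (n / 2) * -x := by
    rw [div_mul_eq_mul_div, le_div_iff₀ (by positivity)]
    have := mul_le_mul hyn (by linarith : n / 2 ≤ -x) (by positivity) (by positivity)
    exact this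
  calc w1 0 * |y| ≤ w1 0 * ((|v1 Real.pi| + n / 2) / (n / 2) * -x) :=
        mul_le_mul_of_nonneg_left this hw1.le
    _ = _ := by ring

theorem L6 (c : ℝ) (hc : 0 ≤ c) : ∃ η0 > 0, ∀ q w w1, Lin q w w1 →
      (∀ t ∈ Icc 0 Real.pi, |q t| ≤ η0) → ∀ d, 0 ≤ d → d ≤ c → 0 ≤ w 0 → w 0 ≤ d * w1 0 →
      0 < w1 0 → 0 < w Real.pi ∧ 0 < w1 Real.pi ∧ w Real.pi ≤ 2 * (d + 4) * w1 Real.pi := by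
  have hpi := Real.pi_pos
  have hpi3 := Real.pi_gt_three
  have hpi4 := Real.pi_lt_d2
  obtain ⟨E, hE⟩ : ∃ E, E = Real.exp (1 * Real.pi) := ⟨_, rfl⟩
  have hE0 : 0 < E := by rw [hE]; positivity
  obtain ⟨η, hη⟩ : ∃ η, η = min 1 (1 / 2 / ((c + 4) * E)) := ⟨_, rfl⟩
  have hη0 : 0 < η := by rw [hη]; apply lt_min one_pos; positivity
  have hη1 : η ≤ 1 := by rw [hη]; exact min_le_left _ _
  have hη2 : (0 + η * (c + 4)) * E ≤ 1 / 2 := by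
    have : η ≤ 1 / 2 / ((c + 4) * E) := by rw [hη]; exact min_le_right _ _
    rw [le_div_iff₀ (by positivity)] at this
    linarith
  refine ⟨η, hη0, ?_⟩
  intro q w w1 hw hq d hd0 hdc hw0 hw0' hw1
  have hs := hw.smul ((w1 0)⁻¹)
  obtain ⟨x0, hx0⟩ : ∃ x, x = (w1 0)⁻¹ * w 0 := ⟨_, rfl⟩
  have hx0a : 0 ≤ x0 := by rw [hx0]; positivity
  have hx0b : x0 ≤ d := by rw [hx0, inv_mul_le_iff₀ hw1]; linarith
  have key := gw (T := Real.pi) (C := 1) (F := fun t x => -(q t * x)) (z := fun t => x0 + t)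
    (z1 := fun _ => 1)
    (z2 := fun t => 0) (e := η * (c + 4)) (D := 0) le_rfl (by
      intro t ht x y
      have : -(q t * x) - -(q t * y) = -(q t * (x - y)) := by ring
      rw [this, abs_neg, abs_mul]
      apply mul_le_mul_of_nonneg_right _ (abs_nonneg _)
      exact (hq t ht).trans hη1) hs
      (fun t _ => ⟨by simpa using (hasDerivAt_id t).const_add x0, hasDerivAt_const _ _⟩) (by
      intro t ht
      rw [zero_sub, neg_neg, abs_mul]
      apply mul_le_mul (hq t ht) _ (abs_nonneg _) hη0.le
      rw [abs_of_nonneg (by linarith [ht.1])]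
      linarith [ht.2]) (by
      simp [hx0]) (by
      rw [inv_mul_cancel₀ hw1.ne']
      simp) (by positivity) Real.pi ⟨hpi.le, le_rfl⟩
  rw [← hE] at key
  have k1 := abs_le.1 (key.1.trans hη2)
  have k2 := abs_le.1 (key.2.trans hη2)
  have e1 : w Real.pi = w1 0 * ((w1 0)⁻¹ * w Real.pi) := by field_simp
  have e2 : w1 Real.pi = w1 0 * ((w1 0)⁻¹ * w1 Real.pi) := by field_simp
  obtain ⟨x, hx⟩ : ∃ x, x = (w1 0)⁻¹ * w Real.pi := ⟨_, rfl⟩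
  obtain ⟨y, hy⟩ : ∃ y, y = (w1 0)⁻¹ * w1 Real.pi := ⟨_, rfl⟩
  rw [← hx] at e1 k1
  rw [← hy] at e2 k2
  rw [e1, e2]
  have hx1 : 0 < x := by linarith [k1.1]
  have hy1 : 1 / 2 ≤ y := by linarith [k2.1]
  refine ⟨by positivity, by positivity, ?_⟩
  have : x ≤ 2 * (d + 4) * y := by nlinarith [k1.2]
  nlinarith


open Classical in
noncomputable def dq (p u v : ℝ) : ℝ := if u = v then fd p u else (ff p u - ff p v) / (u - v)

theorem dq_mul (p u v : ℝ) : ff p u - ff p v = dq p u v * (u - v) := by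
  unfold dq
  split_ifs with h
  · rw [h]; ring
  · rw [div_mul_cancel₀ _ (sub_ne_zero.2 h)]

theorem dq_ex {p u v : ℝ} (hp : 1 < p) (hu : u ≤ mm p) (hv : v ≤ mm p) :
    ∃ ξ ∈ uIcc u v, dq p u v = fd p ξ := by
  unfold dq
  split_ifs with h
  · exact ⟨u, left_mem_uIcc, rfl⟩
  · obtain ⟨ξ, h1, h2⟩ := ff_mvt hp hu hv
    refine ⟨ξ, h1, ?_⟩
    rw [h2, mul_div_cancel_right₀ _ (sub_ne_zero.2 h)]

theorem dq_ge {p u v : ℝ} (hp : 1 < p) (hu : 0 ≤ u) (hv : 0 ≤ v) (hu' : u ≤ mm p) (hv' : v ≤ mm p) :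
    u ^ (p - 1) ≤ dq p u v := by
  unfold dq
  split_ifs with h
  · unfold fd
    rw [max_eq_right hu]
    have : 0 ≤ u ^ (p - 1) := by positivity
    nlinarith
  · exact dd_ge hp hu hv hu' hv' h

theorem uIcc_dist {x y z ρ : ℝ} {ξ : ℝ} (h : ξ ∈ uIcc x y) (hx : |z - x| ≤ ρ) (hy : |z - y| ≤ ρ) :
    |z - ξ| ≤ ρ := by
  have h1 := h.1
  have h2 := h.2
  rw [abs_le] at *
  rcases le_total x y with hh | hh
  · rw [inf_eq_left.2 hh] at h1; rw [sup_eq_right.2 hh] at h2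
    constructor <;> linarith
  · rw [inf_eq_right.2 hh] at h1; rw [sup_eq_left.2 hh] at h2
    constructor <;> linarith

theorem pos_sol (p : ℝ) (hp : 1 < p) (x y : ℝ) : ∃ u u1, Sol2 Real.pi (Fp p) u u1 ∧ u 0 = x ∧ u1 0 = y := by
  refine exists_sol (C := lf p) (B := mm p ^ p) Real.pi_pos.le (by linarith [lf_one hp])
    (Fp_lip hp) (fun x => ?_) (fun t x => ?_) x y
  · unfold Fp; fun_prop
  · unfold Fp
    rw [abs_neg, abs_mul, abs_of_nonneg (ff_nonneg p x)]
    have := Real.abs_sin_le_one t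
    have := ff_bdd hp x
    have := ff_nonneg p x
    nlinarith [abs_nonneg (Real.sin t)]

/-- two nonnegative ends imply nonneg -/
theorem pos_nn {p : ℝ} {u u1 : ℝ → ℝ} (hu : Sol2 Real.pi (Fp p) u u1) (h0 : 0 ≤ u 0)
    (h1 : 0 ≤ u Real.pi) : ∀ t ∈ Icc 0 Real.pi, 0 ≤ u t := by
  intro t ht
  have a1 := (pos_conc hu 0 t le_rfl ht.1 ht.2).2.2
  have a2 := (pos_conc hu t Real.pi ht.1 ht.2 le_rfl).2.1
  rcases le_total 0 (u1 t) with h | h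
  · nlinarith [mul_nonneg h ht.1]
  · nlinarith [mul_nonneg (neg_nonneg.2 h) (sub_nonneg.2 ht.2)]

theorem pos_L1 {p : ℝ} (hp : 1 < p) {u u1 : ℝ → ℝ} (hu : Sol2 Real.pi (Fp p) u u1) (h0 : 0 ≤ u 0)
    (h1 : 0 ≤ u Real.pi) (hx : u 0 ≤ 1) (hy : u1 0 ≤ kk p) :
    ∀ t ∈ Icc 0 Real.pi, u t ≤ m0 p ∧ |u1 t| ≤ m1 p := by
  have hnn := pos_nn hu h0 h1
  apply L1 hp hu _ hnn
  intro t ht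
  have : u t ≤ mm p := by
    have a1 := (pos_conc hu 0 t le_rfl ht.1 ht.2).2.1
    have h4 : t ≤ 4 := ht.2.trans Real.pi_le_four
    have hk := kk_one p
    unfold mm
    nlinarith [mul_le_mul_of_nonneg_right hy ht.1]
  unfold Fp
  rw [ff_eq (hnn t ht) this]

theorem mk_arc {p : ℝ} (hp : 1 < p) {u u1 : ℝ → ℝ} (hu : Sol2 Real.pi (Fp p) u u1) (h0 : u 0 = 0)
    (h1 : u Real.pi = 0) (hd : 0 < u1 0) : Arc p u u1 := by
  have cc := pos_conc hu
  have hnn := pos_nn hu h0.ge h1.ge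
  refine ⟨hu, h0, h1, fun t ht => ?_⟩
  refine lt_of_le_of_ne (hnn t (Ioo_subset_Icc_self ht)) (fun he => ?_)
  have a1 := (cc 0 t le_rfl ht.1.le ht.2.le).2.2
  have a2 := (cc t Real.pi ht.1.le ht.2.le le_rfl).2.1
  have b1 : u1 t ≤ 0 := by
    by_contra hh; push Not at hh; nlinarith [mul_pos hh ht.1]
  have b2 : 0 ≤ u1 t := by
    by_contra hh; push Not at hh; nlinarith [mul_pos (neg_pos.2 hh) (sub_pos.2 ht.2)]
  have b3 : u1 t = 0 := le_antisymm b1 b2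
  have b4 : ∀ s ∈ Icc 0 t, u s = 0 := by
    intro s hs
    have c1 := (cc s t hs.1 hs.2 ht.2.le).2.2
    have c2 := hnn s ⟨hs.1, hs.2.trans ht.2.le⟩
    rw [b3] at c1
    linarith
  have := lbd (c := 0) ht.1.le (fun s hs => (hu s ⟨hs.1, hs.2.trans ht.2.le⟩).2) (by
    intro s hs
    rw [b4 s hs]
    unfold Fp
    rw [ff_zero hp le_rfl]; simp)
  linarith

theorem small_pos {p : ℝ} (hp : 1 < p) : ∃ ys > 0, ys < kk p ∧ ∀ u u1, Sol2 Real.pi (Fp p) u u1 →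
    u 0 = 0 → u1 0 = ys → 0 < u Real.pi := by
  have hc : ContinuousAt (fun y => 16 * fd p (4 * y)) 0 :=
    (continuous_const.mul ((fd_cont hp).comp (continuous_const.mul continuous_id))).continuousAt
  have h0 : 16 * fd p (4 * 0) < 1 := by
    unfold fd; simp [Real.zero_rpow (by linarith : p - 1 ≠ 0)]
  have e1 : ∀ᶠ y in 𝓝[>] (0:ℝ), 16 * fd p (4 * y) < 1 ∧ y < kk p :=
    ((hc.eventually (gt_mem_nhds h0)).and (gt_mem_nhds (by linarith [kk_one p]))).filter_mono
      nhdsWithin_le_nhds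
  obtain ⟨y, ⟨hy1, hy2⟩, hy3⟩ := (e1.and self_mem_nhdsWithin).exists
  have hy3 : 0 < y := hy3
  refine ⟨y, hy3, hy2, fun u u1 hu h0 h1 => ?_⟩
  have hpi := Real.pi_pos
  have hpi4 := Real.pi_le_four
  have cc := pos_conc hu
  have hub : ∀ t ∈ Icc 0 Real.pi, u t ≤ 4 * y := by
    intro t ht
    have := (cc 0 t le_rfl ht.1 ht.2).2.1
    rw [h0, h1] at this
    nlinarith [ht.2]
  have hff : 4 * ff p (4 * y) < y := by
    obtain ⟨ξ, h1, h2⟩ := ff_mvt hp (x := 4 * y) (y := 0) (by unfold mm; linarith)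
      (by linarith [mm_one p])
    rw [ff_zero hp le_rfl] at h2
    rw [uIcc_of_ge (by linarith)] at h1
    have h3 := fd_mono hp h1.2
    nlinarith
  have hu1 : 0 < u1 Real.pi := by
    have := lbd (c := - ff p (4 * y)) hpi.le (fun t ht => (hu t ht).2) (by
      intro t ht
      have a1 := ff_mono hp (hub t ht)
      have a2 := Real.sin_le_one t
      have a3 := sin_nn ht
      have a4 := ff_nonneg p (u t)
      unfold Fp
      nlinarith)
    rw [h1] at this
    have := ff_nonneg p (4 * y)
    nlinarith
  have := (cc 0 Real.pi le_rfl hpi.le le_rfl).2.2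
  rw [h0] at this
  nlinarith

theorem transv {p : ℝ} (hp : 1 < p) {U U1 : ℝ → ℝ} (h : Arc p U U1) (hk : U1 0 < kk p) :
    ∃ r > 0, ∀ y, y ≠ U1 0 → |y - U1 0| < r → ∀ u u1, Sol2 Real.pi (Fp p) u u1 → u 0 = 0 → u1 0 = y →
      u Real.pi * (y - U1 0) < 0 := by
  obtain ⟨δ, hδ, B, hB, hL5⟩ := L5 hp h hk.le
  obtain ⟨ρ, hρ, hρ1, hfu⟩ := fd_unif hp δ hδ
  have hpi := Real.pi_pos
  obtain ⟨E, hE⟩ : ∃ E, E = Real.exp (lf p * Real.pi) := ⟨_, rfl⟩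
  have hE0 : 0 < E := by rw [hE]; positivity
  refine ⟨min (ρ / E) (kk p - U1 0), lt_min (by positivity) (by linarith), ?_⟩
  intro y hne hy u u1 hu h0 h1
  have hy1 := lt_of_lt_of_le hy (min_le_left _ _)
  have hy2 := (abs_lt.1 (lt_of_lt_of_le hy (min_le_right _ _))).2
  have hd := h.d0
  have hclose : ∀ t ∈ Icc 0 Real.pi, |U t - u t| ≤ ρ := by
    intro t ht
    have := (sol_dep (D := |y - U1 0|) (lf_one hp) (fun t _ => Fp_lip hp t) hu h.sol
      (by rw [h0, h.z0]; simp) (by rw [h1]) t ht).1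
    rw [← hE] at this
    rw [lt_div_iff₀ hE0] at hy1
    rw [abs_sub_comm]
    linarith
  have hub : ∀ t ∈ Icc 0 Real.pi, u t ≤ mm p := by
    intro t ht
    have a1 := (pos_conc hu 0 t le_rfl ht.1 ht.2).2.1
    have h4 : t ≤ 4 := ht.2.trans Real.pi_le_four
    have hk := kk_one p
    rw [h0, h1] at a1
    unfold mm
    nlinarith [mul_le_mul_of_nonneg_right (by linarith : y ≤ kk p) ht.1]
  have hyne : y - U1 0 ≠ 0 := sub_ne_zero.2 hne
  have hlin : Lin (fun t => Real.sin t * dq p (u t) (U t)) (fun t => (y - U1 0)⁻¹ * (u t - U t))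
      (fun t => (y - U1 0)⁻¹ * (u1 t - U1 t)) := by
    intro t ht
    refine ⟨((hu t ht).1.sub (h.sol t ht).1).const_mul _, ?_⟩
    refine (((hu t ht).2.sub (h.sol t ht).2).const_mul _).congr_deriv ?_
    have := dq_mul p (u t) (U t)
    unfold Fp
    linear_combination (-(Real.sin t) * (y - U1 0)⁻¹) * this
  have := (hL5 _ _ _ hlin (by
    intro t ht
    obtain ⟨ξ, hξ, he⟩ := dq_ex hp (hub t ht) (h.lt_mm hk.le ht).le
    have a1 := hfu (U t) ⟨h.nn ht, (h.lt_mm hk.le ht).le⟩ ξ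
      (uIcc_dist hξ (hclose t ht) (by simpa using hρ.le))
    rw [he, ← mul_sub, abs_mul]
    have := Real.abs_sin_le_one t
    nlinarith [abs_nonneg (Real.sin t), abs_nonneg (fd p ξ - fd p (U t))])
    (by simp [h0, h.z0]) (by simp only [h0, h1, h.z0]; rw [inv_mul_cancel₀ hyne]; simp; exact hδ.le)
    (by simp only [h1]; rw [inv_mul_cancel₀ hyne]; norm_num)).1
  simp only [h.zp, sub_zero] at this
  have e : u Real.pi * (y - U1 0) = (y - U1 0) ^ 2 * ((y - U1 0)⁻¹ * u Real.pi) := by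
    field_simp
  rw [e]
  exact mul_neg_of_pos_of_neg (by positivity) this

theorem L3 {p : ℝ} (hp : 1 < p) : ∃ A U U1, Arc p U U1 ∧ U1 0 = A ∧ 0 < A ∧ A ≤ m1 p ∧
    ∀ η > 0, ∃ κ > 0, ∀ y u u1, Sol2 Real.pi (Fp p) u u1 → u 0 = 0 → u1 0 = y →
      (η ≤ y → y ≤ A - η → κ ≤ u Real.pi) ∧ (A + η ≤ y → y ≤ kk p → u Real.pi ≤ -κ) := by
  have hpi := Real.pi_pos
  choose u u1 hu h0 h1 using pos_sol p hp 0
  obtain ⟨X, hX⟩ : ∃ X : ℝ → ℝ, X = fun y => u y Real.pi := ⟨_, rfl⟩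
  have huniq : ∀ y v v1, Sol2 Real.pi (Fp p) v v1 → v 0 = 0 → v1 0 = y → v Real.pi = X y := by
    intro y v v1 hv hv0 hv1
    rw [hX]
    exact (sol_unique (lf_one hp) (fun t _ => Fp_lip hp t) hv (hu y) (by rw [hv0, h0])
      (by rw [hv1, h1]) Real.pi ⟨hpi.le, le_rfl⟩).1
  have hXc : Continuous X := by
    obtain ⟨E, hE⟩ : ∃ E, E = Real.exp (lf p * Real.pi) := ⟨_, rfl⟩
    have hE0 : 0 < E := by rw [hE]; positivity
    have : LipschitzWith ⟨E, hE0.le⟩ X := by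
      apply LipschitzWith.of_dist_le_mul
      intro y y'
      rw [Real.dist_eq, Real.dist_eq, hX]
      have := (sol_dep (D := |y - y'|) (lf_one hp) (fun t _ => Fp_lip hp t) (hu y) (hu y')
        (by rw [h0, h0]; simp) (by rw [h1, h1]) Real.pi ⟨hpi.le, le_rfl⟩).1
      rw [← hE, mul_comm] at this
      exact this
    exact this.continuous
  have hbig : ∀ y, m1 p < y → y ≤ kk p → X y < 0 := by
    intro y hy1 hy2
    by_contra hh
    push Not at hh
    rw [hX] at hh
    have := (pos_L1 hp (hu y) (h0 y).ge hh (by rw [h0]; norm_num) (by rw [h1]; exact hy2) 0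
      ⟨le_rfl, hpi.le⟩).2
    rw [h1] at this
    linarith [(abs_le.1 this).2]
  have htr : ∀ y0, 0 < y0 → y0 ≤ kk p → X y0 = 0 → y0 ≤ m1 p ∧ ∃ r > 0, ∀ y, y ≠ y0 → |y - y0| < r →
      X y * (y - y0) < 0 := by
    intro y0 hy0 hyk hz
    have hm : y0 ≤ m1 p := by
      by_contra hh; push Not at hh
      linarith [hbig y0 hh hyk]
    refine ⟨hm, ?_⟩
    rw [hX] at hz
    have harc := mk_arc hp (hu y0) (h0 y0) hz (by rw [h1]; exact hy0)
    obtain ⟨r, hr, h⟩ := transv hp harc (by rw [h1]; linarith [m1_lt_kk p])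
    rw [h1] at h
    refine ⟨r, hr, fun y a b => ?_⟩
    have := h y a b _ _ (hu y) (h0 y) (h1 y)
    rw [hX]; exact this
  obtain ⟨ys, hys, hysk, hsm⟩ := small_pos hp
  have hXs : 0 < X ys := by rw [hX]; exact hsm _ _ (hu ys) (h0 ys) (h1 ys)
  have hXk : X (kk p) < 0 := hbig _ (m1_lt_kk p) le_rfl
  obtain ⟨A, hA, hAz⟩ : ∃ A ∈ Icc ys (kk p), X A = 0 := by
    have := intermediate_value_Icc' hysk.le hXc.continuousOn
    exact this ⟨hXk.le, hXs.le⟩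
  have hA0 : 0 < A := lt_of_lt_of_le hys hA.1
  obtain ⟨hAm, rA, hrA, htA⟩ := htr A hA0 hA.2 hAz
  have hneg : ∀ y, A < y → y ≤ kk p → X y < 0 := by
    intro y hy hyk
    by_contra hh
    push Not at hh
    obtain ⟨a, ha⟩ : ∃ a, a = A + min (rA / 2) ((y - A) / 2) := ⟨_, rfl⟩
    have hmi : 0 < min (rA / 2) ((y - A) / 2) := lt_min (by linarith) (by linarith)
    have ha1 : A < a := by linarith
    have ha2 : a < y := by have := min_le_right (rA / 2) ((y - A) / 2); linarith
    have ha3 : X a < 0 := by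
      have := htA a ha1.ne' (by
        rw [abs_of_pos (by linarith)]; have := min_le_left (rA / 2) ((y - A) / 2); linarith)
      by_contra h; push Not at h
      nlinarith [mul_nonneg h (sub_pos.2 ha1).le]
    obtain ⟨s, hs, hs0, hs1⟩ := first_cross ha2.le hXc.continuousOn ha3.le hh
    have hsa : a < s := lt_of_le_of_ne hs.1 (by rintro rfl; linarith)
    obtain ⟨_, r, hr, ht⟩ := htr s (by linarith) (by linarith [hs.2]) hs0
    obtain ⟨b, hb⟩ : ∃ b, b = s - min (r / 2) (s - a) := ⟨_, rfl⟩
    have hmi : 0 < min (r / 2) (s - a) := lt_min (by linarith) (by linarith)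
    have c1 := min_le_left (r / 2) (s - a)
    have c2 := min_le_right (r / 2) (s - a)
    have c3 := hs1 b ⟨by linarith, by linarith⟩
    have c4 := ht b (by linarith) (by rw [abs_of_neg (by linarith)]; linarith)
    nlinarith [mul_nonneg (neg_nonneg.2 c3) (by linarith : 0 ≤ s - b)]
  have hpos : ∀ y, 0 < y → y < A → 0 < X y := by
    intro y hy hyk
    by_contra hh
    push Not at hh
    obtain ⟨a, ha⟩ : ∃ a, a = A - min (rA / 2) ((A - y) / 2) := ⟨_, rfl⟩
    have hmi : 0 < min (rA / 2) ((A - y) / 2) := lt_min (by linarith) (by linarith)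
    have ha1 : a < A := by linarith
    have ha2 : y < a := by have := min_le_right (rA / 2) ((A - y) / 2); linarith
    have ha3 : 0 < X a := by
      have := htA a ha1.ne (by
        rw [abs_of_neg (by linarith)]; have := min_le_left (rA / 2) ((A - y) / 2); linarith)
      by_contra h; push Not at h
      nlinarith [mul_nonneg (neg_nonneg.2 h) (sub_pos.2 ha1).le]
    obtain ⟨s, hs, hs0, hs1⟩ := last_cross ha2.le hXc.continuousOn hh ha3.le
    have hsa : s < a := lt_of_le_of_ne hs.2 (by rintro rfl; linarith)
    obtain ⟨_, r, hr, ht⟩ := htr s (by linarith [hs.1]) (by linarith [hs.2, hA.2]) hs0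
    obtain ⟨b, hb⟩ : ∃ b, b = s + min (r / 2) (a - s) := ⟨_, rfl⟩
    have hmi : 0 < min (r / 2) (a - s) := lt_min (by linarith) (by linarith)
    have c1 := min_le_left (r / 2) (a - s)
    have c2 := min_le_right (r / 2) (a - s)
    have c3 := hs1 b ⟨by linarith, by linarith⟩
    have c4 := ht b (by linarith) (by rw [abs_of_pos (by linarith)]; linarith)
    nlinarith [mul_nonneg c3 (by linarith : 0 ≤ b - s)]
  have hcomp : ∀ (Y : ℝ → ℝ) (a b : ℝ), Continuous Y → (∀ y ∈ Icc a b, 0 < Y y) →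
      ∃ κ > 0, ∀ y ∈ Icc a b, κ ≤ Y y := by
    intro Y a b hY hp
    rcases (Icc a b).eq_empty_or_nonempty with he | hne
    · exact ⟨1, one_pos, fun y hy => by simp [he] at hy⟩
    · obtain ⟨y, hy, hm⟩ := isCompact_Icc.exists_isMinOn hne hY.continuousOn
      exact ⟨Y y, hp y hy, fun z hz => hm hz⟩
  have hAz' : u A Real.pi = 0 := by rw [hX] at hAz; exact hAz
  refine ⟨A, u A, u1 A, mk_arc hp (hu A) (h0 A) hAz' (by rw [h1]; exact hA0), h1 A, hA0, hAm, ?_⟩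
  intro η hη
  obtain ⟨κ1, hκ1, hk1⟩ := hcomp X η (A - η) hXc
    (fun y hy => hpos y (by linarith [hy.1]) (by linarith [hy.2]))
  obtain ⟨κ2, hκ2, hk2⟩ := hcomp (fun y => - X y) (A + η) (kk p) hXc.neg
    (fun y hy => by have := hneg y (by linarith [hy.1]) hy.2; linarith)
  refine ⟨min κ1 κ2, lt_min hκ1 hκ2, ?_⟩
  intro y v v1 hv hv0 hv1
  rw [huniq y v v1 hv hv0 hv1]
  refine ⟨fun a b => (min_le_left _ _).trans (hk1 y ⟨a, b⟩), fun a b => ?_⟩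
  have := hk2 y ⟨a, b⟩
  have := min_le_right κ1 κ2
  linarith


theorem L7w {q w w1 : ℝ → ℝ} (hw : Lin q w w1) (hq : ∀ t ∈ Icc 0 Real.pi, q t ≤ 0)
    (h0 : 0 ≤ w 0) (h1 : 0 < w1 0) : ∀ t ∈ Icc 0 Real.pi, 0 ≤ w t ∧ w1 0 ≤ w1 t := by
  intro t ht
  rcases eq_or_lt_of_le ht.1 with he | hlt
  · rw [← he]; exact ⟨h0, le_rfl⟩
  have := sturmW (α := 0) (β := Real.pi) (z := fun _ => 1) (z1 := fun _ => 0) (z2 := fun _ => 0) hw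
    (fun t _ => ⟨hasDerivAt_const _ _, hasDerivAt_const _ _⟩) (fun _ _ => zero_le_one) h0
    (by simpa using h1) (by
      intro t ht h
      nlinarith [mul_nonneg (neg_nonneg.2 (hq t ht)) h]) t ⟨hlt, ht.2⟩
  simp only [mul_one, mul_zero, sub_zero] at this
  exact ⟨this.1.le, this.2⟩

theorem lin_conv {q w w1 : ℝ → ℝ} (hw : Lin q w w1) (hq : ∀ t ∈ Icc 0 Real.pi, q t ≤ 0)
    (h0 : ∀ t ∈ Icc 0 Real.pi, 0 ≤ w t) : w 0 + w1 0 * Real.pi ≤ w Real.pi ∧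
      w Real.pi ≤ w 0 + w1 Real.pi * Real.pi := by
  have := (conv_bd hw (by
    intro t ht
    nlinarith [mul_nonneg (neg_nonneg.2 (hq t ht)) (h0 t ht)]) 0 Real.pi le_rfl Real.pi_pos.le le_rfl).2
  simpa using this

theorem L7 {q w w1 : ℝ → ℝ} {c : ℝ} (hw : Lin q w w1) (hq : ∀ t ∈ Icc 0 Real.pi, q t ≤ 0)
    (h0 : 0 ≤ w 0) (h1 : 0 < w1 0) (hc0 : 0 ≤ c) (hc : w 0 ≤ c * w1 0) :
    0 < w Real.pi ∧ 0 < w1 Real.pi ∧ w Real.pi ≤ (c + 4) * w1 Real.pi ∧ w 0 ≤ w Real.pi := by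
  have hpi := Real.pi_pos
  have hpi4 := Real.pi_le_four
  have a := L7w hw hq h0 h1
  have b := lin_conv hw hq (fun t ht => (a t ht).1)
  have a1 := (a Real.pi ⟨hpi.le, le_rfl⟩).2
  have := mul_pos h1 hpi
  refine ⟨by linarith [b.1], by linarith, ?_, by linarith [b.1]⟩
  nlinarith [b.2, mul_le_mul_of_nonneg_left a1 hc0]

theorem L8 {q r w w1 u u1 : ℝ → ℝ} {A ε : ℝ} (hw : Lin q w w1) (hu : Lin r u u1)
    (hqr : ∀ t ∈ Icc 0 Real.pi, q t ≤ r t) (hr : ∀ t ∈ Icc 0 Real.pi, r t ≤ 0)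
    (hun : ∀ t ∈ Icc 0 Real.pi, 0 ≤ u t)
    (h0 : 0 ≤ w 0) (h1 : 0 < w1 0) (hA : 0 < A) (hu0 : u1 0 ≤ A / 4) (hu1 : A / 2 ≤ u1 Real.pi)
    (hε : u Real.pi ≤ ε) : w Real.pi ≤ 4 * ε / A * w1 Real.pi := by
  have hpi := Real.pi_pos
  have hq : ∀ t ∈ Icc 0 Real.pi, q t ≤ 0 := fun t ht => (hqr t ht).trans (hr t ht)
  have a := L7w hw hq h0 h1
  obtain ⟨b1, b2, b3, b4⟩ := L7 (c := w 0 / w1 0) hw hq h0 h1 (by positivity)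
    (by rw [div_mul_cancel₀ _ h1.ne'])
  have := lbd (c := 0) hpi.le (g := fun t => w1 t * u t - w t * u1 t)
    (g' := fun t => -(q t * w t) * u t - w t * (-(r t * u t))) (by
      intro t ht
      have a1 := hw t ht
      have a2 := hu t ht
      refine ((a1.2.mul a2.1).sub (a1.1.mul a2.2)).congr_deriv ?_
      ring) (by
      intro t ht
      have := mul_nonneg (mul_nonneg (a t ht).1 (hun t ht)) (sub_nonneg.2 (hqr t ht))
      linarith)
  simp only [zero_mul, add_zero] at this
  have c1 : 0 ≤ w1 0 * u 0 := mul_nonneg h1.le (hun 0 ⟨le_rfl, hpi.le⟩)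
  have c2 : w 0 * u1 0 ≤ w 0 * (A / 4) := mul_le_mul_of_nonneg_left hu0 h0
  have c3 : w Real.pi * (A / 2) ≤ w Real.pi * u1 Real.pi := mul_le_mul_of_nonneg_left hu1 b1.le
  have c4 : w1 Real.pi * u Real.pi ≤ w1 Real.pi * ε := mul_le_mul_of_nonneg_left hε b2.le
  have c5 : w 0 * (A / 4) ≤ w Real.pi * (A / 4) := mul_le_mul_of_nonneg_right b4 (by linarith)
  rw [div_mul_eq_mul_div, le_div_iff₀ hA]
  linarith

theorem L9 {q r w w1 u u1 : ℝ → ℝ} {A ε B β : ℝ} (hw : Lin q w w1) (hu : Lin r u u1)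
    (hqr : ∀ t ∈ Icc 0 Real.pi, q t ≤ r t) (hr : ∀ t ∈ Icc 0 Real.pi, r t ≤ 0)
    (hun : ∀ t ∈ Icc 0 Real.pi, 0 ≤ u t)
    (h0 : 0 < w 0) (h1 : -(B * w 0) ≤ w1 0) (hA : 0 < A) (hB : 0 < B) (hβ : 0 < β) (hε0 : 0 < ε)
    (hu0 : u1 0 ≤ -β) (he0 : u 0 ≤ ε)
    (hε : u Real.pi ≤ ε) (hs1 : B * ε ≤ β / 2) (hs2 : ε ≤ β / 8) :
    0 < w Real.pi ∧ 0 < w1 Real.pi ∧ w Real.pi ≤ 12 * w1 Real.pi ∧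
      (A / 2 ≤ u1 Real.pi → w Real.pi ≤ 4 * ε / A * w1 Real.pi) := by
  have hpi := Real.pi_pos
  have hpi3 := Real.pi_gt_three
  have hpi4 := Real.pi_le_four
  have hq : ∀ t ∈ Icc 0 Real.pi, q t ≤ 0 := fun t ht => (hqr t ht).trans (hr t ht)
  have hu00 := hun 0 ⟨le_rfl, hpi.le⟩
  have huπ := hun Real.pi ⟨hpi.le, le_rfl⟩
  have hW : β / 2 * w 0 ≤ w1 0 * u 0 - w 0 * u1 0 := by
    have e1 : -(B * w 0) * u 0 ≤ w1 0 * u 0 := mul_le_mul_of_nonneg_right h1 hu00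
    have e2 : B * w 0 * u 0 ≤ B * w 0 * ε := mul_le_mul_of_nonneg_left he0 (by positivity)
    have e3 : w 0 * (B * ε) ≤ w 0 * (β / 2) := mul_le_mul_of_nonneg_left hs1 h0.le
    have e4 : w 0 * u1 0 ≤ w 0 * (-β) := mul_le_mul_of_nonneg_left hu0 h0.le
    linarith
  have hst := sturmW (α := 0) (β := Real.pi) hw hu hun h0.le
    (lt_of_lt_of_le (by positivity) hW) (by
      intro t ht h
      have := mul_nonneg (mul_nonneg h (hun t ht)) (sub_nonneg.2 (hqr t ht))
      linarith)
  have hwn : ∀ t ∈ Icc 0 Real.pi, 0 ≤ w t := by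
    intro t ht
    rcases eq_or_lt_of_le ht.1 with he | hlt
    · rw [← he]; exact h0.le
    · exact (hst t ⟨hlt, ht.2⟩).1.le
  obtain ⟨k1, k2⟩ := hst Real.pi ⟨hpi, le_rfl⟩
  have cu := (lin_conv hu hr hun).2
  have cw := (lin_conv hw hq hwn).2
  have hup : -ε ≤ u1 Real.pi := by
    by_contra hh; push Not at hh
    nlinarith
  have hk : β / 2 * w 0 ≤ w1 Real.pi * u Real.pi + ε * w Real.pi := by
    nlinarith [mul_le_mul_of_nonneg_left hup k1.le]
  have hmain : 0 < w1 Real.pi ∧ w Real.pi ≤ 12 * w1 Real.pi := by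
    rcases le_or_gt (2 * w 0) (w Real.pi) with hc | hc
    · have d1 : w Real.pi / 2 ≤ w1 Real.pi * Real.pi := by linarith
      have d2 : 0 < w1 Real.pi := by
        by_contra hh; push Not at hh
        nlinarith
      exact ⟨d2, by nlinarith⟩
    · have d1 : β / 4 * w 0 ≤ w1 Real.pi * u Real.pi := by
        nlinarith [mul_le_mul_of_nonneg_left hc.le hε0.le, mul_le_mul_of_nonneg_right hs2 h0.le]
      have d2 : 0 < w1 Real.pi := by
        by_contra hh; push Not at hh
        nlinarith [mul_nonneg (neg_nonneg.2 hh) huπ, mul_pos hβ h0]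
      refine ⟨d2, ?_⟩
      have d3 : w1 Real.pi * u Real.pi ≤ w1 Real.pi * (β / 8) :=
        mul_le_mul_of_nonneg_left (hε.trans hs2) d2.le
      have d4 : β * (2 * w 0) ≤ β * w1 Real.pi := by linarith
      have d5 := le_of_mul_le_mul_left d4 hβ
      linarith
  refine ⟨k1, hmain.1, hmain.2, fun hu1 => ?_⟩
  have c3 : w Real.pi * (A / 2) ≤ w Real.pi * u1 Real.pi := mul_le_mul_of_nonneg_left hu1 k1.le
  have c4 : w1 Real.pi * u Real.pi ≤ w1 Real.pi * ε := mul_le_mul_of_nonneg_left hε hmain.1.le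
  rw [div_mul_eq_mul_div, le_div_iff₀ hA]
  have : 0 < β / 2 * w 0 := by positivity
  have := mul_pos hmain.1 hε0
  linarith

noncomputable def pp (f : ℝ → ℝ) (j : ℕ) : ℝ → ℝ := fun t => f (t + 2 * Real.pi * j)
noncomputable def nn (f : ℝ → ℝ) (j : ℕ) : ℝ → ℝ := fun t => f (t + (2 * Real.pi * j + Real.pi))

theorem pp_nn (f : ℝ → ℝ) (j : ℕ) : pp f j Real.pi = nn f j 0 := by
  unfold pp nn; congr 1; ring
theorem nn_pp (f : ℝ → ℝ) (j : ℕ) : nn f j Real.pi = pp f (j + 1) 0 := by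
  unfold pp nn; congr 1; push_cast; ring

theorem uniq_core {k : ℕ} (hk : 1 ≤ k) {S : ℕ → Prop} {A ε B β δ η0 c : ℝ} {Q : ℝ → ℝ}
    {q qn rn : ℕ → ℝ → ℝ} {w w1 u u1 : ℝ → ℝ}
    (hA : 0 < A) (hB : 0 < B) (hβ : 0 < β) (hε0 : 0 < ε) (hδ : 0 < δ)
    (hL5 : ∀ q w w1, Lin q w w1 →
      (∀ t ∈ Icc 0 Real.pi, |q t - Q t| ≤ δ) → 0 ≤ w 0 → w 0 ≤ δ * w1 0 →
      0 < w1 0 → w Real.pi < 0 ∧ |w1 Real.pi| ≤ B * |w Real.pi|)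
    (hL6 : ∀ q w w1, Lin q w w1 →
      (∀ t ∈ Icc 0 Real.pi, |q t| ≤ η0) → ∀ d, 0 ≤ d → d ≤ c → 0 ≤ w 0 → w 0 ≤ d * w1 0 →
      0 < w1 0 → 0 < w Real.pi ∧ 0 < w1 Real.pi ∧ w Real.pi ≤ 2 * (d + 4) * w1 Real.pi)
    (hc : 12 * 3 ^ k ≤ c) (hs1 : B * ε ≤ β / 2) (hs2 : ε ≤ β / 8) (hs3 : 4 * ε / A ≤ δ)
    (hpos : ∀ j, 2 * j + 1 ≤ k → Lin (q j) (pp w j) (pp w1 j))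
    (hqS : ∀ j, 2 * j + 1 ≤ k → S j → ∀ t ∈ Icc 0 Real.pi, |q j t - Q t| ≤ δ)
    (hqN : ∀ j, 2 * j + 1 ≤ k → ¬ S j → ∀ t ∈ Icc 0 Real.pi, |q j t| ≤ η0)
    (hAS : ∀ j, 2 * j + 1 ≤ k → S j → A / 2 ≤ pp u1 j 0)
    (hneg : ∀ j, 2 * j + 2 ≤ k → Lin (qn j) (nn w j) (nn w1 j))
    (hnegu : ∀ j, 2 * j + 2 ≤ k → Lin (rn j) (nn u j) (nn u1 j))
    (hqr : ∀ j, 2 * j + 2 ≤ k → ∀ t ∈ Icc 0 Real.pi, qn j t ≤ rn j t ∧ rn j t ≤ 0 ∧ 0 ≤ nn u j t)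
    (hue : ∀ j, 2 * j + 2 ≤ k → nn u j 0 ≤ ε ∧ nn u j Real.pi ≤ ε)
    (hnS : ∀ j, 2 * j + 2 ≤ k → S j → nn u1 j 0 ≤ -β)
    (hnN : ∀ j, 2 * j + 2 ≤ k → ¬ S j → nn u1 j 0 ≤ A / 4)
    (hw0 : pp w 0 0 = 0) (hend1 : ∀ j, k = 2 * j + 1 → pp w j Real.pi = 0)
    (hend2 : ∀ j, k = 2 * j + 2 → nn w j Real.pi = 0) : pp w1 0 0 = 0 := by
  by_contra hne
  have P : ∀ j, 2 * j + 1 ≤ k → (∃ σ : ℝ, 0 ≤ σ * pp w j 0 ∧ 0 < σ * pp w1 j 0 ∧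
      (S j → σ * pp w j 0 ≤ δ * (σ * pp w1 j 0)) ∧
      (¬ S j → σ * pp w j 0 ≤ 12 * 3 ^ j * (σ * pp w1 j 0))) →
      ∃ σ : ℝ, 0 < σ * pp w j Real.pi ∧
      (S j → -(B * (σ * pp w j Real.pi)) ≤ σ * pp w1 j Real.pi) ∧
      (¬ S j → 0 < σ * pp w1 j Real.pi ∧
        σ * pp w j Real.pi ≤ 2 * (12 * 3 ^ j + 4) * (σ * pp w1 j Real.pi)) := by
    intro j hj ⟨σ, a1, a2, a3, a4⟩
    have hl := (hpos j hj).smul σ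
    by_cases hS : S j
    · obtain ⟨b1, b2⟩ := hL5 _ _ _ hl (hqS j hj hS) a1 (a3 hS) a2
      refine ⟨-σ, by linarith, fun _ => ?_, fun h => absurd hS h⟩
      rw [abs_of_neg b1] at b2
      have := (abs_le.1 b2).2
      linarith
    · have hjk : (12 : ℝ) * 3 ^ j ≤ c := by
        have : (3 : ℝ) ^ j ≤ 3 ^ k := pow_le_pow_right₀ (by norm_num) (by omega)
        linarith
      obtain ⟨b1, b2, b3⟩ := hL6 _ _ _ hl (hqN j hj hS) (12 * 3 ^ j) (by positivity) hjk a1 (a4 hS) a2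
      exact ⟨σ, b1, fun h => absurd h hS, fun _ => ⟨b2, b3⟩⟩
  have N : ∀ j, 2 * j + 2 ≤ k → (∃ σ : ℝ, 0 < σ * pp w j Real.pi ∧
      (S j → -(B * (σ * pp w j Real.pi)) ≤ σ * pp w1 j Real.pi) ∧
      (¬ S j → 0 < σ * pp w1 j Real.pi ∧
        σ * pp w j Real.pi ≤ 2 * (12 * 3 ^ j + 4) * (σ * pp w1 j Real.pi))) →
      ∃ σ : ℝ, 0 < σ * nn w j Real.pi ∧ 0 < σ * nn w1 j Real.pi ∧
      (A / 2 ≤ nn u1 j Real.pi → σ * nn w j Real.pi ≤ δ * (σ * nn w1 j Real.pi)) ∧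
      (σ * nn w j Real.pi ≤ 12 * 3 ^ (j + 1) * (σ * nn w1 j Real.pi)) := by
    intro j hj ⟨σ, a1, a2, a3⟩
    have hl := (hneg j hj).smul σ
    rw [pp_nn] at a1 a2 a3
    rw [pp_nn] at a2 a3
    have h3 : (1 : ℝ) ≤ 3 ^ j := one_le_pow₀ (by norm_num)
    refine ⟨σ, ?_⟩
    by_cases hS : S j
    · obtain ⟨b1, b2, b3, b4⟩ := L9 (A := A) hl (hnegu j hj) (fun t ht => (hqr j hj t ht).1)
        (fun t ht => (hqr j hj t ht).2.1) (fun t ht => (hqr j hj t ht).2.2) a1 (a2 hS) hA hB hβ hε0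
        (hnS j hj hS) (hue j hj).1 (hue j hj).2 hs1 hs2
      refine ⟨b1, b2, fun h => (b4 h).trans (mul_le_mul_of_nonneg_right hs3 b2.le), b3.trans ?_⟩
      apply mul_le_mul_of_nonneg_right _ b2.le
      rw [pow_succ]; linarith
    · obtain ⟨c1, c2⟩ := a3 hS
      obtain ⟨b1, b2, b3, b4⟩ := L7 (c := 2 * (12 * 3 ^ j + 4)) hl
        (fun t ht => (hqr j hj t ht).1.trans (hqr j hj t ht).2.1) a1.le c1 (by positivity) c2
      refine ⟨b1, b2, fun h => ?_, b3.trans ?_⟩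
      · exact (L8 hl (hnegu j hj) (fun t ht => (hqr j hj t ht).1)
          (fun t ht => (hqr j hj t ht).2.1) (fun t ht => (hqr j hj t ht).2.2) a1.le c1 hA
          (hnN j hj hS) h (hue j hj).2).trans (mul_le_mul_of_nonneg_right hs3 b2.le)
      · apply mul_le_mul_of_nonneg_right _ b2.le
        rw [pow_succ]; linarith
  have I : ∀ j, 2 * j + 1 ≤ k → (∃ σ : ℝ, 0 ≤ σ * pp w j 0 ∧ 0 < σ * pp w1 j 0 ∧
      (S j → σ * pp w j 0 ≤ δ * (σ * pp w1 j 0)) ∧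
      (¬ S j → σ * pp w j 0 ≤ 12 * 3 ^ j * (σ * pp w1 j 0))) := by
    intro j
    induction j with
    | zero =>
      intro _
      have h2 : 0 < pp w1 0 0 * pp w1 0 0 := by
        rcases lt_or_gt_of_ne hne with h | h
        · exact mul_pos_of_neg_of_neg h h
        · exact mul_pos h h
      refine ⟨pp w1 0 0, by rw [hw0, mul_zero], h2, ?_, ?_⟩
      · intro _; rw [hw0, mul_zero]; positivity
      · intro _; rw [hw0, mul_zero]; positivity
    | succ j ih =>
      intro hj
      obtain ⟨σ, b1, b2, b3, b4⟩ := N j (by omega) (P j (by omega) (ih (by omega)))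
      rw [nn_pp] at b1 b2 b3 b4
      rw [nn_pp] at b3 b4
      rw [nn_pp] at b3
      exact ⟨σ, b1.le, b2, fun h => b3 (hAS (j + 1) hj h), fun _ => b4⟩
  rcases Nat.even_or_odd' k with ⟨i, hi | hi⟩
  · obtain ⟨j, rfl⟩ : ∃ j, i = j + 1 := ⟨i - 1, by omega⟩
    obtain ⟨σ, b1, _⟩ := N j (by omega) (P j (by omega) (I j (by omega)))
    rw [hend2 j (by omega)] at b1
    simp at b1
  · obtain ⟨σ, b1, _⟩ := P i (by omega) (I i (by omega))
    rw [hend1 i (by omega)] at b1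
    simp at b1


noncomputable def om (μ t : ℝ) : ℝ :=
  (|Real.sin t| / 2 + Real.sin t / 2) - μ * (|Real.sin t| / 2 - Real.sin t / 2)

noncomputable def GF (p μ : ℝ) : ℝ → ℝ → ℝ := fun t x => -(om μ t * ff p x)

theorem om_pp {μ t : ℝ} (j : ℕ) (ht : t ∈ Icc 0 Real.pi) : om μ (t + 2 * Real.pi * j) = Real.sin t := by
  have : Real.sin (t + 2 * Real.pi * j) = Real.sin t := by
    rw [mul_comm (2 * Real.pi)]; exact Real.sin_add_nat_mul_two_pi t j
  unfold om
  rw [this, abs_of_nonneg (sin_nn ht)]; ring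

theorem om_nn {μ t : ℝ} (j : ℕ) (ht : t ∈ Icc 0 Real.pi) :
    om μ (t + (2 * Real.pi * j + Real.pi)) = -(μ * Real.sin t) := by
  have : Real.sin (t + (2 * Real.pi * j + Real.pi)) = -Real.sin t := by
    have e : t + (2 * Real.pi * j + Real.pi) = (t + Real.pi) + j * (2 * Real.pi) := by ring
    rw [e, Real.sin_add_nat_mul_two_pi, Real.sin_add_pi]
  unfold om
  rw [this, abs_neg, abs_of_nonneg (sin_nn ht)]; ring

theorem om_bd (μ t : ℝ) : |om μ t| ≤ 1 + |μ| := by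
  unfold om
  have h1 := Real.abs_sin_le_one t
  have h2 := abs_nonneg (Real.sin t)
  have a1 : |(|Real.sin t| / 2 + Real.sin t / 2)| ≤ 1 := by
    rw [abs_le]; have := neg_abs_le (Real.sin t); have := le_abs_self (Real.sin t)
    constructor <;> linarith
  have a2 : |(|Real.sin t| / 2 - Real.sin t / 2)| ≤ 1 := by
    rw [abs_le]; have := neg_abs_le (Real.sin t); have := le_abs_self (Real.sin t)
    constructor <;> linarith
  refine (abs_sub _ _).trans ?_
  rw [abs_mul]
  nlinarith [abs_nonneg μ]

theorem om_cont (μ : ℝ) : Continuous (om μ) := by unfold om; fun_prop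

theorem pp_mem {k j : ℕ} (h : 2 * j + 1 ≤ k) {t : ℝ} (ht : t ∈ Icc 0 Real.pi) :
    t + 2 * Real.pi * j ∈ Icc 0 (k * Real.pi) := by
  have hpi := Real.pi_pos
  have h' : (2 * j + 1 : ℝ) ≤ k := by exact_mod_cast h
  refine ⟨by have := ht.1; positivity, ?_⟩
  nlinarith [ht.2]

theorem nn_mem {k j : ℕ} (h : 2 * j + 2 ≤ k) {t : ℝ} (ht : t ∈ Icc 0 Real.pi) :
    t + (2 * Real.pi * j + Real.pi) ∈ Icc 0 (k * Real.pi) := by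
  have hpi := Real.pi_pos
  have h' : (2 * j + 2 : ℝ) ≤ k := by exact_mod_cast h
  refine ⟨by have := ht.1; positivity, ?_⟩
  nlinarith [ht.2]

theorem cover {k : ℕ} {t : ℝ} (ht : t ∈ Icc 0 (k * Real.pi)) (hk : 1 ≤ k) :
    ∃ j : ℕ, (2 * j + 1 ≤ k ∧ ∃ s ∈ Icc 0 Real.pi, t = s + 2 * Real.pi * j) ∨
      (2 * j + 2 ≤ k ∧ ∃ s ∈ Icc 0 Real.pi, t = s + (2 * Real.pi * j + Real.pi)) := by
  have hpi := Real.pi_pos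
  obtain ⟨n, hn, hs⟩ : ∃ n : ℕ, n + 1 ≤ k ∧ ∃ s ∈ Icc 0 Real.pi, t = s + n * Real.pi := by
    rcases eq_or_lt_of_le ht.2 with he | hlt
    · obtain ⟨n, rfl⟩ : ∃ n, k = n + 1 := ⟨k - 1, by omega⟩
      refine ⟨n, le_rfl, Real.pi, ⟨hpi.le, le_rfl⟩, ?_⟩
      rw [he]; push_cast; ring
    · have h0 : 0 ≤ t / Real.pi := div_nonneg ht.1 hpi.le
      refine ⟨⌊t / Real.pi⌋₊, ?_, t - ⌊t / Real.pi⌋₊ * Real.pi, ⟨?_, ?_⟩, by ring⟩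
      · have : ⌊t / Real.pi⌋₊ < k := by
          rw [Nat.floor_lt h0, div_lt_iff₀ hpi]; exact hlt
        omega
      · have := Nat.floor_le h0
        rw [le_div_iff₀ hpi] at this
        linarith
      · have := Nat.lt_floor_add_one (t / Real.pi)
        rw [div_lt_iff₀ hpi] at this
        linarith
  obtain ⟨s, hs, he⟩ := hs
  rcases Nat.even_or_odd' n with ⟨j, hj | hj⟩
  · refine ⟨j, Or.inl ⟨by omega, s, hs, ?_⟩⟩
    rw [he, hj]; push_cast; ring
  · refine ⟨j, Or.inr ⟨by omega, s, hs, ?_⟩⟩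
    rw [he, hj]; push_cast; ring

theorem glin_pp {k j : ℕ} {μ : ℝ} {g w w1 : ℝ → ℝ} (h : 2 * j + 1 ≤ k)
    (hw : Sol2 (k * Real.pi) (fun t x => -(om μ t * g t * x)) w w1) :
    Lin (fun t => Real.sin t * pp g j t) (pp w j) (pp w1 j) := by
  intro t ht
  have := hw _ (pp_mem h ht)
  simp only [om_pp j ht] at this
  exact ⟨this.1.comp_add_const t _, this.2.comp_add_const t _⟩

theorem glin_nn {k j : ℕ} {μ : ℝ} {g w w1 : ℝ → ℝ} (h : 2 * j + 2 ≤ k)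
    (hw : Sol2 (k * Real.pi) (fun t x => -(om μ t * g t * x)) w w1) :
    Lin (fun t => -(μ * Real.sin t) * nn g j t) (nn w j) (nn w1 j) := by
  intro t ht
  have := hw _ (nn_mem h ht)
  simp only [om_nn j ht] at this
  exact ⟨this.1.comp_add_const t _, this.2.comp_add_const t _⟩

theorem glob_pp {k j : ℕ} {μ p : ℝ} {w w1 : ℝ → ℝ} (h : 2 * j + 1 ≤ k)
    (hw : Sol2 (k * Real.pi) (GF p μ) w w1) : Sol2 Real.pi (Fp p) (pp w j) (pp w1 j) := by
  intro t ht
  have := hw _ (pp_mem h ht)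
  simp only [GF, om_pp j ht] at this
  exact ⟨this.1.comp_add_const t _, this.2.comp_add_const t _⟩

theorem glob_nn {k j : ℕ} {μ p : ℝ} {w w1 : ℝ → ℝ} (h : 2 * j + 2 ≤ k)
    (hw : Sol2 (k * Real.pi) (GF p μ) w w1) : Sol2 Real.pi (Fn p μ) (nn w j) (nn w1 j) := by
  intro t ht
  have := hw _ (nn_mem h ht)
  simp only [GF, om_nn j ht] at this
  refine ⟨this.1.comp_add_const t _, (this.2.comp_add_const t _).congr_deriv ?_⟩
  unfold Fn nn
  ring

theorem GF_lip {p : ℝ} (hp : 1 < p) (μ t x y : ℝ) :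
    |GF p μ t x - GF p μ t y| ≤ (1 + |μ|) * lf p * |x - y| := by
  unfold GF
  have : -(om μ t * ff p x) - -(om μ t * ff p y) = -(om μ t * (ff p x - ff p y)) := by ring
  rw [this, abs_neg, abs_mul, mul_assoc]
  exact mul_le_mul (om_bd μ t) (ff_lip hp x y) (abs_nonneg _) (by positivity)

theorem GC_one {p : ℝ} (hp : 1 < p) (μ : ℝ) : 1 ≤ (1 + |μ|) * lf p := by
  have := lf_one hp
  nlinarith [abs_nonneg μ]

/-- all constants -/
structure Data (p : ℝ) (k : ℕ) where
  A : ℝ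
  U : ℝ → ℝ
  δ : ℝ
  B : ℝ
  η0 : ℝ
  β : ℝ
  η : ℝ
  ε : ℝ
  μ0 : ℝ
  A0 : 0 < A
  Am : A ≤ m1 p
  U0 : ∀ t ∈ Icc 0 Real.pi, 0 ≤ U t
  δ0 : 0 < δ
  B0 : 0 < B
  β0 : 0 < β
  ηp : 0 < η
  ε0 : 0 < ε
  μp : 0 < μ0
  hL5 : ∀ q w w1, Lin q w w1 →
      (∀ t ∈ Icc 0 Real.pi, |q t - Real.sin t * fd p (U t)| ≤ δ) → 0 ≤ w 0 → w 0 ≤ δ * w1 0 →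
      0 < w1 0 → w Real.pi < 0 ∧ |w1 Real.pi| ≤ B * |w Real.pi|
  hL6 : ∀ q w w1, Lin q w w1 →
      (∀ t ∈ Icc 0 Real.pi, |q t| ≤ η0) → ∀ d, 0 ≤ d → d ≤ 12 * 3 ^ k → 0 ≤ w 0 → w 0 ≤ d * w1 0 →
      0 < w1 0 → 0 < w Real.pi ∧ 0 < w1 Real.pi ∧ w Real.pi ≤ 2 * (d + 4) * w1 Real.pi
  η1 : η ≤ 1
  ηA : η ≤ A / 4
  close : ∀ u u1, Sol2 Real.pi (Fp p) u u1 → |u 0| ≤ ε → |u1 0 - A| ≤ η →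
    (∀ t ∈ Icc 0 Real.pi, ∀ ξ, |U t - ξ| ≤ |U t - u t| → |fd p ξ - fd p (U t)| ≤ δ) ∧ u1 Real.pi ≤ -β
  small : fd p (5 * η) ≤ η0
  εη : ε ≤ η
  dich : ∀ u u1, Sol2 Real.pi (Fp p) u u1 → 0 ≤ u 0 → u 0 ≤ ε →
    (η ≤ u1 0 → u1 0 ≤ A - η → ε ≤ u Real.pi) ∧ (A + η ≤ u1 0 → u1 0 ≤ kk p → u Real.pi ≤ -ε)
  s1 : B * ε ≤ β / 2
  s2 : ε ≤ β / 8
  s3 : 4 * ε / A ≤ δ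
  neg : ∀ μ ≥ μ0, ∀ u u1,
    Sol2 Real.pi (Fn p μ) u u1 → (-kk p ≤ u1 0 → ε ≤ u 0 → kk p < u1 Real.pi ∧ m0 p < u Real.pi) ∧
      (u1 Real.pi ≤ kk p → ε ≤ u Real.pi → m0 p < u 0)

theorem data_exists {p : ℝ} (hp : 1 < p) (k : ℕ) : Nonempty (Data p k) := by
  have hpi := Real.pi_pos
  obtain ⟨A, U, U1, harc, hUA, hA0, hAm, hdich⟩ := L3 hp
  have hAk : U1 0 ≤ kk p := by rw [hUA]; linarith [m1_lt_kk p]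
  obtain ⟨δ, hδ, B, hB, hL5⟩ := L5 hp harc hAk
  obtain ⟨η0, hη0, hL6⟩ := L6 (12 * 3 ^ k) (by positivity)
  obtain ⟨ρ, hρ, hρ1, hfu⟩ := fd_unif hp δ hδ
  obtain ⟨β, hβ⟩ : ∃ β, β = -U1 Real.pi / 2 := ⟨_, rfl⟩
  have hβ0 : 0 < β := by have := harc.dpi; linarith
  obtain ⟨E, hE⟩ : ∃ E, E = Real.exp (lf p * Real.pi) := ⟨_, rfl⟩
  have hE0 : 0 < E := by rw [hE]; positivity
  obtain ⟨η, ⟨⟨g1, g2, g3⟩, g4, g5⟩, g0⟩ : ∃ η, ((fd p (5 * η) < η0 ∧ η < 1 ∧ η < A / 4) ∧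
      η < ρ / E ∧ η < β / E) ∧ 0 < η := by
    have hc : ContinuousAt (fun y => fd p (5 * y)) 0 :=
      ((fd_cont hp).comp (continuous_const.mul continuous_id)).continuousAt
    have h0 : fd p (5 * 0) < η0 := by
      unfold fd; simpa [Real.zero_rpow (by linarith : p - 1 ≠ 0)] using hη0
    have e1 : ∀ᶠ η in 𝓝[>] (0:ℝ), (fd p (5 * η) < η0 ∧ η < 1 ∧ η < A / 4) ∧
      η < ρ / E ∧ η < β / E :=
      (((hc.eventually (gt_mem_nhds h0)).and ((gt_mem_nhds one_pos).and
        (gt_mem_nhds (by positivity)))).and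
        ((gt_mem_nhds (by positivity)).and (gt_mem_nhds (by positivity)))).filter_mono
        nhdsWithin_le_nhds
    exact (e1.and self_mem_nhdsWithin).exists
  obtain ⟨κ, hκ, hdi⟩ := hdich η g0
  obtain ⟨ε, ⟨⟨f1, f2⟩, f3, f4, f5⟩, f6, f0⟩ : ∃ ε, ((ε < η ∧ ε < κ / 2) ∧ ε < κ / 2 / E ∧
      ε < β / 8 ∧ ε < β / 2 / B) ∧ ε < δ * A / 4 ∧ 0 < ε := by
    have e1 : ∀ᶠ ε in 𝓝[>] (0:ℝ), ((ε < η ∧ ε < κ / 2) ∧ ε < κ / 2 / E ∧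
      ε < β / 8 ∧ ε < β / 2 / B) ∧ ε < δ * A / 4 :=
      ((((gt_mem_nhds g0).and (gt_mem_nhds (by positivity))).and
        ((gt_mem_nhds (by positivity)).and
        ((gt_mem_nhds (by positivity)).and (gt_mem_nhds (by positivity))))).and
          (gt_mem_nhds (by positivity))).filter_mono
        nhdsWithin_le_nhds
    obtain ⟨ε, h, h'⟩ := (e1.and self_mem_nhdsWithin).exists
    exact ⟨ε, h.1, h.2, h'⟩
  obtain ⟨μ0, hμ0, hneg⟩ := negLarge' hp f0
  rw [lt_div_iff₀ hE0] at g4 g5 f3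
  rw [lt_div_iff₀ hB] at f5
  refine ⟨⟨A, U, δ, B, η0, β, η, ε, μ0, hA0, hAm, fun t ht => harc.nn ht, hδ, hB, hβ0, g0, f0, hμ0,
    hL5, hL6, g2.le, g3.le, ?_, g1.le, f1.le, ?_, by linarith, f4.le, ?_, hneg⟩⟩
  · intro u u1 hu h0 h1
    have key := sol_dep (D := η) (lf_one hp) (fun t _ => Fp_lip hp t) hu harc.sol
      (by rw [harc.z0, sub_zero]; linarith) (by rw [hUA]; exact h1)
    rw [← hE] at key
    constructor
    · intro t ht ξ hξ
      apply hfu (U t) ⟨harc.nn ht, (harc.lt_mm hAk ht).le⟩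
      have := (key t ht).1
      rw [abs_sub_comm] at this
      linarith
    · have := (abs_le.1 (key Real.pi ⟨hpi.le, le_rfl⟩).2).2
      linarith
  · intro u u1 hu h0 h1
    obtain ⟨v, v1, hv, hv0, hv1⟩ := pos_sol p hp 0 (u1 0)
    have key := (sol_dep (D := ε) (lf_one hp) (fun t _ => Fp_lip hp t) hu hv
      (by rw [hv0, sub_zero, abs_of_nonneg h0]; linarith) (by rw [hv1]; simpa using f0.le) Real.pi
        ⟨hpi.le, le_rfl⟩).1
    rw [← hE] at key
    have key := abs_le.1 key
    have := hdi (u1 0) v v1 hv hv0 hv1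
    refine ⟨fun a b => ?_, fun a b => ?_⟩
    · have := this.1 a b; linarith [key.1]
    · have := this.2 a b; linarith [key.2]
  · rw [div_le_iff₀ hA0]; linarith

structure PS (p μ : ℝ) (k : ℕ) (u u1 : ℝ → ℝ) : Prop where
  sol : Sol2 (k * Real.pi) (GF p μ) u u1
  z0 : u 0 = 0
  zk : u (k * Real.pi) = 0
  nng : ∀ t ∈ Icc 0 (k * Real.pi), 0 ≤ u t
  le : ∀ t ∈ Icc 0 (k * Real.pi), u t ≤ m0 p

theorem end_pp (f : ℝ → ℝ) {k j : ℕ} (h : k = 2 * j + 1) : pp f j Real.pi = f (k * Real.pi) := by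
  unfold pp; congr 1; rw [h]; push_cast; ring
theorem end_nn (f : ℝ → ℝ) {k j : ℕ} (h : k = 2 * j + 2) : nn f j Real.pi = f (k * Real.pi) := by
  unfold nn; congr 1; rw [h]; push_cast; ring

theorem pi_mem : Real.pi ∈ Icc 0 Real.pi := ⟨Real.pi_pos.le, le_rfl⟩
theorem zero_mem : (0 : ℝ) ∈ Icc 0 Real.pi := ⟨le_rfl, Real.pi_pos.le⟩

theorem PS.d1 {p μ : ℝ} {k : ℕ} {u u1 : ℝ → ℝ} (hp : 1 < p) (h : PS p μ k u u1) {j : ℕ}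
    (hj : 2 * j + 1 ≤ k) : ∀ t ∈ Icc 0 Real.pi, |pp u1 j t| ≤ m1 p := by
  intro t ht
  refine (L1 hp (glob_pp hj h.sol) ?_ (fun t ht => h.nng _ (pp_mem hj ht)) t ht).2
  intro t ht
  unfold Fp
  have e : pp u j t = u (t + 2 * Real.pi * j) := rfl
  rw [e, ff_eq (h.nng _ (pp_mem hj ht)) ((h.le _ (pp_mem hj ht)).trans
    ((m0_lt_kk p).trans (kk_lt_mm p)).le)]

theorem PS.cls {p μ : ℝ} {k : ℕ} {u u1 : ℝ → ℝ} (hp : 1 < p) (d : Data p k) (hμ : d.μ0 ≤ μ)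
    (h : PS p μ k u u1) :
    (∀ j, 2 * j + 2 ≤ k → nn u j 0 < d.ε ∧ nn u j Real.pi < d.ε) ∧
    (∀ j, 2 * j + 1 ≤ k → pp u j 0 < d.ε ∧ pp u j Real.pi < d.ε ∧
      (d.A / 2 ≤ pp u1 j 0 → |pp u1 j 0 - d.A| ≤ d.η) ∧
      (¬ d.A / 2 ≤ pp u1 j 0 → pp u1 j 0 ≤ d.η)) := by
  have hmk := m1_lt_kk p
  have hN : ∀ j, 2 * j + 2 ≤ k → nn u j 0 < d.ε ∧ nn u j Real.pi < d.ε := by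
    intro j hj
    have hn := d.neg μ hμ _ _ (glob_nn hj h.sol)
    constructor
    · by_contra hh
      push Not at hh
      have h1 := h.d1 hp (j := j) (by omega) Real.pi pi_mem
      rw [pp_nn] at h1
      have h2 := (hn.1 (by linarith [(abs_le.1 h1).1]) hh).2
      have h3 := h.le _ (nn_mem hj pi_mem)
      unfold nn at h2
      linarith
    · rcases Nat.lt_or_ge k (2 * j + 3) with hk | hk
      · rw [end_nn u (by omega : k = 2 * j + 2), h.zk]; exact d.ε0
      by_contra hh
      push Not at hh
      have h1 := h.d1 hp (j := j + 1) (by omega) 0 zero_mem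
      rw [← nn_pp] at h1
      have h2 := (hn.2 (by linarith [(abs_le.1 h1).2]) hh)
      have h3 := h.le _ (nn_mem hj zero_mem)
      unfold nn at h2
      linarith
  refine ⟨hN, fun j hj => ?_⟩
  have e1 : pp u j 0 < d.ε := by
    cases j with
    | zero => unfold pp; simp [h.z0, d.ε0]
    | succ j => rw [← nn_pp]; exact (hN j (by omega)).2
  have e2 : pp u j Real.pi < d.ε := by
    rcases Nat.lt_or_ge k (2 * j + 2) with hk | hk
    · rw [end_pp u (by omega : k = 2 * j + 1), h.zk]; exact d.ε0
    · rw [pp_nn]; exact (hN j hk).1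
  have h1 := (abs_le.1 (h.d1 hp hj 0 zero_mem)).2
  have dd := d.dich _ _ (glob_pp hj h.sol) (h.nng _ (pp_mem hj zero_mem)) e1.le
  have hηA := d.ηA
  have hA0 := d.A0
  refine ⟨e1, e2, fun hS => ?_, fun hS => ?_⟩
  · rw [abs_le]
    constructor
    · by_contra hh
      push Not at hh
      linarith [dd.1 (by linarith) (by linarith)]
    · by_contra hh
      push Not at hh
      have a1 := dd.2 (by linarith) (by linarith)
      have a2 := h.nng _ (pp_mem hj pi_mem)
      unfold pp at a1
      linarith [d.ε0]
  · push Not at hS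
    by_contra hh
    push Not at hh
    linarith [dd.1 (by linarith) (by linarith)]

theorem uIcc_dist2 {x y z ξ : ℝ} (h : ξ ∈ uIcc x y) : |z - ξ| ≤ |z - x| ∨ |z - ξ| ≤ |z - y| := by
  rcases le_total |z - x| |z - y| with h1 | h1
  · right; exact uIcc_dist h h1 le_rfl
  · left; exact uIcc_dist h le_rfl h1

theorem uniq_g {p μ : ℝ} {k : ℕ} {u u1 v v1 g w w1 : ℝ → ℝ} (hp : 1 < p) (hk : 1 ≤ k) (d : Data p k)
    (hμ : d.μ0 ≤ μ) (hu : PS p μ k u u1) (hv : PS p μ k v v1)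
    (hcode : ∀ j, 2 * j + 1 ≤ k → (d.A / 2 ≤ pp u1 j 0 ↔ d.A / 2 ≤ pp v1 j 0))
    (hg1 : ∀ t ∈ Icc 0 (k * Real.pi), ∃ ξ ∈ uIcc (u t) (v t), g t = fd p ξ)
    (hg2 : ∀ t ∈ Icc 0 (k * Real.pi), (u t) ^ (p - 1) ≤ g t)
    (hw : Sol2 (k * Real.pi) (fun t x => -(om μ t * g t * x)) w w1)
    (hw0 : w 0 = 0) (hwk : w (k * Real.pi) = 0) : w1 0 = 0 := by
  have hpi := Real.pi_pos
  have hpi4 := Real.pi_le_four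
  have hμ0 : 0 < μ := d.μp.trans_le hμ
  have cu := hu.cls hp d hμ
  have cv := hv.cls hp d hμ
  have hA0 := d.A0
  have hηA := d.ηA
  have := uniq_core (S := fun j => d.A / 2 ≤ pp u1 j 0) (Q := fun t => Real.sin t * fd p (d.U t))
    (q := fun j t => Real.sin t * pp g j t) (qn := fun j t => -(μ * Real.sin t) * nn g j t)
    (rn := fun j t => -(μ * Real.sin t) * nn (fun t => (u t) ^ (p - 1)) j t)
    (w := w) (w1 := w1) (u := u) (u1 := u1) hk d.A0 d.B0 d.β0 d.ε0 d.δ0 d.hL5 d.hL6 le_rfl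
    d.s1 d.s2 d.s3 (fun j hj => glin_pp hj hw) ?_ ?_ (fun j hj h => h) (fun j hj => glin_nn hj hw)
    ?_ ?_ (fun j hj => ⟨(cu.1 j hj).1.le, (cu.1 j hj).2.le⟩) ?_ ?_ (by unfold pp; simp [hw0])
    (fun j hj => by rw [end_pp w hj, hwk]) (fun j hj => by rw [end_nn w hj, hwk])
  · unfold pp at this; simpa using this
  · intro j hj hS t ht
    rw [← mul_sub, abs_mul]
    obtain ⟨ξ, hξ, he⟩ := hg1 _ (pp_mem hj ht)
    have hb : |pp g j t - fd p (d.U t)| ≤ d.δ := by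
      unfold pp
      rw [he]
      have b0 : ∀ x x1, PS p μ k x x1 → pp x j 0 < d.ε → |pp x j 0| ≤ d.ε := by
        intro x x1 hx hxe
        rw [abs_of_nonneg (show 0 ≤ pp x j 0 from hx.nng _ (pp_mem hj zero_mem))]
        exact hxe.le
      have b1 := (d.close _ _ (glob_pp hj hu.sol) (b0 _ _ hu (cu.2 j hj).1)
        ((cu.2 j hj).2.2.1 hS)).1 t ht ξ
      have b2 := (d.close _ _ (glob_pp hj hv.sol) (b0 _ _ hv (cv.2 j hj).1)
        ((cv.2 j hj).2.2.1 ((hcode j hj).1 hS))).1 t ht ξ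
      rcases uIcc_dist2 (z := d.U t) hξ with h | h
      · exact b1 h
      · exact b2 h
    have := Real.abs_sin_le_one t
    nlinarith [abs_nonneg (Real.sin t), abs_nonneg (pp g j t - fd p (d.U t))]
  · intro j hj hS t ht
    obtain ⟨ξ, hξ, he⟩ := hg1 _ (pp_mem hj ht)
    have b0 : ∀ x x1, PS p μ k x x1 → pp x j 0 < d.ε → pp x1 j 0 ≤ d.η → pp x j t ≤ 5 * d.η := by
      intro x x1 hx h1 h2
      have := (pos_conc (glob_pp hj hx.sol) 0 t le_rfl ht.1 ht.2).2.1
      have := d.εη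
      have := d.ηp
      nlinarith [mul_le_mul_of_nonneg_right h2 ht.1, ht.2]
    have b1 := b0 _ _ hu (cu.2 j hj).1 ((cu.2 j hj).2.2.2 hS)
    have b2 := b0 _ _ hv (cv.2 j hj).1 ((cv.2 j hj).2.2.2 (fun h => hS ((hcode j hj).2 h)))
    have hb : fd p ξ ≤ d.η0 := by
      refine le_trans (fd_mono hp ?_) d.small
      have := hξ.2
      exact this.trans (sup_le b1 b2)
    have : pp g j t = fd p ξ := he
    rw [this, abs_mul, abs_of_nonneg (fd_nonneg hp ξ)]
    have := Real.abs_sin_le_one t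
    nlinarith [fd_nonneg hp ξ]
  · intro j hj
    have hs := glob_nn hj hu.sol
    intro t ht
    refine ⟨(hs t ht).1, (hs t ht).2.congr_deriv ?_⟩
    unfold Fn
    have hm := nn_mem hj ht
    have e : nn u j t = u (t + (2 * Real.pi * j + Real.pi)) := rfl
    rw [e, ff_eq (hu.nng _ hm) ((hu.le _ hm).trans ((m0_lt_kk p).trans (kk_lt_mm p)).le)]
    have : u (t + (2 * Real.pi * j + Real.pi)) ^ p = u (t + (2 * Real.pi * j + Real.pi)) ^ (p - 1) *
        u (t + (2 * Real.pi * j + Real.pi)) := by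
      rw [← Real.rpow_add_one' (hu.nng _ hm) (by linarith)]; ring_nf
    rw [this]
    simp only [nn]
    ring
  · intro j hj t ht
    have hm := nn_mem hj ht
    have a1 := hg2 _ hm
    have a2 := hu.nng _ hm
    have a3 := sin_nn ht
    have a4 : 0 ≤ μ * Real.sin t := by positivity
    refine ⟨?_, ?_, a2⟩
    · simp only [nn]
      have := mul_le_mul_of_nonneg_left a1 a4
      linarith
    · simp only [nn]
      have := mul_nonneg a4 (Real.rpow_nonneg a2 (p - 1))
      linarith
  · intro j hj hS
    rw [← pp_nn]
    have hj' : 2 * j + 1 ≤ k := by omega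
    exact (d.close _ _ (glob_pp hj' hu.sol) (by
      rw [abs_of_nonneg (show 0 ≤ pp u j 0 from hu.nng _ (pp_mem hj' zero_mem))]
      exact (cu.2 j hj').1.le) ((cu.2 j hj').2.2.1 hS)).2
  · intro j hj hS
    rw [← pp_nn]
    have hj' : 2 * j + 1 ≤ k := by omega
    have := (pos_conc (glob_pp hj' hu.sol) 0 Real.pi le_rfl hpi.le le_rfl).1
    linarith [(cu.2 j hj').2.2.2 hS]

theorem kpi_nn (k : ℕ) : 0 ≤ (k : ℝ) * Real.pi := by have := Real.pi_pos; positivity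

theorem PS.lm {p μ : ℝ} {k : ℕ} {u u1 : ℝ → ℝ} (h : PS p μ k u u1) :
    ∀ t ∈ Icc 0 (k * Real.pi), u t ≤ mm p :=
  fun t ht => (h.le t ht).trans ((m0_lt_kk p).trans (kk_lt_mm p)).le

theorem uniq_ps {p μ : ℝ} {k : ℕ} {u u1 v v1 : ℝ → ℝ} (hp : 1 < p) (hk : 1 ≤ k) (d : Data p k)
    (hμ : d.μ0 ≤ μ) (hu : PS p μ k u u1) (hv : PS p μ k v v1)
    (hcode : ∀ j, 2 * j + 1 ≤ k → (d.A / 2 ≤ pp u1 j 0 ↔ d.A / 2 ≤ pp v1 j 0)) :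
    ∀ t ∈ Icc 0 (k * Real.pi), u t = v t ∧ u1 t = v1 t := by
  have := uniq_g (g := fun t => dq p (u t) (v t)) (w := fun t => u t - v t) (w1 := fun t => u1 t - v1 t)
    hp hk d hμ hu hv hcode (fun t ht => dq_ex hp (hu.lm t ht) (hv.lm t ht))
    (fun t ht => dq_ge hp (hu.nng t ht) (hv.nng t ht) (hu.lm t ht) (hv.lm t ht)) (by
      intro t ht
      refine ⟨(hu.sol t ht).1.sub (hv.sol t ht).1,
        ((hu.sol t ht).2.sub (hv.sol t ht).2).congr_deriv ?_⟩
      have := dq_mul p (u t) (v t)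
      simp only [GF]
      linear_combination (-om μ t) * this) (by simp [hu.z0, hv.z0]) (by simp [hu.zk, hv.zk])
  exact sol_unique (GC_one hp μ) (fun t _ => GF_lip hp μ t) hu.sol hv.sol (by rw [hu.z0, hv.z0])
    (by simpa [sub_eq_zero] using this)

theorem ps_zero {p : ℝ} (hp : 1 < p) (μ : ℝ) (k : ℕ) : PS p μ k (fun _ => 0) (fun _ => 0) := by
  refine ⟨fun t _ => ⟨hasDerivAt_const _ _, ?_⟩, rfl, rfl, fun _ _ => le_rfl, fun _ _ => (m0_pos p).le⟩
  have : GF p μ t 0 = 0 := by unfold GF; rw [ff_zero hp le_rfl]; simp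
  rw [this]
  exact hasDerivAt_const _ _

theorem nondeg_ps {p μ : ℝ} {k : ℕ} {u u1 w w1 : ℝ → ℝ} (hp : 1 < p) (hk : 1 ≤ k) (d : Data p k)
    (hμ : d.μ0 ≤ μ) (hu : PS p μ k u u1)
    (hw : Sol2 (k * Real.pi) (fun t x => -(om μ t * fd p (u t) * x)) w w1)
    (hw0 : w 0 = 0) (hwk : w (k * Real.pi) = 0) : ∀ t ∈ Icc 0 (k * Real.pi), w t = 0 := by
  have h1 := uniq_g (g := fun t => fd p (u t)) hp hk d hμ hu hu (fun j _ => Iff.rfl)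
    (fun t _ => ⟨u t, left_mem_uIcc, rfl⟩) (by
      intro t ht
      unfold fd
      rw [max_eq_right (hu.nng t ht)]
      have : 0 ≤ u t ^ (p - 1) := Real.rpow_nonneg (hu.nng t ht) _
      nlinarith) hw hw0 hwk
  intro t ht
  refine (sol_unique (C := (1 + |μ|) * lf p) (GC_one hp μ) ?_ hw
    (z := fun _ => 0) (z1 := fun _ => 0) ?_ hw0 h1 t ht).1
  · intro t ht x y
    have : -(om μ t * fd p (u t) * x) - -(om μ t * fd p (u t) * y) =
      -(om μ t * (fd p (u t) * (x - y))) := by ring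
    rw [this, abs_neg, abs_mul, mul_assoc]
    apply mul_le_mul (om_bd μ t) _ (abs_nonneg _) (by positivity)
    rw [abs_mul, abs_of_nonneg (fd_nonneg hp _)]
    apply mul_le_mul_of_nonneg_right _ (abs_nonneg _)
    have := fd_mono hp (hu.lm t ht)
    refine this.trans (le_of_eq ?_)
    unfold fd lf
    rw [max_eq_right (by linarith [mm_one p])]
  · intro t _
    simp only [mul_zero, neg_zero]
    exact ⟨hasDerivAt_const _ _, hasDerivAt_const _ _⟩


theorem lin_after {p μ T : ℝ} (hp : 1 < p) {u u1 : ℝ → ℝ} (hu : Sol2 T (GF p μ) u u1) {c : ℝ}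
    (hc : c ∈ Icc 0 T) (h0 : u c ≤ 0) (h1 : u1 c ≤ 0) :
    ∀ t ∈ Icc c T, u t = u c + u1 c * (t - c) ∧ u1 t = u1 c := by
  have key := sol_unique (T := T - c) (F := fun t x => GF p μ (t + c) x) (w := fun t => u (t + c))
    (w1 := fun t => u1 (t + c)) (z := fun t => u c + u1 c * t) (z1 := fun _ => u1 c)
    (GC_one hp μ) (fun t _ => GF_lip hp μ (t + c)) ?_ ?_ (by simp) (by simp)
  · intro t ht
    have := key (t - c) ⟨by linarith [ht.1], by linarith [ht.2]⟩
    simpa using this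
  · intro t ht
    have := hu (t + c) ⟨by linarith [ht.1, hc.1], by linarith [ht.2]⟩
    exact ⟨this.1.comp_add_const t c, this.2.comp_add_const t c⟩
  · intro t ht
    have e : GF p μ (t + c) (u c + u1 c * t) = 0 := by
      unfold GF
      rw [ff_zero hp (by nlinarith [ht.1])]; simp
    refine ⟨?_, ?_⟩
    · simpa using ((hasDerivAt_id t).const_mul (u1 c)).const_add (u c)
    · simp only [e]; exact hasDerivAt_const _ _

theorem Sol2.contOn {T : ℝ} {F : ℝ → ℝ → ℝ} {u u1 : ℝ → ℝ} (hu : Sol2 T F u u1) {a b : ℝ} (ha : 0 ≤ a)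
    (hb : b ≤ T) : ContinuousOn u (Icc a b) :=
  fun t ht => (hu t ⟨ha.trans ht.1, ht.2.trans hb⟩).1.continuousAt.continuousWithinAt

theorem neg_after {p μ T : ℝ} (hp : 1 < p) {u u1 : ℝ → ℝ} (hu : Sol2 T (GF p μ) u u1) (h0 : u 0 = 0)
    {t : ℝ} (ht : t ∈ Icc 0 T) (hn : u t < 0) : ∀ s ∈ Icc t T, u s < 0 ∧ u1 s < 0 := by
  obtain ⟨s, hs, hs0, hs1⟩ := last_cross (φ := fun t => -u t) (c := 0) ht.1
    (hu.contOn le_rfl ht.2).neg (by simp [h0]) (by simpa using hn.le)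
  have hst : s < t := by
    rcases eq_or_lt_of_le hs.2 with h | h
    · rw [h] at hs0; simp at hs0; linarith
    · exact h
  obtain ⟨ξ, hξ, he⟩ := exists_hasDerivAt_eq_slope u u1 hst (hu.contOn hs.1 ht.2)
    (fun x hx => (hu x ⟨hs.1.trans hx.1.le, hx.2.le.trans ht.2⟩).1)
  have hx1 : u1 ξ < 0 := by
    rw [he]
    have : u s = 0 := by simpa using hs0
    rw [this]
    exact div_neg_of_neg_of_pos (by linarith) (by linarith)
  have hx0 : u ξ ≤ 0 := by have := hs1 ξ ⟨hξ.1.le, hξ.2.le⟩; linarith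
  intro r hr
  have := lin_after hp hu (c := ξ) ⟨hs.1.trans hξ.1.le, hξ.2.le.trans ht.2⟩ hx0 hx1.le r
    ⟨hξ.2.le.trans hr.1, hr.2⟩
  refine ⟨?_, by rw [this.2]; exact hx1⟩
  rw [this.1]
  nlinarith [hr.1, hξ.2]

theorem nn_before {p μ T : ℝ} (hp : 1 < p) {u u1 : ℝ → ℝ} (hu : Sol2 T (GF p μ) u u1) (h0 : u 0 = 0)
    {c : ℝ} (hc : c ≤ T) (hn : 0 ≤ u c) : ∀ s ∈ Icc 0 c, 0 ≤ u s := by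
  intro s hs
  by_contra hh
  push Not at hh
  linarith [(neg_after hp hu h0 ⟨hs.1, hs.2.trans hc⟩ hh c ⟨hs.2, hc⟩).1]

theorem hit_der {p μ T : ℝ} (hp : 1 < p) {u u1 : ℝ → ℝ} (hu : Sol2 T (GF p μ) u u1) (h0 : u 0 = 0)
    {c : ℝ} (hc0 : 0 < c) (hc : c ≤ T) (hn : u c = 0) : u1 c ≤ 0 :=
  deriv_nonpos_of_left hc0 (hu c ⟨hc0.le, hc⟩).1
    (fun s hs => by rw [hn]; exact nn_before hp hu h0 hc hn.ge s hs)

def Good {p : ℝ} {k : ℕ} (d : Data p k) (S : Set ℕ) (j : ℕ) (u u1 : ℝ → ℝ) : Prop :=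
  ∀ i < j, 0 ≤ pp u i 0 ∧ pp u i 0 ≤ d.ε ∧ pp u1 i 0 ≤ kk p ∧ 0 ≤ pp u i Real.pi ∧
    (i ∈ S → d.A - d.η ≤ pp u1 i 0) ∧ (i ∉ S → pp u1 i 0 ≤ d.η)

structure Fam (p μ : ℝ) (k : ℕ) where
  V : ℝ → ℝ → ℝ
  V1 : ℝ → ℝ → ℝ
  sol : ∀ α, Sol2 (k * Real.pi) (GF p μ) (V α) (V1 α)
  z0 : ∀ α, V α 0 = 0
  z1 : ∀ α, V1 α 0 = α

theorem fam_ex {p : ℝ} (hp : 1 < p) (μ : ℝ) (k : ℕ) : Nonempty (Fam p μ k) := by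
  have := fun α => exists_sol (T := k * Real.pi) (B := (1 + |μ|) * mm p ^ p) (kpi_nn k)
    (zero_le_one.trans (GC_one hp μ)) (GF_lip hp μ) (fun x => by
      unfold GF; exact ((om_cont μ).mul continuous_const).neg) (fun t x => by
      unfold GF
      rw [abs_neg, abs_mul, abs_of_nonneg (ff_nonneg p x)]
      exact mul_le_mul (om_bd μ t) (ff_bdd hp x) (ff_nonneg p x) (by positivity)) 0 α
  choose V V1 h using this
  exact ⟨⟨V, V1, fun α => (h α).1, fun α => (h α).2.1, fun α => (h α).2.2⟩⟩

theorem Fam.cont {p μ : ℝ} {k : ℕ} (hp : 1 < p) (f : Fam p μ k) {t : ℝ}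
    (ht : t ∈ Icc 0 (k * Real.pi)) :
    Continuous (fun α => f.V α t) ∧ Continuous (fun α => f.V1 α t) := by
  have key : ∀ α β, _ := fun α β => sol_dep (D := |α - β|) (GC_one hp μ)
    (fun t _ => GF_lip hp μ t) (f.sol α) (f.sol β) (by rw [f.z0, f.z0]; simp)
    (by rw [f.z1, f.z1]) t ht
  have aux : ∀ (g : ℝ → ℝ) (E : ℝ), 0 ≤ E → (∀ α β, |g α - g β| ≤ |α - β| * E) → Continuous g := by
    intro g E hE h
    refine LipschitzWith.continuous (K := ⟨E, hE⟩) (LipschitzWith.of_dist_le_mul ?_)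
    intro x y
    rw [Real.dist_eq, Real.dist_eq, mul_comm]
    exact h x y
  exact ⟨aux _ _ (Real.exp_pos _).le (fun α β => (key α β).1),
    aux _ _ (Real.exp_pos _).le (fun α β => (key α β).2)⟩

def PA {p μ : ℝ} {k : ℕ} (d : Data p k) (f : Fam p μ k) (S : Set ℕ) (j : ℕ) : Prop :=
  ∃ γ : ℝ → ℝ, Continuous γ ∧ (∀ s ∈ Icc (0:ℝ) 1, Good d S j (f.V (γ s)) (f.V1 (γ s)) ∧
    0 ≤ pp (f.V (γ s)) j 0 ∧ pp (f.V (γ s)) j 0 ≤ d.ε ∧ pp (f.V1 (γ s)) j 0 ≤ kk p) ∧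
    pp (f.V (γ 0)) j 0 = 0 ∧ pp (f.V1 (γ 0)) j 0 ≤ 0 ∧ pp (f.V1 (γ 1)) j 0 = kk p

def PB {p μ : ℝ} {k : ℕ} (d : Data p k) (f : Fam p μ k) (S : Set ℕ) (j : ℕ) : Prop :=
  ∃ γ : ℝ → ℝ, Continuous γ ∧ (∀ s ∈ Icc (0:ℝ) 1, Good d S (j + 1) (f.V (γ s)) (f.V1 (γ s))) ∧
    pp (f.V (γ 0)) j Real.pi = 0 ∧ d.ε ≤ pp (f.V (γ 1)) j Real.pi

theorem re_mem {a b s : ℝ} (hs : s ∈ Icc (0:ℝ) 1) : a + (b - a) * s ∈ uIcc a b := by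
  rcases le_total a b with h | h
  · rw [uIcc_of_le h]
    constructor <;> nlinarith [hs.1, hs.2]
  · rw [uIcc_of_ge h]
    constructor <;> nlinarith [hs.1, hs.2]

theorem PA_zero {p μ : ℝ} {k : ℕ} (d : Data p k) (f : Fam p μ k) (S : Set ℕ) : PA d f S 0 := by
  have hk := kk_one p
  refine ⟨fun s => kk p * s, by fun_prop, fun s hs => ⟨fun i hi => absurd hi (Nat.not_lt_zero i), ?_⟩, ?_⟩
  · simp only [pp, Nat.cast_zero, mul_zero, add_zero, f.z0, f.z1]
    refine ⟨le_rfl, d.ε0.le, ?_⟩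
    nlinarith [hs.2]
  · simp [pp, f.z0, f.z1]

theorem PA_PB {p μ : ℝ} {k : ℕ} (hp : 1 < p) (d : Data p k) (f : Fam p μ k) (S : Set ℕ) {j : ℕ}
    (hj : 2 * j + 1 ≤ k) (h : PA d f S j) : PB d f S j := by
  have hpi := Real.pi_pos
  obtain ⟨γ, hγ, hG, h0, h01, h1⟩ := h
  have cX : Continuous (fun s => pp (f.V (γ s)) j Real.pi) := (f.cont hp (pp_mem hj pi_mem)).1.comp hγ
  have cY : Continuous (fun s => pp (f.V1 (γ s)) j 0) := (f.cont hp (pp_mem hj zero_mem)).2.comp hγ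
  have hd := fun s (hs : s ∈ Icc (0:ℝ) 1) => d.dich _ _ (glob_pp hj (f.sol (γ s))) (hG s hs).2.1
    (hG s hs).2.2.1
  have hηA := d.ηA
  have hη := d.ηp
  have hη1 := d.η1
  have hA := d.A0
  have hAm := d.Am
  have hkk : kk p = m1 p + 1 := rfl
  have m0' : (0:ℝ) ∈ Icc (0:ℝ) 1 := ⟨le_rfl, zero_le_one⟩
  have m1' : (1:ℝ) ∈ Icc (0:ℝ) 1 := ⟨zero_le_one, le_rfl⟩
  have hε := d.ε0
  obtain ⟨s2, hs2, s1, hs1, hX2, hX1, hB⟩ : ∃ s2 ∈ Icc (0:ℝ) 1, ∃ s1 ∈ Icc (0:ℝ) 1,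
      pp (f.V (γ s2)) j Real.pi = 0 ∧ d.ε ≤ pp (f.V (γ s1)) j Real.pi ∧ ∀ s ∈ uIcc s2 s1,
      0 ≤ pp (f.V (γ s)) j Real.pi ∧ (j ∈ S → d.A - d.η ≤ pp (f.V1 (γ s)) j 0) ∧
        (j ∉ S → pp (f.V1 (γ s)) j 0 ≤ d.η) := by
    by_cases hS : j ∈ S
    · obtain ⟨s1, hs1, e1, g1⟩ := last_cross zero_le_one cY.continuousOn (c := d.A - d.η)
        (by linarith) (by rw [h1]; linarith)
      have X1 := (hd s1 hs1).1 (by linarith) (by linarith)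
      have Xe := (hd 1 m1').2 (by linarith) (by linarith)
      obtain ⟨s2, hs2, e2, g2⟩ := first_cross (φ := fun s => - pp (f.V (γ s)) j Real.pi) hs1.2
        cX.neg.continuousOn (c := 0) (by linarith) (by linarith)
      refine ⟨s2, ⟨hs1.1.trans hs2.1, hs2.2⟩, s1, hs1, by linarith, X1, fun s hs => ?_⟩
      rw [uIcc_of_ge hs2.1] at hs
      exact ⟨by linarith [g2 s hs], fun _ => g1 s ⟨hs.1, hs.2.trans hs2.2⟩, fun h => absurd hS h⟩
    · obtain ⟨s1, hs1, e1, g1⟩ := first_cross zero_le_one cY.continuousOn (c := d.η)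
        (by linarith) (by rw [h1]; linarith)
      have X1 := (hd s1 hs1).1 (by linarith) (by linarith)
      have Xe : pp (f.V (γ 0)) j Real.pi ≤ 0 := by
        have := (pos_conc (glob_pp hj (f.sol (γ 0))) 0 Real.pi le_rfl hpi.le le_rfl).2.1
        nlinarith
      obtain ⟨s2, hs2, e2, g2⟩ := last_cross hs1.1 cX.continuousOn (c := 0) Xe (by linarith)
      refine ⟨s2, ⟨hs2.1, hs2.2.trans hs1.2⟩, s1, hs1, e2, X1, fun s hs => ?_⟩
      rw [uIcc_of_le hs2.2] at hs
      exact ⟨g2 s hs, fun h => absurd h hS, fun _ => g1 s ⟨hs2.1.trans hs.1, hs.2⟩⟩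
  refine ⟨fun s => γ (s2 + (s1 - s2) * s), by fun_prop, ?_, ?_, ?_⟩
  · intro s hs
    have hm := re_mem (a := s2) (b := s1) hs
    have hm' := uIcc_subset_Icc hs2 hs1 hm
    intro i hi
    rcases Nat.lt_succ_iff_lt_or_eq.1 hi with hi | rfl
    · exact (hG _ hm').1 i hi
    · have := hG _ hm'
      exact ⟨this.2.1, this.2.2.1, this.2.2.2, hB _ hm⟩
  · simpa using hX2
  · simpa using hX1

theorem Data.ε1 {p : ℝ} {k : ℕ} (d : Data p k) : d.ε ≤ 1 := d.εη.trans d.η1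

theorem PB_PA {p μ : ℝ} {k : ℕ} (hp : 1 < p) (d : Data p k) (hμ : d.μ0 ≤ μ) (f : Fam p μ k) (S : Set ℕ)
    {j : ℕ} (hj : 2 * j + 2 ≤ k) (h : PB d f S j) : PA d f S (j + 1) := by
  have hpi := Real.pi_pos
  obtain ⟨γ, hγ, hG, h0, h1⟩ := h
  have hj1 : 2 * j + 1 ≤ k := by omega
  have cX : Continuous (fun s => nn (f.V (γ s)) j Real.pi) := (f.cont hp (nn_mem hj pi_mem)).1.comp hγ
  have cY : Continuous (fun s => nn (f.V1 (γ s)) j Real.pi) := (f.cont hp (nn_mem hj pi_mem)).2.comp hγ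
  have hn := fun s => d.neg μ hμ _ _ (glob_nn hj (f.sol (γ s)))
  have hL := fun s (hs : s ∈ Icc (0:ℝ) 1) => pos_L1 hp (glob_pp hj1 (f.sol (γ s)))
    (hG s hs j (by omega)).1 (hG s hs j (by omega)).2.2.2.1
    ((hG s hs j (by omega)).2.1.trans d.ε1) (hG s hs j (by omega)).2.2.1 Real.pi pi_mem
  have m0' : (0:ℝ) ∈ Icc (0:ℝ) 1 := ⟨le_rfl, zero_le_one⟩
  have m1' : (1:ℝ) ∈ Icc (0:ℝ) 1 := ⟨zero_le_one, le_rfl⟩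
  have hk1 := kk_one p
  have hmk := m1_lt_kk p
  -- start
  have cpos : 0 < 0 + (2 * Real.pi * j + Real.pi) := by positivity
  have epos : 0 < Real.pi + (2 * Real.pi * j + Real.pi) := by positivity
  rw [pp_nn] at h0 h1
  have hd0 : nn (f.V1 (γ 0)) j 0 ≤ 0 :=
    hit_der hp (f.sol (γ 0)) (f.z0 _) cpos (nn_mem hj zero_mem).2 h0
  have hlin := lin_after hp (f.sol (γ 0)) (nn_mem hj zero_mem) (le_of_eq h0) hd0
    (Real.pi + (2 * Real.pi * j + Real.pi)) ⟨by linarith, (nn_mem hj pi_mem).2⟩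
  have X0 : nn (f.V (γ 0)) j Real.pi ≤ 0 := by
    have e := hlin.1
    unfold nn at h0 hd0 ⊢
    rw [e, h0]
    nlinarith
  have Y0 : nn (f.V1 (γ 0)) j Real.pi ≤ 0 := by
    have e := hlin.2
    unfold nn at h0 hd0 ⊢
    rw [e]; exact hd0
  have Y1 : kk p < nn (f.V1 (γ 1)) j Real.pi := by
    refine ((hn 1).1 ?_ h1).1
    have := (hL 1 m1').2
    rw [pp_nn] at this
    linarith [(abs_le.1 this).1]
  obtain ⟨s1, hs1, e1, g1⟩ := first_cross zero_le_one cY.continuousOn (c := kk p)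
    (by linarith) (by linarith)
  have X1 : 0 ≤ nn (f.V (γ s1)) j Real.pi := by
    by_contra hh
    push Not at hh
    have := (neg_after hp (f.sol (γ s1)) (f.z0 _) (nn_mem hj pi_mem) hh _
      ⟨le_rfl, (nn_mem hj pi_mem).2⟩).2
    unfold nn at e1
    linarith
  obtain ⟨s2, hs2, e2, g2⟩ := last_cross hs1.1 cX.continuousOn (c := 0) X0 X1
  have hs2' : s2 ∈ Icc (0:ℝ) 1 := ⟨hs2.1, hs2.2.trans hs1.2⟩
  refine ⟨fun s => γ (s2 + (s1 - s2) * s), by fun_prop, ?_, ?_, ?_, ?_⟩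
  · intro s hs
    have hm := re_mem (a := s2) (b := s1) hs
    have hm' := uIcc_subset_Icc hs2' hs1 hm
    rw [uIcc_of_le hs2.2] at hm
    rw [← nn_pp, ← nn_pp]
    beta_reduce
    generalize s2 + (s1 - s2) * s = r at hm hm' ⊢
    have hY := g1 r ⟨hs2.1.trans hm.1, hm.2⟩
    refine ⟨hG _ hm', g2 r hm, ?_, hY⟩
    by_contra hh
    push Not at hh
    have a1 := (hn r).2 hY hh.le
    have a2 := (hL r hm').1
    rw [pp_nn] at a2
    linarith
  · rw [← nn_pp]; simpa using e2
  · rw [← nn_pp]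
    have := hit_der hp (f.sol (γ s2)) (f.z0 _) epos (nn_mem hj pi_mem).2 e2
    simpa [nn] using this
  · rw [← nn_pp]; simpa using e1

theorem PA_all {p μ : ℝ} {k : ℕ} (hp : 1 < p) (d : Data p k) (hμ : d.μ0 ≤ μ) (f : Fam p μ k) (S : Set ℕ) :
    ∀ j, 2 * j ≤ k → PA d f S j := by
  intro j
  induction j with
  | zero => exact fun _ => PA_zero d f S
  | succ j ih => exact fun h => PB_PA hp d hμ f S (by omega) (PA_PB hp d f S (by omega) (ih (by omega)))

theorem ex_good {p μ : ℝ} {k : ℕ} (hp : 1 < p) (d : Data p k) (hμ : d.μ0 ≤ μ) (S : Set ℕ) :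
    ∃ u u1, Sol2 (k * Real.pi) (GF p μ) u u1 ∧ u 0 = 0 ∧ u (k * Real.pi) = 0 ∧
      Good d S ((k + 1) / 2) u u1 := by
  obtain ⟨f⟩ := fam_ex hp μ k
  have m0' : (0:ℝ) ∈ Icc (0:ℝ) 1 := ⟨le_rfl, zero_le_one⟩
  rcases Nat.even_or_odd' k with ⟨j, hj | hj⟩
  · obtain ⟨γ, -, hG, h0, -⟩ := PA_all hp d hμ f S j (by omega)
    refine ⟨_, _, f.sol (γ 0), f.z0 _, ?_, ?_⟩
    · have e : (k : ℝ) * Real.pi = 0 + 2 * Real.pi * j := by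
        have : (k : ℝ) = 2 * j := by exact_mod_cast hj
        rw [this]; ring
      rw [e]; exact h0
    · rw [show (k + 1) / 2 = j by omega]; exact (hG 0 m0').1
  · obtain ⟨γ, -, hG, h0, -⟩ := PA_PB hp d f S (by omega) (PA_all hp d hμ f S j (by omega))
    refine ⟨_, _, f.sol (γ 0), f.z0 _, ?_, ?_⟩
    · exact (end_pp _ hj).symm.trans h0
    · rw [show (k + 1) / 2 = j + 1 by omega]; exact (hG 0 m0')

theorem ex_ps {p μ : ℝ} {k : ℕ} (hp : 1 < p) (hk : 1 ≤ k) (d : Data p k) (hμ : d.μ0 ≤ μ) (S : Set ℕ) :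
    ∃ u u1, PS p μ k u u1 ∧ ∀ j, 2 * j + 1 ≤ k → (d.A / 2 ≤ pp u1 j 0 ↔ j ∈ S) := by
  obtain ⟨u, u1, hu, h0, hk0, hG⟩ := ex_good hp d hμ S
  have hη := d.ηA
  have hA := d.A0
  have hμ0 : 0 < μ := d.μp.trans_le hμ
  have hP : ∀ j, 2 * j + 1 ≤ k → ∀ t ∈ Icc 0 Real.pi, pp u j t ≤ m0 p := by
    intro j hj t ht
    have g := hG j (by omega)
    exact (pos_L1 hp (glob_pp hj hu) g.1 g.2.2.2.1 (g.2.1.trans d.ε1) g.2.2.1 t ht).1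
  refine ⟨u, u1, ⟨hu, h0, hk0, nn_before hp hu h0 le_rfl hk0.ge, ?_⟩, ?_⟩
  · intro t ht
    obtain ⟨j, ⟨hj, s, hs, rfl⟩ | ⟨hj, s, hs, rfl⟩⟩ := cover ht hk
    · exact hP j hj s hs
    · refine conv_max (glob_nn hj hu) ?_ ?_ ?_ s hs
      · intro t ht
        unfold Fn
        have := sin_nn ht
        have := ff_nonneg p (nn u j t)
        positivity
      · rw [← pp_nn]; exact hP j (by omega) _ pi_mem
      · rcases Nat.lt_or_ge k (2 * j + 3) with hk | hk
        · rw [end_nn u (by omega : k = 2 * j + 2), hk0]; exact (m0_pos p).le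
        · rw [nn_pp]; exact hP (j + 1) (by omega) _ zero_mem
  · intro j hj
    have g := (hG j (by omega)).2.2.2.2
    constructor
    · intro h
      by_contra hS
      linarith [g.2 hS]
    · intro h
      linarith [g.1 h]

theorem ps_pos {p μ : ℝ} {k : ℕ} {u u1 : ℝ → ℝ} (hp : 1 < p) (h : PS p μ k u u1) {j : ℕ}
    (hj : 2 * j + 1 ≤ k) (hne : pp u1 j 0 ≠ 0) : ∀ t ∈ Ioo 0 (k * Real.pi), 0 < u t := by
  intro t ht
  by_contra hh
  push Not at hh
  have hu0 : u t = 0 := le_antisymm hh (h.nng t ⟨ht.1.le, ht.2.le⟩)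
  have hd : HasDerivAt u (u1 t) t := (h.sol t ⟨ht.1.le, ht.2.le⟩).1
  have hd0 : u1 t = 0 := by
    refine IsLocalMin.hasDerivAt_eq_zero ?_ hd
    filter_upwards [Ioo_mem_nhds ht.1 ht.2] with s hs
    rw [hu0]; exact h.nng s ⟨hs.1.le, hs.2.le⟩
  have hfor := lin_after hp h.sol ⟨ht.1.le, ht.2.le⟩ hu0.le hd0.le
  have hz : ∀ s, GF p μ s 0 = 0 := by
    intro s; unfold GF; rw [ff_zero hp le_rfl]; simp
  have hback := sol_unique (T := t) (F := fun s x => GF p μ (t - s) x) (w := fun s => u (t - s))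
    (w1 := fun s => -u1 (t - s)) (z := fun _ => 0) (z1 := fun _ => 0)
    (GC_one hp μ) (fun s _ => GF_lip hp μ (t - s)) (by
      intro s hs
      have := h.sol (t - s) ⟨by linarith [hs.2], by linarith [hs.1, ht.2]⟩
      refine ⟨refl_deriv this.1, ?_⟩
      have := (refl_deriv this.2).neg
      rw [neg_neg] at this
      exact this) (by
      intro s hs
      simp only [hz]
      exact ⟨hasDerivAt_const _ _, hasDerivAt_const _ _⟩) (by simp [hu0]) (by simp [hd0])
  apply hne
  unfold pp
  have hm := pp_mem hj zero_mem
  generalize (0:ℝ) + 2 * Real.pi * j = c at hm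
  rcases le_total t c with hc | hc
  · rw [(hfor c ⟨hc, hm.2⟩).2, hd0]
  · have := (hback (t - c) ⟨by linarith, by linarith [hm.1]⟩).2
    simpa using this


theorem untr {p μ : ℝ} {k : ℕ} {u u1 u2 : ℝ → ℝ} (hp : 1 < p) (hk : 1 ≤ k) (hμ : 0 < μ)
    (hd : ∀ t ∈ Icc 0 (k * Real.pi), HasDerivAt u (u1 t) t ∧ HasDerivAt u1 (u2 t) t)
    (he : ∀ t ∈ Icc 0 (k * Real.pi), u2 t = -(om μ t * u t ^ p))
    (h0 : u 0 = 0) (hk0 : u (k * Real.pi) = 0) (hn : ∀ t ∈ Icc 0 (k * Real.pi), 0 ≤ u t) :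
    PS p μ k u u1 := by
  have hP : ∀ j, 2 * j + 1 ≤ k → ∀ t ∈ Icc 0 Real.pi, pp u j t ≤ m0 p := by
    intro j hj t ht
    refine (L1 hp (u := pp u j) (u1 := pp u1 j) (u2 := pp u2 j) ?_ ?_
      (fun t ht => hn _ (pp_mem hj ht)) t ht).1
    · intro t ht
      have := hd _ (pp_mem hj ht)
      exact ⟨this.1.comp_add_const t _, this.2.comp_add_const t _⟩
    · intro t ht
      have := he _ (pp_mem hj ht)
      rw [om_pp j ht] at this
      exact this
  have hle : ∀ t ∈ Icc 0 (k * Real.pi), u t ≤ m0 p := by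
    intro t ht
    obtain ⟨j, ⟨hj, s, hs, rfl⟩ | ⟨hj, s, hs, rfl⟩⟩ := cover ht hk
    · exact hP j hj s hs
    · refine conv_max (u := nn u j) (u1 := nn u1 j) (u2 := nn u2 j) ?_ ?_ ?_ ?_ s hs
      · intro t ht
        have := hd _ (nn_mem hj ht)
        exact ⟨this.1.comp_add_const t _, this.2.comp_add_const t _⟩
      · intro t ht
        have := he _ (nn_mem hj ht)
        rw [om_nn j ht] at this
        have a1 := sin_nn ht
        have a2 := Real.rpow_nonneg (hn _ (nn_mem hj ht)) p
        have e : nn u2 j t = u2 (t + (2 * Real.pi * j + Real.pi)) := rfl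
        rw [e, this]
        have := mul_nonneg (mul_nonneg hμ.le a1) a2
        linarith
      · rw [← pp_nn]; exact hP j (by omega) _ pi_mem
      · rcases Nat.lt_or_ge k (2 * j + 3) with hk | hk
        · rw [end_nn u (by omega : k = 2 * j + 2), hk0]; exact (m0_pos p).le
        · rw [nn_pp]; exact hP (j + 1) (by omega) _ zero_mem
  refine ⟨fun t ht => ⟨(hd t ht).1, (hd t ht).2.congr_deriv ?_⟩, h0, hk0, hn, hle⟩
  rw [he t ht]
  unfold GF
  rw [ff_eq (hn t ht) ((hle t ht).trans ((m0_lt_kk p).trans (kk_lt_mm p)).le)]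

theorem om_sinW {a b : ℝ} {k : ℕ} (_hab : a < b) (μ t : ℝ) :
    sinWμ a b k μ t = om μ (k * Real.pi / (b - a) * (t - a)) := by
  have e : (k : ℝ) * Real.pi * (t - a) / (b - a) = k * Real.pi / (b - a) * (t - a) := by ring
  unfold sinWμ posW negW sinW om
  simp only [e]

theorem c_ex {p l : ℝ} (hp : 1 < p) (hl : 0 < l) : ∃ c > 0, c ^ (p - 1) * l ^ 2 = 1 := by
  refine ⟨l ^ (-2 / (p - 1)), Real.rpow_pos_of_pos hl _, ?_⟩
  rw [← Real.rpow_mul hl.le, div_mul_cancel₀ _ (by linarith : p - 1 ≠ 0), Real.rpow_neg hl.le]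
  have : l ^ (2:ℝ) = l ^ 2 := by exact_mod_cast Real.rpow_natCast l 2
  rw [this]
  field_simp

theorem pow_split {p x : ℝ} (hp : 1 < p) (hx : 0 ≤ x) : x ^ p = x ^ (p - 1) * x := by
  rw [← Real.rpow_add_one' hx (by linarith)]; ring_nf

theorem to_map {a b l t K : ℝ} (hl : 0 < l) (hK : l * (b - a) = K) (ht : t ∈ Icc a b) :
    l * (t - a) ∈ Icc 0 K := by
  refine ⟨mul_nonneg hl.le (by linarith [ht.1]), ?_⟩
  rw [← hK]; exact mul_le_mul_of_nonneg_left (by linarith [ht.2]) hl.le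

theorem to_map' {a b l t K : ℝ} (hl : 0 < l) (hK : l * (b - a) = K) (ht : t ∈ Ioo a b) :
    l * (t - a) ∈ Ioo 0 K := by
  refine ⟨mul_pos hl (by linarith [ht.1]), ?_⟩
  rw [← hK]; exact mul_lt_mul_of_pos_left (by linarith [ht.2]) hl

theorem inv_map {a b l s K : ℝ} (hl : 0 < l) (hK : l * (b - a) = K) (hs : s ∈ Icc 0 K) :
    a + s / l ∈ Icc a b := by
  have h1 : 0 ≤ s / l := div_nonneg hs.1 hl.le
  have h2 : s / l ≤ b - a := by rw [div_le_iff₀ hl]; linarith [hs.2]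
  constructor <;> linarith

theorem der_to {f : ℝ → ℝ} {d l a t : ℝ} (h : HasDerivAt f d (l * (t - a))) :
    HasDerivAt (fun t => f (l * (t - a))) (l * d) t := by
  have h1 : HasDerivAt (fun t => l * (t - a)) l t := by
    simpa using ((hasDerivAt_id t).sub_const a).const_mul l
  have := h.comp t h1
  rw [mul_comm] at this
  exact this

theorem der_inv {f : ℝ → ℝ} {d l a s : ℝ} (h : HasDerivAt f d (a + s / l)) :
    HasDerivAt (fun s => f (a + s / l)) (d / l) s := by
  have h1 : HasDerivAt (fun s => a + s / l) (1 / l) s :=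
    ((hasDerivAt_id s).div_const l).const_add a
  have := h.comp s h1
  rw [mul_one_div] at this
  exact this

section
variable {a b p μ l c : ℝ} {k : ℕ}

theorem fwd (hp : 1 < p) (hab : a < b) (hlk : l = k * Real.pi / (b - a)) (hl : 0 < l)
    (hK : l * (b - a) = k * Real.pi) (hc : 0 < c) (hcl : c ^ (p - 1) * l ^ 2 = 1)
    {U U1 : ℝ → ℝ} (h : PS p μ k U U1) :
    IsC2Sol a b (sinWμ a b k μ) (fun x => |x| ^ (p - 1) * x) (fun t => c⁻¹ * U (l * (t - a)))
      (fun t => c⁻¹ * (l * U1 (l * (t - a))))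
      (fun t => c⁻¹ * (l * (l * GF p μ (l * (t - a)) (U (l * (t - a)))))) := by
  refine ⟨fun t ht => ?_, fun t ht => ?_, fun t ht => ?_⟩
  · exact (der_to (h.sol _ (to_map hl hK ht)).1).const_mul _
  · exact ((der_to (h.sol _ (to_map hl hK ht)).2).const_mul _).const_mul _
  · have hm := to_map hl hK ht
    rw [om_sinW hab, ← hlk]
    have hn := h.nng _ hm
    have hle := h.lm _ hm
    beta_reduce
    generalize l * (t - a) = s at hm hn hle ⊢
    unfold GF
    have hcn : 0 ≤ c⁻¹ * U s := by positivity
    rw [ff_eq hn hle, pow_split hp hn]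
    rw [abs_of_nonneg hcn, Real.mul_rpow (by positivity) hn, Real.inv_rpow hc.le]
    have hcp : 0 < c ^ (p - 1) := Real.rpow_pos_of_pos hc _
    have e : (c ^ (p - 1))⁻¹ = l ^ 2 := by
      field_simp; linarith
    rw [e]; ring

theorem bwd (hp : 1 < p) (hab : a < b) (hk : 1 ≤ k) (hμ : 0 < μ) (hlk : l = k * Real.pi / (b - a))
    (hl : 0 < l)
    (hK : l * (b - a) = k * Real.pi) (hc : 0 < c) (hcl : c ^ (p - 1) * l ^ 2 = 1)
    {u u1 u2 : ℝ → ℝ} (h : IsC2Sol a b (sinWμ a b k μ) (fun x => |x| ^ (p - 1) * x) u u1 u2)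
    (h0 : u a = 0) (h1 : u b = 0) (hpos : ∀ t ∈ Icc a b, 0 ≤ u t) :
    PS p μ k (fun s => c * u (a + s / l)) (fun s => c * (u1 (a + s / l) / l)) := by
  refine untr (u2 := fun s => c * (u2 (a + s / l) / l / l)) hp hk hμ ?_ ?_ ?_ ?_ ?_
  · intro s hs
    have hm := inv_map hl hK hs
    exact ⟨(der_inv (h.1 _ hm)).const_mul c, ((der_inv (h.2.1 _ hm)).div_const l).const_mul c⟩
  · intro s hs
    have hm := inv_map hl hK hs
    have he := h.2.2 _ hm
    have hn := hpos _ hm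
    rw [om_sinW hab, ← hlk] at he
    have e : l * (a + s / l - a) = s := by field_simp; ring
    rw [e] at he
    simp only at he ⊢
    rw [abs_of_nonneg hn] at he
    have hu2 : u2 (a + s / l) = -(om μ s * (u (a + s / l) ^ (p - 1) * u (a + s / l))) := by linarith
    rw [hu2, pow_split hp (by positivity), Real.mul_rpow hc.le hn]
    have e2 : c ^ (p - 1) = 1 / l ^ 2 := by field_simp; linarith
    rw [e2]
    field_simp
  · simp [h0]
  · have : a + k * Real.pi / l = b := by rw [← hK]; field_simp; ring
    simp only [this, h1, mul_zero]
  · intro s hs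
    exact mul_nonneg hc.le (hpos _ (inv_map hl hK hs))

theorem ndg (hp : 1 < p) (hab : a < b) (hk : 1 ≤ k) (d : Data p k) (hμ : d.μ0 ≤ μ)
    (hlk : l = k * Real.pi / (b - a)) (hl : 0 < l)
    (hK : l * (b - a) = k * Real.pi) (hc : 0 < c) (hcl : c ^ (p - 1) * l ^ 2 = 1)
    {U U1 : ℝ → ℝ} (h : PS p μ k U U1) {w w1 w2 : ℝ → ℝ}
    (hw : IsC2LinSol a b (fun t => sinWμ a b k μ t * (p * |c⁻¹ * U (l * (t - a))| ^ (p - 1))) w w1 w2)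
    (h0 : w a = 0) (h1 : w b = 0) : ∀ t ∈ Icc a b, w t = 0 := by
  have key := nondeg_ps (w := fun s => w (a + s / l)) (w1 := fun s => w1 (a + s / l) / l) hp hk d hμ h
    ?_ (by simp [h0]) ?_
  · intro t ht
    have := key _ (to_map hl hK ht)
    have e : a + l * (t - a) / l = t := by field_simp; ring
    simpa only [e] using this
  · intro s hs
    have hm := inv_map hl hK hs
    refine ⟨der_inv (hw.1 _ hm), ((der_inv (hw.2.1 _ hm)).div_const l).congr_deriv ?_⟩
    have he := hw.2.2 _ hm
    have hn := h.nng _ hs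
    simp only at he
    rw [om_sinW hab, ← hlk] at he
    have e : l * (a + s / l - a) = s := by field_simp; ring
    rw [e] at he
    have hcn : 0 ≤ c⁻¹ * U s := by positivity
    rw [abs_of_nonneg hcn, Real.mul_rpow (by positivity) hn, Real.inv_rpow hc.le] at he
    have hcp : 0 < c ^ (p - 1) := Real.rpow_pos_of_pos hc _
    have e : (c ^ (p - 1))⁻¹ = l ^ 2 := by
      field_simp; linarith
    rw [e] at he
    have hw2 : w2 (a + s / l) = -(om μ s * (p * (l ^ 2 * U s ^ (p - 1))) * w (a + s / l)) := by linarith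
    rw [hw2]
    unfold fd
    beta_reduce
    rw [max_eq_right hn]
    field_simp
  · have : a + k * Real.pi / l = b := by rw [← hK]; field_simp; ring
    simp only [this, h1]
end

theorem exact_multiplicity_sinusoidal
    (a b : ℝ) (hab : a < b)
    (k : ℕ) (hk : 2 ≤ k)
    (p : ℝ) (hp : 1 < p) :
    ∃ μss > (0 : ℝ), ∀ μ > μss,
      ∃ v v' v'' : Fin (2 ^ ((k + 1) / 2) - 1) → ℝ → ℝ,
        -- each `v i` is a positive, non-degenerate solution:
        (∀ i,
          IsC2Sol a b (sinWμ a b k μ) (fun x => |x| ^ (p - 1) * x)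
            (v i) (v' i) (v'' i) ∧
          v i a = 0 ∧ v i b = 0 ∧ (∀ t ∈ Set.Ioo a b, 0 < v i t) ∧
          (∀ w w₁ w₂ : ℝ → ℝ,
            IsC2LinSol a b (fun t => sinWμ a b k μ t * (p * |v i t| ^ (p - 1)))
              w w₁ w₂ →
            w a = 0 → w b = 0 → ∀ t ∈ Set.Icc a b, w t = 0)) ∧
        -- the solutions are pairwise distinct:
        (∀ i j, i ≠ j → ∃ t ∈ Set.Icc a b, v i t ≠ v j t) ∧
        -- and there are no other positive solutions:
        (∀ u u₁ u₂ : ℝ → ℝ,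
          IsC2Sol a b (sinWμ a b k μ) (fun x => |x| ^ (p - 1) * x) u u₁ u₂ →
          u a = 0 → u b = 0 → (∀ t ∈ Set.Ioo a b, 0 < u t) →
          ∃ i, Set.EqOn u (v i) (Set.Icc a b)) := by
  classical
  obtain ⟨d⟩ := data_exists hp k
  refine ⟨d.μ0, d.μp, fun μ hμ => ?_⟩
  have hμ : d.μ0 ≤ μ := le_of_lt hμ
  have hμ0 : 0 < μ := d.μp.trans_le hμ
  have hk1 : 1 ≤ k := by omega
  have hpi := Real.pi_pos
  have hba : 0 < b - a := by linarith
  have hA := d.A0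
  obtain ⟨l, hlk⟩ : ∃ l : ℝ, l = k * Real.pi / (b - a) := ⟨_, rfl⟩
  have hkr : (0:ℝ) < k := by exact_mod_cast hk1
  have hl : 0 < l := by rw [hlk]; positivity
  have hK : l * (b - a) = k * Real.pi := by rw [hlk]; field_simp
  obtain ⟨c, hc, hcl⟩ := c_ex hp hl
  choose U U1 hPS hcode using fun S : Set ℕ => ex_ps hp hk1 d hμ S
  obtain ⟨m, hm⟩ : ∃ m, m = (k + 1) / 2 := ⟨_, rfl⟩
  rw [← hm]
  have hcard : ((Finset.range m).powerset.erase ∅).card = 2 ^ m - 1 := by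
    rw [Finset.card_erase_of_mem (by simp), Finset.card_powerset, Finset.card_range]
  let e := Finset.equivFinOfCardEq hcard
  let T : Fin (2 ^ m - 1) → Finset ℕ := fun i => (e.symm i).1
  have hTne : ∀ i, (T i).Nonempty := fun i =>
    Finset.nonempty_iff_ne_empty.2 (Finset.mem_erase.1 (e.symm i).2).1
  have hTsub : ∀ i, ∀ j ∈ T i, j < m := fun i j hj =>
    Finset.mem_range.1 (Finset.mem_powerset.1 (Finset.mem_erase.1 (e.symm i).2).2 hj)
  have hTinj : ∀ i j, T i = T j → i = j := fun i j h => e.symm.injective (Subtype.ext h)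
  have hTsurj : ∀ Z : Finset ℕ, Z.Nonempty → Z ⊆ Finset.range m → ∃ i, T i = Z := by
    intro Z h1 h2
    have hZ : Z ∈ (Finset.range m).powerset.erase ∅ :=
      Finset.mem_erase.2 ⟨h1.ne_empty, Finset.mem_powerset.2 h2⟩
    exact ⟨e ⟨Z, hZ⟩, by simp [T]⟩
  refine ⟨fun i t => c⁻¹ * U (T i) (l * (t - a)), fun i t => c⁻¹ * (l * U1 (T i) (l * (t - a))),
    fun i t => c⁻¹ * (l * (l * GF p μ (l * (t - a)) (U (T i) (l * (t - a))))), ?_, ?_, ?_⟩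
  · intro i
    have h := hPS (T i)
    refine ⟨fwd hp hab hlk hl hK hc hcl h, ?_, ?_, ?_, ?_⟩
    · simp [h.z0]
    · simp [hK, h.zk]
    · intro t ht
      obtain ⟨j, hj⟩ := hTne i
      have hj' : 2 * j + 1 ≤ k := by have := hTsub i j hj; omega
      have := (hcode (T i) j hj').2 (by exact_mod_cast hj)
      have := ps_pos hp h hj' (by linarith) _ (to_map' hl hK ht)
      positivity
    · intro w w1 w2 hw h0 h1
      exact ndg hp hab hk1 d hμ hlk hl hK hc hcl h hw h0 h1
  · intro i j hij
    by_contra hh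
    push Not at hh
    apply hij
    apply hTinj
    have hEq : ∀ s ∈ Icc 0 (k * Real.pi), U (T i) s = U (T j) s := by
      intro s hs
      have := hh _ (inv_map hl hK hs)
      have e : l * (a + s / l - a) = s := by field_simp; ring
      rw [e] at this
      exact mul_left_cancel₀ (inv_ne_zero hc.ne') this
    have hEq1 : ∀ s ∈ Ico 0 (k * Real.pi), U1 (T i) s = U1 (T j) s := by
      intro s hs
      have h1 := ((hPS (T i)).sol s ⟨hs.1, hs.2.le⟩).1.hasDerivWithinAt (s := Icc s (k * Real.pi))
      have h2 := ((hPS (T j)).sol s ⟨hs.1, hs.2.le⟩).1.hasDerivWithinAt (s := Icc s (k * Real.pi))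
      have h3 := h1.congr (f₁ := U (T j)) (fun x hx => (hEq x ⟨hs.1.trans hx.1, hx.2⟩).symm)
        (hEq s ⟨hs.1, hs.2.le⟩).symm
      exact (uniqueDiffOn_Icc hs.2 s ⟨le_rfl, hs.2.le⟩).eq_deriv _ h3 h2
    ext n
    by_cases hn : n < m
    · have hn' : 2 * n + 1 ≤ k := by omega
      have a1 := hcode (T i) n hn'
      have a2 := hcode (T j) n hn'
      have : pp (U1 (T i)) n 0 = pp (U1 (T j)) n 0 := by
        apply hEq1
        have := pp_mem hn' zero_mem
        refine ⟨this.1, ?_⟩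
        have := (pp_mem hn' pi_mem).2
        linarith
      rw [this] at a1
      simpa using a1.symm.trans a2
    · exact ⟨fun h => absurd (hTsub i n h) hn, fun h => absurd (hTsub j n h) hn⟩
  · intro u u1 u2 hu h0 h1 hpos
    have hnn : ∀ t ∈ Icc a b, 0 ≤ u t := by
      intro t ht
      rcases eq_or_lt_of_le ht.1 with h | h
      · rw [← h, h0]
      rcases eq_or_lt_of_le ht.2 with h' | h'
      · rw [h', h1]
      exact (hpos t ⟨h, h'⟩).le
    have hB := bwd hp hab hk1 hμ0 hlk hl hK hc hcl hu h0 h1 hnn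
    obtain ⟨W, hW⟩ : ∃ W, W = fun s => c * (u1 (a + s / l) / l) := ⟨_, rfl⟩
    rw [← hW] at hB
    obtain ⟨i, hi⟩ := hTsurj ((Finset.range m).filter (fun j => d.A / 2 ≤ pp W j 0)) (by
      by_contra hne
      rw [Finset.not_nonempty_iff_eq_empty, Finset.filter_eq_empty_iff] at hne
      have := uniq_ps hp hk1 d hμ hB (ps_zero hp μ k) (fun j hj => by
        have h1 := hne (x := j) (Finset.mem_range.2 (by omega))
        have h2 : ¬ d.A / 2 ≤ pp (fun _ => (0:ℝ)) j 0 := by simp only [pp]; linarith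
        exact iff_of_false h1 h2)
      have hmid : (a + b) / 2 ∈ Ioo a b := ⟨by linarith, by linarith⟩
      have := (this _ (to_map hl hK ⟨hmid.1.le, hmid.2.le⟩)).1
      have e : a + l * ((a + b) / 2 - a) / l = (a + b) / 2 := by field_simp; ring
      simp only [e] at this
      have := hpos _ hmid
      nlinarith) (Finset.filter_subset _ _)
    refine ⟨i, fun t ht => ?_⟩
    have := (uniq_ps hp hk1 d hμ hB (hPS (T i)) (fun j hj => by
      rw [hcode (T i) j hj, hi]
      simp only [Finset.coe_filter, Finset.mem_range, mem_ofPred_eq]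
      exact ⟨fun h => ⟨by omega, h⟩, fun h => h.2⟩) _ (to_map hl hK ht)).1
    have e : a + l * (t - a) / l = t := by field_simp; ring
    simp only [e] at this
    simp only [← this]
    field_simp
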